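/- arXiv:1512.01160 — 3 statements merged into one kernel-verified Lean document; each statement's English description precedes it below -/
import Mathlib

section
/- Let 0 < α ≤ 1 and consider the torus T²_α = (0, 2π/α) × (0, 2π). Let V : ℝ² → ℝ be continuous, nonnegative, periodic with period 2π/α in x_1 and period 2π in x_2. Suppose φ_1, …, φ_N : ℝ² → ℝ are smooth, periodic with the same periods, orthonormal in L²(T²_α), and for each n there is λ_n > 0 such that −Δφ_n − P(V · (Pφ_n)) = −λ_n φ_n on ℝ². Then ∑_{n=1}^N λ_n ≤ (π/24) ∫_{T²_α} V(x)² dx. -/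
open Real MeasureTheory

/-- Second partial derivative with respect to the first variable. -/
noncomputable def pd11 (f : ℝ × ℝ → ℝ) (x : ℝ × ℝ) : ℝ :=
  deriv (fun s => deriv (fun t => f (t, x.2)) s) x.1

/-- Second partial derivative with respect to the second variable. -/
noncomputable def pd22 (f : ℝ × ℝ → ℝ) (x : ℝ × ℝ) : ℝ :=
  deriv (fun s => deriv (fun t => f (x.1, t)) s) x.2

/-- The projection removing the average with respect to the second (shortest) coordinate:
`(Pψ)(x₁, x₂) = ψ(x₁, x₂) − (1/(2π)) ∫_0^{2π} ψ(x₁, t) dt`. -/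
noncomputable def projP (ψ : ℝ × ℝ → ℝ) (x : ℝ × ℝ) : ℝ :=
  ψ x - (1 / (2 * π)) * ∫ t in (0:ℝ)..(2 * π), ψ (x.1, t)



lemma sqrt_tangent (y t : ℝ) (ht : 0 < t) (hy : 0 ≤ y) : √y ≤ y / (2 * t) + t / 2 := by
  have h := Real.sq_sqrt hy
  rw [div_add_div _ _ (by positivity) (by norm_num), le_div_iff₀ (by positivity)]
  nlinarith [sq_nonneg (√y - t)]

lemma pi_cub_small : (3.444 : ℝ) ≤ π ^ 3 / 9 := by
  have h : (3.1415 : ℝ) ^ 3 ≤ π ^ 3 := by gcongr; exact pi_gt_d4.le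
  norm_num at h ⊢
  linarith

lemma pi_cub_big : π + 2 / 7 ≤ π ^ 3 / 9 := by
  have h := pi_gt_d4
  have h2 : (3.1415:ℝ)^2 ≤ π ^ 2 := by gcongr
  nlinarith

lemma int_sqrt_circle (R : ℝ) (hR : 0 < R) : ∫ x in (0:ℝ)..R, √(R ^ 2 - x ^ 2) = π * R ^ 2 / 4 := by
  have h1 : ∫ x in (0:ℝ)..1, √(1 - x ^ 2) = π / 4 := by
    have h := integral_sqrt_one_sub_sq
    have hc : Continuous fun x : ℝ => √(1 - x ^ 2) := by fun_prop
    rw [← intervalIntegral.integral_add_adjacent_intervals (b := 0)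
      (hc.intervalIntegrable _ _) (hc.intervalIntegrable _ _)] at h
    have h2 := intervalIntegral.integral_comp_neg (a := 0) (b := 1) (fun x : ℝ => √(1 - x ^ 2))
    simp only [neg_zero, even_two, Even.neg_pow] at h2
    linarith
  have h3 := intervalIntegral.integral_comp_mul_right (a := 0) (b := 1)
    (fun x : ℝ => √(R ^ 2 - x ^ 2)) hR.ne'
  have h4 : ∀ x : ℝ, √(R ^ 2 - (x * R) ^ 2) = R * √(1 - x ^ 2) := by
    intro x
    rw [show R ^ 2 - (x * R) ^ 2 = R ^ 2 * (1 - x ^ 2) by ring, Real.sqrt_mul (by positivity),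
      Real.sqrt_sq hR.le]
  simp only [h4, intervalIntegral.integral_const_mul, h1, zero_mul, one_mul, smul_eq_mul] at h3
  field_simp at h3
  linarith

lemma sum_sqrt_big (R : ℝ) (hR : 0 < R) (m : ℕ) (hm : (m : ℝ) ≤ R) :
    ∑ k ∈ Finset.range m, √(R ^ 2 - ((k + 1 : ℕ) : ℝ) ^ 2) ≤ π * R ^ 2 / 4 := by
  have hanti : AntitoneOn (fun x : ℝ => √(R ^ 2 - x ^ 2)) (Set.Icc 0 (0 + (m : ℝ))) := by
    intro x hx y hy hxy
    have := hx.1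
    apply Real.sqrt_le_sqrt
    gcongr
  have h := hanti.sum_le_integral
  simp only [zero_add] at h
  refine h.trans ?_
  rw [← int_sqrt_circle R hR]
  have hc : Continuous fun x : ℝ => √(R ^ 2 - x ^ 2) := by fun_prop
  apply intervalIntegral.integral_mono_interval le_rfl (by positivity) hm
  · exact Filter.Eventually.of_forall fun x => Real.sqrt_nonneg _
  · exact hc.intervalIntegrable _ _

lemma count_real (R : ℝ) (hR : 0 < R) :
    ∑ k ∈ Finset.range ⌊R⌋₊, (4 * √(R ^ 2 - ((k + 1 : ℕ) : ℝ) ^ 2) + 2) ≤ π ^ 3 / 9 * R ^ 2 := by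
  have hm : (⌊R⌋₊ : ℝ) ≤ R := Nat.floor_le hR.le
  generalize ⌊R⌋₊ = m at hm
  have hR2 : (m:ℝ) ^ 2 ≤ R ^ 2 := by gcongr
  rcases Nat.lt_or_ge m 7 with h7 | h7
  · refine le_trans ?_ (mul_le_mul_of_nonneg_right pi_cub_small (sq_nonneg R))
    generalize R ^ 2 = E at hR2
    have key : ∀ (k : ℕ) (t : ℝ), k ≤ m → 0 < t → √(E - (k:ℝ) ^ 2) ≤ (E - (k:ℝ) ^ 2) / (2 * t) + t / 2 := by
      intro k t hk ht
      apply sqrt_tangent _ _ ht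
      have : (k:ℝ) ^ 2 ≤ (m:ℝ) ^ 2 := by gcongr
      linarith
    interval_cases m
    · norm_num at hR2 ⊢; positivity
    · have h1 := key 1 (3/5) (by norm_num) (by norm_num)
      norm_num [Finset.sum_range_succ] at *
      linarith
    · have h1 := key 1 (19/10) (by norm_num) (by norm_num)
      have h2 := key 2 (17/20) (by norm_num) (by norm_num)
      norm_num [Finset.sum_range_succ] at *
      linarith
    · have h1 := key 1 (3) (by norm_num) (by norm_num)
      have h2 := key 2 (123/50) (by norm_num) (by norm_num)
      have h3 := key 3 (51/50) (by norm_num) (by norm_num)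
      norm_num [Finset.sum_range_succ] at *
      linarith
    · have h1 := key 1 (4) (by norm_num) (by norm_num)
      have h2 := key 2 (37/10) (by norm_num) (by norm_num)
      have h3 := key 3 (29/10) (by norm_num) (by norm_num)
      have h4 := key 4 (6/5) (by norm_num) (by norm_num)
      norm_num [Finset.sum_range_succ] at *
      linarith
    · have h1 := key 1 (51/10) (by norm_num) (by norm_num)
      have h2 := key 2 (24/5) (by norm_num) (by norm_num)
      have h3 := key 3 (21/5) (by norm_num) (by norm_num)
      have h4 := key 4 (33/10) (by norm_num) (by norm_num)
      have h5 := key 5 (13/10) (by norm_num) (by norm_num)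
      norm_num [Finset.sum_range_succ] at *
      linarith
    · have h1 := key 1 (61/10) (by norm_num) (by norm_num)
      have h2 := key 2 (29/5) (by norm_num) (by norm_num)
      have h3 := key 3 (27/5) (by norm_num) (by norm_num)
      have h4 := key 4 (47/10) (by norm_num) (by norm_num)
      have h5 := key 5 (18/5) (by norm_num) (by norm_num)
      have h6 := key 6 (3/2) (by norm_num) (by norm_num)
      norm_num [Finset.sum_range_succ] at *
      linarith
  · have h := sum_sqrt_big R hR m hm
    rw [Finset.sum_add_distrib, ← Finset.mul_sum]
    simp only [Finset.sum_const, Finset.card_range, nsmul_eq_mul]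
    have h7' : (7:ℝ) ≤ m := by exact_mod_cast h7
    have := mul_le_mul_of_nonneg_right pi_cub_big (sq_nonneg R)
    nlinarith

/-- The set of low frequencies. -/
noncomputable def lowSet (α R : ℝ) : Finset (ℤ × ℤ) :=
  (Finset.range ⌊R⌋₊).biUnion fun k =>
    (Finset.Icc (-⌊√(R ^ 2 - ((k + 1 : ℕ) : ℝ) ^ 2) / α⌋) ⌊√(R ^ 2 - ((k + 1 : ℕ) : ℝ) ^ 2) / α⌋) ×ˢ
      ({((k + 1 : ℕ) : ℤ), -((k + 1 : ℕ) : ℤ)} : Finset ℤ)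

lemma mem_lowSet (α R : ℝ) (hα : 0 < α) (hR : 0 < R) (p : ℤ × ℤ) (hp : p.2 ≠ 0)
    (h : (α * p.1) ^ 2 + (p.2 : ℝ) ^ 2 ≤ R ^ 2) : p ∈ lowSet α R := by
  have hq : ((p.2.natAbs - 1 + 1 : ℕ) : ℝ) ^ 2 = (p.2:ℝ) ^ 2 := by
    rw [Nat.sub_add_cancel (Int.natAbs_pos.mpr hp)]
    rw [Nat.cast_natAbs]
    push_cast
    exact sq_abs _
  have hab : |(α * p.1)| ≤ √(R ^ 2 - (p.2:ℝ) ^ 2) := by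
    apply Real.abs_le_sqrt; linarith
  rw [abs_mul, abs_of_pos hα] at hab
  have hab2 : |(p.1 : ℝ)| ≤ √(R ^ 2 - (p.2:ℝ) ^ 2) / α := by
    rw [le_div_iff₀ hα]; linarith
  rw [abs_le] at hab2
  simp only [lowSet, Finset.mem_biUnion, Finset.mem_product, Finset.mem_range]
  refine ⟨p.2.natAbs - 1, ?_, ?_, ?_⟩
  · have h1 : ((p.2.natAbs : ℕ) : ℝ) ≤ R := by
      rw [Nat.cast_natAbs]
      push_cast
      refine abs_le_of_sq_le_sq ?_ hR.le
      nlinarith [sq_nonneg (α * p.1)]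
    have := Nat.le_floor h1
    have := Int.natAbs_pos.mpr hp
    omega
  · rw [hq, Finset.mem_Icc]
    constructor
    · have : (-p.1) ≤ ⌊√(R ^ 2 - (p.2:ℝ) ^ 2) / α⌋ := by
        rw [Int.le_floor]; push_cast; linarith
      linarith
    · rw [Int.le_floor]; linarith
  · simp only [Finset.mem_insert, Finset.mem_singleton]
    omega

lemma card_lowSet (α R : ℝ) (hα : 0 < α) (hα1 : α ≤ 1) (hR : 0 < R) :
    α * (lowSet α R).card ≤ π ^ 3 / 9 * R ^ 2 := by
  refine le_trans ?_ (count_real R hR)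
  have h1 : ((lowSet α R).card : ℝ) ≤ ∑ k ∈ Finset.range ⌊R⌋₊,
      (2 * (√(R ^ 2 - ((k + 1 : ℕ) : ℝ) ^ 2) / α) + 1) * 2 := by
    have := Finset.card_biUnion_le (s := Finset.range ⌊R⌋₊) (t := fun k =>
    (Finset.Icc (-⌊√(R ^ 2 - ((k + 1 : ℕ) : ℝ) ^ 2) / α⌋) ⌊√(R ^ 2 - ((k + 1 : ℕ) : ℝ) ^ 2) / α⌋) ×ˢ
      ({((k + 1 : ℕ) : ℤ), -((k + 1 : ℕ) : ℤ)} : Finset ℤ))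
    refine le_trans (Nat.cast_le.mpr this) ?_
    rw [Nat.cast_sum]
    apply Finset.sum_le_sum
    intro k _
    rw [Finset.card_product, Nat.cast_mul]
    have h2 : 0 ≤ √(R ^ 2 - ((k + 1 : ℕ) : ℝ) ^ 2) / α := by positivity
    gcongr
    · rw [Int.card_Icc]
      have h3 := Int.floor_le (√(R ^ 2 - ((k + 1 : ℕ) : ℝ) ^ 2) / α)
      have h4 := Int.floor_nonneg.mpr h2
      generalize ⌊√(R ^ 2 - ((k + 1 : ℕ) : ℝ) ^ 2) / α⌋ = z at *
      have h5 : (((z + 1 - -z).toNat : ℕ) : ℝ) = ((z + 1 - -z : ℤ) : ℝ) := by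
        rw [← Int.cast_natCast, Int.toNat_of_nonneg (by omega)]
      rw [h5]; push_cast at h3 ⊢; linarith
    · exact_mod_cast Finset.card_le_two
  calc α * (lowSet α R).card ≤ α * _ := mul_le_mul_of_nonneg_left h1 hα.le
    _ = ∑ k ∈ Finset.range ⌊R⌋₊, (4 * √(R ^ 2 - ((k + 1 : ℕ) : ℝ) ^ 2) + 2 * α) := by
      rw [Finset.mul_sum]
      apply Finset.sum_congr rfl
      intro k _
      field_simp
      ring
    _ ≤ _ := by
      apply Finset.sum_le_sum
      intro k _
      linarith
open scoped ComplexConjugate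

/-- The torus rectangle. -/
abbrev rectT (α : ℝ) : Set (ℝ × ℝ) := Set.Ioc (0:ℝ) (2 * π / α) ×ˢ Set.Ioc (0:ℝ) (2 * π)

/-- One dimensional exponential. -/
noncomputable def ex1 (β : ℝ) (k : ℤ) (x : ℝ) : ℂ := Complex.exp (Complex.I * β * k * x)

/-- Two dimensional exponential. -/
noncomputable def ex2 (α : ℝ) (p : ℤ × ℤ) (x : ℝ × ℝ) : ℂ := ex1 α p.1 x.1 * ex1 1 p.2 x.2

/-- Unnormalised Fourier coefficient. -/
noncomputable def coefT (α : ℝ) (f : ℝ × ℝ → ℂ) (p : ℤ × ℤ) : ℂ :=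
  ∫ x in rectT α, conj (ex2 α p x) * f x

@[fun_prop]
lemma ex1_cont (β : ℝ) (k : ℤ) : Continuous (ex1 β k) := by unfold ex1; fun_prop

@[fun_prop]
lemma ex2_cont (α : ℝ) (p : ℤ × ℤ) : Continuous (ex2 α p) := by unfold ex2; fun_prop

lemma ex1_norm (β : ℝ) (k : ℤ) (x : ℝ) : ‖ex1 β k x‖ = 1 := by
  have : Complex.I * β * k * x = ((β * k * x : ℝ) : ℂ) * Complex.I := by push_cast; ring
  rw [ex1, this, Complex.norm_exp_ofReal_mul_I]

lemma ex2_norm (α : ℝ) (p : ℤ × ℤ) (x : ℝ × ℝ) : ‖ex2 α p x‖ = 1 := by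
  rw [ex2, norm_mul, ex1_norm, ex1_norm, one_mul]

lemma ex1_conj (β : ℝ) (k : ℤ) (x : ℝ) : conj (ex1 β k x) = ex1 β (-k) x := by
  rw [ex1, ex1, ← Complex.exp_conj]
  congr 1
  simp

lemma ex2_conj (α : ℝ) (p : ℤ × ℤ) (x : ℝ × ℝ) : conj (ex2 α p x) = ex2 α (-p) x := by
  simp [ex2, ex1_conj]

lemma ex1_mul (β : ℝ) (k l : ℤ) (x : ℝ) : ex1 β k x * ex1 β l x = ex1 β (k + l) x := by
  rw [ex1, ex1, ex1, ← Complex.exp_add]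
  congr 1
  push_cast; ring

lemma ex1_per (β T : ℝ) (h : β * T = 2 * π) (k : ℤ) (x : ℝ) : ex1 β k (x + T) = ex1 β k x := by
  have h' : (β : ℂ) * T = 2 * π := by exact_mod_cast h
  rw [ex1, ex1]
  rw [show Complex.I * β * k * ((x + T : ℝ) : ℂ) = Complex.I * β * k * x + k * (2 * π * Complex.I) by
    push_cast; linear_combination (Complex.I * k) * h']
  exact Complex.exp_periodic.int_mul k _

lemma ex1_int (β T : ℝ) (hT : 0 < T) (h : β * T = 2 * π) (k : ℤ) :
    ∫ x in (0:ℝ)..T, ex1 β k x = if k = 0 then (T:ℂ) else 0 := by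
  split_ifs with hk
  · simp [ex1, hk]
  · have hβ : β ≠ 0 := by rintro rfl; simp [pi_ne_zero] at h
    have hper := ex1_per β T h k 0
    unfold ex1 at *
    rw [integral_exp_mul_complex (by simp [hk, hβ])]
    rw [zero_add] at hper
    rw [hper, sub_self, zero_div]

lemma ex1_orth (β T : ℝ) (hT : 0 < T) (h : β * T = 2 * π) (k l : ℤ) :
    ∫ x in (0:ℝ)..T, conj (ex1 β k x) * ex1 β l x = if k = l then (T:ℂ) else 0 := by
  simp only [ex1_conj, ex1_mul]
  rw [ex1_int β T hT h]
  congr 1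
  simp only [eq_iff_iff]; omega

lemma parseval1 (β T : ℝ) (hT : 0 < T) (h : β * T = 2 * π) (f : ℝ → ℂ) (hf : Continuous f) :
    ∑' k : ℤ, ENNReal.ofReal (‖∫ x in (0:ℝ)..T, conj (ex1 β k x) * f x‖ ^ 2) =
      ENNReal.ofReal (T * ∫ x in (0:ℝ)..T, ‖f x‖ ^ 2) := by
  have hL : MemLp f 2 (volume.restrict (Set.Ioc 0 T)) := by
    rw [memLp_two_iff_integrable_sq_norm hf.aestronglyMeasurable]
    exact ((hf.norm.pow 2).intervalIntegrable 0 T).1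
  have hs := hasSum_sq_fourierCoeffOn hT hL
  have hc : ∀ k : ℤ, fourierCoeffOn hT f k = (1 / T : ℝ) • ∫ x in (0:ℝ)..T, conj (ex1 β k x) * f x := by
    intro k
    rw [fourierCoeffOn_eq_integral]
    simp only [sub_zero]
    congr 1
    apply intervalIntegral.integral_congr
    intro x _
    simp only [smul_eq_mul, ex1_conj]
    congr 1
    rw [fourier_coe_apply, ex1]
    congr 1
    have h' : (β : ℂ) * T = 2 * π := by exact_mod_cast h
    have hT' : (T:ℂ) ≠ 0 := by exact_mod_cast hT.ne'
    rw [← h', sub_zero]; field_simp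
  have hs2 := hs.mul_left (T ^ 2)
  have hs3 : HasSum (fun k : ℤ => ‖∫ x in (0:ℝ)..T, conj (ex1 β k x) * f x‖ ^ 2)
      (T * ∫ x in (0:ℝ)..T, ‖f x‖ ^ 2) := by
    have e1 : (fun k : ℤ => ‖∫ x in (0:ℝ)..T, conj (ex1 β k x) * f x‖ ^ 2) =
        fun i => T ^ 2 * ‖fourierCoeffOn hT f i‖ ^ 2 := by
      funext k
      rw [hc k, norm_smul, Real.norm_of_nonneg (by positivity)]
      field_simp
    have e2 : T * ∫ x in (0:ℝ)..T, ‖f x‖ ^ 2 = T ^ 2 * (T - 0)⁻¹ • ∫ x in (0:ℝ)..T, ‖f x‖ ^ 2 := by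
      rw [sub_zero, smul_eq_mul]; field_simp
    rw [e1, e2]
    exact hs2
  rw [← hs3.tsum_eq, ENNReal.ofReal_tsum_of_nonneg (fun _ => by positivity) hs3.summable]

section
variable {E : Type*} [NormedAddCommGroup E] [NormedSpace ℝ E]

lemma int_rect (α : ℝ) (f : ℝ × ℝ → E) (hf : Continuous f) : IntegrableOn f (rectT α) := by
  have h : IntegrableOn f (Set.Icc (0:ℝ) (2 * π / α) ×ˢ Set.Icc (0:ℝ) (2 * π)) :=
    hf.continuousOn.integrableOn_compact (isCompact_Icc.prod isCompact_Icc)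
  exact h.mono_set (Set.prod_mono Set.Ioc_subset_Icc_self Set.Ioc_subset_Icc_self)

lemma rect_fub (α : ℝ) (hα : 0 < α) (f : ℝ × ℝ → E) (hf : Continuous f) :
    ∫ x in rectT α, f x = ∫ x in (0:ℝ)..(2 * π / α), ∫ y in (0:ℝ)..(2 * π), f (x, y) := by
  have h0 : 0 ≤ 2 * π / α := by positivity
  have h1 : 0 ≤ 2 * π := by positivity
  simp only [intervalIntegral.integral_of_le h0, intervalIntegral.integral_of_le h1]
  exact setIntegral_prod f (int_rect α f hf)

lemma rect_fub' (α : ℝ) (hα : 0 < α) (f : ℝ × ℝ → E) (hf : Continuous f) :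
    ∫ x in rectT α, f x = ∫ y in (0:ℝ)..(2 * π), ∫ x in (0:ℝ)..(2 * π / α), f (x, y) := by
  have h0 : 0 ≤ 2 * π / α := by positivity
  have h1 : 0 ≤ 2 * π := by positivity
  simp only [intervalIntegral.integral_of_le h0, intervalIntegral.integral_of_le h1]
  have := int_rect α f hf
  rw [IntegrableOn, Measure.volume_eq_prod, ← Measure.prod_restrict] at this
  rw [Measure.volume_eq_prod, ← Measure.prod_restrict]
  exact integral_prod_symm f this

lemma int_d1 [CompleteSpace E] (α : ℝ) (hα : 0 < α) (h h1 : ℝ × ℝ → E) (hc : Continuous h1)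
    (hd : ∀ x : ℝ × ℝ, HasDerivAt (fun t => h (t, x.2)) (h1 x) x.1)
    (hp : ∀ x : ℝ × ℝ, h (x.1 + 2 * π / α, x.2) = h x) : ∫ x in rectT α, h1 x = 0 := by
  rw [rect_fub' α hα h1 hc]
  have : ∀ y : ℝ, ∫ x in (0:ℝ)..(2 * π / α), h1 (x, y) = 0 := by
    intro y
    rw [intervalIntegral.integral_eq_sub_of_hasDerivAt (f := fun t => h (t, y))
      (fun x _ => hd (x, y))]
    · have := hp (0, y)
      simp only [zero_add] at this
      rw [this, sub_self]
    · exact Continuous.intervalIntegrable (by fun_prop) _ _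
  simp [this]

lemma int_d2 [CompleteSpace E] (α : ℝ) (hα : 0 < α) (h h1 : ℝ × ℝ → E) (hc : Continuous h1)
    (hd : ∀ x : ℝ × ℝ, HasDerivAt (fun t => h (x.1, t)) (h1 x) x.2)
    (hp : ∀ x : ℝ × ℝ, h (x.1, x.2 + 2 * π) = h x) : ∫ x in rectT α, h1 x = 0 := by
  rw [rect_fub α hα h1 hc]
  have : ∀ x : ℝ, ∫ y in (0:ℝ)..(2 * π), h1 (x, y) = 0 := by
    intro x
    rw [intervalIntegral.integral_eq_sub_of_hasDerivAt (f := fun t => h (x, t))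
      (fun y _ => hd (x, y))]
    · have := hp (x, 0)
      simp only [zero_add] at this
      rw [this, sub_self]
    · exact Continuous.intervalIntegrable (by fun_prop) _ _
  simp [this]
end

lemma coef_fub (α : ℝ) (hα : 0 < α) (f : ℝ × ℝ → ℂ) (hf : Continuous f) (p : ℤ × ℤ) :
    coefT α f p = ∫ x in (0:ℝ)..(2 * π / α), conj (ex1 α p.1 x) *
      ∫ y in (0:ℝ)..(2 * π), conj (ex1 1 p.2 y) * f (x, y) := by
  rw [coefT, rect_fub α hα _ (by simp only [ex2_conj]; fun_prop)]
  apply intervalIntegral.integral_congr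
  intro x _
  simp only [ex2, map_mul, mul_assoc]
  rw [intervalIntegral.integral_const_mul]

lemma fib_cont (f : ℝ × ℝ → ℂ) (hf : Continuous f) (k : ℤ) :
    Continuous fun x : ℝ => ∫ y in (0:ℝ)..(2 * π), conj (ex1 1 k y) * f (x, y) := by
  simp only [ex1_conj]
  exact intervalIntegral.continuous_parametric_intervalIntegral_of_continuous'
    (by unfold Function.uncurry; fun_prop) 0 (2 * π)

lemma ofReal_intervalIntegral (T : ℝ) (hT : 0 ≤ T) (g : ℝ → ℝ) (hg : Continuous g) (h0 : ∀ x, 0 ≤ g x) :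
    ENNReal.ofReal (∫ x in (0:ℝ)..T, g x) = ∫⁻ x in Set.Ioc 0 T, ENNReal.ofReal (g x) := by
  rw [intervalIntegral.integral_of_le hT, ofReal_integral_eq_lintegral_ofReal]
  · exact (hg.intervalIntegrable 0 T).1
  · exact Filter.Eventually.of_forall h0

lemma parseval2 (α : ℝ) (hα : 0 < α) (f : ℝ × ℝ → ℂ) (hf : Continuous f) :
    ∑' p : ℤ × ℤ, ENNReal.ofReal (‖coefT α f p‖ ^ 2) =
      ENNReal.ofReal (2 * π / α * (2 * π) * ∫ x in rectT α, ‖f x‖ ^ 2) := by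
  have hA : 0 < 2 * π / α := by positivity
  have hB : 0 < 2 * π := by positivity
  rw [← (Equiv.prodComm ℤ ℤ).tsum_eq, ENNReal.tsum_prod']
  have h1 : ∀ q : ℤ, ∑' k : ℤ, ENNReal.ofReal (‖coefT α f (Equiv.prodComm ℤ ℤ (q, k))‖ ^ 2) =
      ENNReal.ofReal (2 * π / α) * ∫⁻ x in Set.Ioc 0 (2 * π / α),
        ENNReal.ofReal (‖∫ y in (0:ℝ)..(2 * π), conj (ex1 1 q y) * f (x, y)‖ ^ 2) := by
    intro q
    rw [← ofReal_intervalIntegral _ hA.le, ← ENNReal.ofReal_mul hA.le]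
    · rw [← parseval1 α _ hA (by field_simp) _ (fib_cont f hf q)]
      congr 1
      ext k
      rw [coef_fub α hα f hf]
      rfl
    · exact (fib_cont f hf q).norm.pow 2
    · intro x; positivity
  simp only [h1]
  rw [ENNReal.tsum_mul_left, ← lintegral_tsum]
  · have h2 : ∀ x : ℝ, ∑' q : ℤ, ENNReal.ofReal (‖∫ y in (0:ℝ)..(2 * π), conj (ex1 1 q y) * f (x, y)‖ ^ 2)
        = ENNReal.ofReal (2 * π * ∫ y in (0:ℝ)..(2 * π), ‖f (x, y)‖ ^ 2) := fun x =>
      parseval1 1 (2 * π) hB (by ring) (fun y => f (x, y)) (by fun_prop)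
    simp only [h2]
    rw [← ofReal_intervalIntegral _ hA.le, ← ENNReal.ofReal_mul hA.le]
    · rw [rect_fub α hα _ (by fun_prop), intervalIntegral.integral_const_mul, ← mul_assoc]
    · apply Continuous.const_mul
      exact intervalIntegral.continuous_parametric_intervalIntegral_of_continuous'
        (by unfold Function.uncurry; fun_prop) 0 (2 * π)
    · intro x
      apply mul_nonneg hB.le
      exact intervalIntegral.integral_nonneg hB.le fun _ _ => by positivity
  · intro q
    exact (((fib_cont f hf q).norm.pow 2).measurable.ennreal_ofReal).aemeasurable

lemma ex2_orth (α : ℝ) (hα : 0 < α) (p q : ℤ × ℤ) :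
    ∫ x in rectT α, conj (ex2 α p x) * ex2 α q x = if p = q then ((2 * π / α * (2 * π) : ℝ) : ℂ) else 0 := by
  have hA : 0 < 2 * π / α := by positivity
  have hB : 0 < 2 * π := by positivity
  have := coef_fub α hα (ex2 α q) (by fun_prop) p
  rw [coefT] at this
  rw [this]
  have h2 : ∀ x : ℝ, ∫ y in (0:ℝ)..(2 * π), conj (ex1 1 p.2 y) * ex2 α q (x, y) =
      ex1 α q.1 x * if p.2 = q.2 then ((2 * π : ℝ):ℂ) else 0 := by
    intro x
    rw [← ex1_orth 1 (2 * π) hB (by ring), ← intervalIntegral.integral_const_mul]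
    congr 1; ext y; simp only [ex2]; ring
  simp only [h2, ← mul_assoc]
  rw [intervalIntegral.integral_mul_const, ex1_orth α _ hA (by field_simp)]
  by_cases h1 : p.1 = q.1 <;> by_cases h2 : p.2 = q.2 <;> simp [h1, h2, Prod.ext_iff, mul_assoc]

lemma memLp_rect (α : ℝ) (f : ℝ × ℝ → ℂ) (hf : Continuous f) :
    MemLp f 2 (volume.restrict (rectT α)) := by
  rw [memLp_two_iff_integrable_sq_norm hf.aestronglyMeasurable]
  exact int_rect α _ (hf.norm.pow 2)

/-- The class in L² of a continuous function. -/
noncomputable def cls (α : ℝ) (f : ℝ × ℝ → ℂ) (hf : Continuous f) :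
    Lp ℂ 2 (volume.restrict (rectT α)) := (memLp_rect α f hf).toLp f

lemma cls_inner (α : ℝ) (f g : ℝ × ℝ → ℂ) (hf : Continuous f) (hg : Continuous g) :
    inner ℂ (cls α f hf) (cls α g hg) = ∫ x in rectT α, conj (f x) * g x := by
  rw [L2.inner_def]
  apply integral_congr_ae
  filter_upwards [(memLp_rect α f hf).coeFn_toLp, (memLp_rect α g hg).coeFn_toLp] with x h1 h2
  rw [cls, cls, h1, h2, RCLike.inner_apply, mul_comm]

lemma cls_norm (α : ℝ) (f : ℝ × ℝ → ℂ) (hf : Continuous f) :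
    ‖cls α f hf‖ ^ 2 = ∫ x in rectT α, ‖f x‖ ^ 2 := by
  have h2 : ∀ x, conj (f x) * f x = ((‖f x‖ ^ 2 : ℝ) : ℂ) := by
    intro x; rw [mul_comm, Complex.mul_conj]; simp [Complex.normSq_eq_norm_sq]
  rw [← inner_self_eq_norm_sq (𝕜 := ℂ), cls_inner]
  simp only [h2]
  rw [integral_complex_ofReal]
  simp

/-- Trigonometric polynomial. -/
noncomputable def tp (α : ℝ) (S : Finset (ℤ × ℤ)) (a : ℤ × ℤ → ℂ) (x : ℝ × ℝ) : ℂ :=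
  ∑ p ∈ S, a p * ex2 α p x

@[fun_prop]
lemma tp_cont (α : ℝ) (S : Finset (ℤ × ℤ)) (a : ℤ × ℤ → ℂ) : Continuous (tp α S a) := by
  unfold tp; fun_prop

lemma tp_int (α : ℝ) (S : Finset (ℤ × ℤ)) (a : ℤ × ℤ → ℂ) (f : ℝ × ℝ → ℂ) (hf : Continuous f) :
    ∫ x in rectT α, conj (tp α S a x) * f x = ∑ p ∈ S, conj (a p) * coefT α f p := by
  simp only [tp, map_sum, map_mul, Finset.sum_mul, mul_assoc]
  rw [integral_finsetSum]
  · simp only [integral_const_mul, coefT]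
  · intro p _
    apply int_rect
    simp only [ex2_conj]; fun_prop

lemma coef_tp (α : ℝ) (hα : 0 < α) (S : Finset (ℤ × ℤ)) (a : ℤ × ℤ → ℂ) (p : ℤ × ℤ) (hp : p ∈ S) :
    coefT α (tp α S a) p = (2 * π / α * (2 * π) : ℝ) * a p := by
  simp only [coefT, tp, Finset.mul_sum]
  rw [integral_finsetSum]
  · have : ∀ q, ∫ x in rectT α, conj (ex2 α p x) * (a q * ex2 α q x) =
        a q * if p = q then ((2 * π / α * (2 * π) : ℝ) : ℂ) else 0 := by
      intro q
      rw [← ex2_orth α hα, ← integral_const_mul]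
      congr 1; ext x; ring
    simp only [this]
    rw [Finset.sum_eq_single_of_mem p hp]
    · rw [if_pos rfl, mul_comm]
    · intro q _ hq
      rw [if_neg hq.symm, mul_zero]
  · intro q _
    apply int_rect
    simp only [ex2_conj]; fun_prop

lemma tp_norm (α : ℝ) (hα : 0 < α) (S : Finset (ℤ × ℤ)) (a : ℤ × ℤ → ℂ) :
    ∫ x in rectT α, ‖tp α S a x‖ ^ 2 = (2 * π / α * (2 * π)) * ∑ p ∈ S, ‖a p‖ ^ 2 := by
  have h : ((∫ x in rectT α, ‖tp α S a x‖ ^ 2 : ℝ) : ℂ) =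
      (((2 * π / α * (2 * π)) * ∑ p ∈ S, ‖a p‖ ^ 2 : ℝ) : ℂ) := by
    rw [← integral_complex_ofReal]
    have h2 : ∀ x, ((‖tp α S a x‖ ^ 2 : ℝ) : ℂ) = conj (tp α S a x) * tp α S a x := by
      intro x; rw [mul_comm, Complex.mul_conj]; simp [Complex.normSq_eq_norm_sq]
    simp only [h2]
    rw [tp_int α S a _ (by fun_prop), Complex.ofReal_mul]
    rw [Complex.ofReal_sum, Finset.mul_sum]
    apply Finset.sum_congr rfl
    intro p hp
    rw [coef_tp α hα S a p hp, ← Complex.normSq_eq_norm_sq, ← Complex.mul_conj]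
    ring
  exact_mod_cast h

lemma low_bound (α : ℝ) (hα : 0 < α) {N : ℕ} (f : Fin N → ℝ × ℝ → ℂ) (hf : ∀ n, Continuous (f n))
    (ho : ∀ n m, ∫ x in rectT α, conj (f n x) * f m x = if n = m then 1 else 0)
    (S : Finset (ℤ × ℤ)) (x : ℝ × ℝ) :
    ∑ n, ‖tp α S (fun p => coefT α (f n) p / (2 * π / α * (2 * π) : ℝ)) x‖ ^ 2 ≤
      S.card / (2 * π / α * (2 * π)) := by
  set W : ℝ := 2 * π / α * (2 * π) with hW
  have hW0 : 0 < W := by positivity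
  set a : ℤ × ℤ → ℂ := fun p => conj (ex2 α p x) / W with ha
  have hon : Orthonormal ℂ (fun n => cls α (f n) (hf n)) := by
    rw [orthonormal_iff_ite]
    intro n m
    rw [cls_inner, ho]
  have hb := hon.sum_inner_products_le (s := Finset.univ) (x := cls α (tp α S a) (by fun_prop))
  rw [cls_norm, tp_norm α hα] at hb
  refine le_trans (le_of_eq ?_) (hb.trans (le_of_eq ?_))
  · apply Finset.sum_congr rfl
    intro n _
    rw [norm_inner_symm, cls_inner, tp_int α S a _ (hf n)]
    congr 2
    rw [tp]
    apply Finset.sum_congr rfl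
    intro p _
    simp only [ha, map_div₀, Complex.conj_conj, Complex.conj_ofReal]
    ring
  · have : ∀ p, ‖a p‖ ^ 2 = 1 / W ^ 2 := by
      intro p
      simp only [ha, norm_div, RCLike.norm_conj, ex2_norm, Complex.norm_real, Real.norm_of_nonneg hW0.le]
      ring
    simp only [this, Finset.sum_const, nsmul_eq_mul, ← hW]
    field_simp

lemma high_norm (α : ℝ) (hα : 0 < α) (f : ℝ × ℝ → ℂ) (hf : Continuous f) (S : Finset (ℤ × ℤ)) :
    ∫ x in rectT α, ‖f x - tp α S (fun p => coefT α f p / (2 * π / α * (2 * π) : ℝ)) x‖ ^ 2 =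
      (∫ x in rectT α, ‖f x‖ ^ 2) - ∑ p ∈ S, ‖coefT α f p‖ ^ 2 / (2 * π / α * (2 * π)) := by
  set W : ℝ := 2 * π / α * (2 * π) with hW
  have hW0 : 0 < W := by positivity
  set a : ℤ × ℤ → ℂ := fun p => coefT α f p / W with ha
  have hc : Continuous (tp α S a) := by fun_prop
  have h1 : cls α (fun x => f x - tp α S a x) (by fun_prop) = cls α f hf - cls α (tp α S a) hc := rfl
  rw [← cls_norm α _ (by fun_prop), h1, @norm_sub_sq ℂ, cls_norm, cls_norm, tp_norm α hα, inner_re_symm,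
    cls_inner, tp_int α S a f hf]
  have h2 : ∑ p ∈ S, conj (a p) * coefT α f p =
      ((∑ p ∈ S, ‖coefT α f p‖ ^ 2 / W : ℝ) : ℂ) := by
    push_cast
    apply Finset.sum_congr rfl
    intro p _
    simp only [ha, map_div₀, Complex.conj_ofReal]
    rw [div_mul_eq_mul_div, mul_comm, Complex.mul_conj, Complex.normSq_eq_norm_sq]
    push_cast; rfl
  have h3 : ∀ p, ‖a p‖ ^ 2 = ‖coefT α f p‖ ^ 2 / W / W := by
    intro p
    simp only [ha, norm_div, Complex.norm_real, Real.norm_of_nonneg hW0.le]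
    field_simp
  rw [h2]
  simp only [h3, ← hW, RCLike.re_to_complex, Complex.ofReal_re]
  simp only [← Finset.sum_div]
  field_simp
  ring

lemma minkowski {N : ℕ} (u v : Fin N → ℂ) (b : ℝ) (hb : 0 ≤ b) (hv : ∑ n, ‖v n‖ ^ 2 ≤ b ^ 2) :
    (max 0 (√(∑ n, ‖u n‖ ^ 2) - b)) ^ 2 ≤ ∑ n, ‖u n - v n‖ ^ 2 := by
  have h := norm_add_le (WithLp.toLp 2 (fun n => u n - v n) : EuclideanSpace ℂ (Fin N))
    (WithLp.toLp 2 v)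
  rw [← WithLp.toLp_add] at h
  simp only [EuclideanSpace.norm_eq, Pi.add_apply, sub_add_cancel] at h
  have h2 : √(∑ n, ‖v n‖ ^ 2) ≤ b := by
    rw [← Real.sqrt_sq hb]; exact Real.sqrt_le_sqrt hv
  have h0 : 0 ≤ ∑ n, ‖u n - v n‖ ^ 2 := by positivity
  rw [← Real.sq_sqrt h0]
  gcongr
  apply max_le (Real.sqrt_nonneg _)
  linarith

lemma rumin_R (α : ℝ) (hα : 0 < α) (hα1 : α ≤ 1) {N : ℕ} (f : Fin N → ℝ × ℝ → ℂ)
    (hf : ∀ n, Continuous (f n))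
    (ho : ∀ n m, ∫ x in rectT α, conj (f n x) * f m x = if n = m then 1 else 0)
    (hz : ∀ n p, p.2 = 0 → coefT α (f n) p = 0) (R : ℝ) (hR : 0 < R) :
    ∫⁻ x in rectT α, ENNReal.ofReal ((max 0 (√(∑ n, ‖f n x‖ ^ 2) - √π / 6 * R)) ^ 2) ≤
      ∑ n, ∑' p : ℤ × ℤ, if R ^ 2 < (α * p.1) ^ 2 + (p.2:ℝ) ^ 2 then
        ENNReal.ofReal (‖coefT α (f n) p‖ ^ 2 / (2 * π / α * (2 * π))) else 0 := by
  set W : ℝ := 2 * π / α * (2 * π) with hW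
  have hW0 : 0 < W := by positivity
  set S := lowSet α R with hS
  have hcard : (S.card : ℝ) / W ≤ (√π / 6 * R) ^ 2 := by
    have h := card_lowSet α R hα hα1 hR
    rw [mul_pow, div_pow, Real.sq_sqrt pi_pos.le, hW]
    rw [div_le_iff₀ hW0, hW]
    have : π / 6 ^ 2 * R ^ 2 * (2 * π / α * (2 * π)) = (π ^ 3 / 9 * R ^ 2) / α := by
      field_simp; norm_num
    rw [this, le_div_iff₀ hα]
    linarith
  set l : Fin N → ℝ × ℝ → ℂ := fun n => tp α S (fun p => coefT α (f n) p / (W : ℝ)) with hl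
  have hlc : ∀ n, Continuous (l n) := fun n => tp_cont _ _ _
  calc _ ≤ ∫⁻ x in rectT α, ENNReal.ofReal (∑ n, ‖f n x - l n x‖ ^ 2) := by
        apply lintegral_mono
        intro x
        apply ENNReal.ofReal_le_ofReal
        apply minkowski _ _ _ (by positivity)
        exact (low_bound α hα f hf ho S x).trans hcard
    _ = ∑ n, ENNReal.ofReal (∫ x in rectT α, ‖f n x - l n x‖ ^ 2) := by
        have : ∀ x, ENNReal.ofReal (∑ n, ‖f n x - l n x‖ ^ 2) =
            ∑ n, ENNReal.ofReal (‖f n x - l n x‖ ^ 2) := fun x =>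
          ENNReal.ofReal_sum_of_nonneg fun _ _ => by positivity
        simp only [this]
        rw [lintegral_finsetSum]
        · apply Finset.sum_congr rfl
          intro n _
          rw [ofReal_integral_eq_lintegral_ofReal]
          · exact int_rect α _ (by have := hf n; have := hlc n; fun_prop)
          · exact Filter.Eventually.of_forall fun x => by positivity
        · intro n _
          apply Measurable.ennreal_ofReal
          apply Continuous.measurable
          have := hf n; have := hlc n; fun_prop
    _ ≤ _ := by
        apply Finset.sum_le_sum
        intro n _
        rw [high_norm α hα (f n) (hf n) S, ENNReal.ofReal_sub _ (by positivity),
          ENNReal.ofReal_sum_of_nonneg (fun _ _ => by positivity), tsub_le_iff_right]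
        have h1 : ENNReal.ofReal (∫ x in rectT α, ‖f n x‖ ^ 2) =
            ∑' p : ℤ × ℤ, ENNReal.ofReal (‖coefT α (f n) p‖ ^ 2 / W) := by
          have h := parseval2 α hα (f n) (hf n)
          simp only [div_eq_mul_inv, ENNReal.ofReal_mul (sq_nonneg ‖coefT α (f n) _‖)] at h ⊢
          rw [ENNReal.tsum_mul_right, h, ← ENNReal.ofReal_mul]
          · congr 1
            field_simp
            rw [hW]; field_simp
          · apply mul_nonneg (by positivity)
            exact integral_nonneg fun _ => by positivity
        have h2 : ∑ p ∈ S, ENNReal.ofReal (‖coefT α (f n) p‖ ^ 2 / W) =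
            ∑' p : ℤ × ℤ, if p ∈ S then ENNReal.ofReal (‖coefT α (f n) p‖ ^ 2 / W) else 0 := by
          rw [tsum_eq_sum (s := S)]
          · exact Finset.sum_congr rfl fun p hp => by rw [if_pos hp]
          · intro p hp; rw [if_neg hp]
        rw [h1, h2, ← ENNReal.tsum_add]
        apply ENNReal.tsum_le_tsum
        intro p
        by_cases hp : p ∈ S
        · rw [if_pos hp]; exact le_add_self
        · by_cases hp2 : p.2 = 0
          · rw [hz n p hp2]; simp
          · rw [if_pos]
            · exact le_self_add
            · by_contra! hcon
              exact hp (mem_lowSet α R hα hR p hp2 hcon)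

lemma lint_weight (s : ℝ) (c : ENNReal) : ∫⁻ R in Set.Ioi (0:ℝ), ENNReal.ofReal (2 * R) *
    (if R ^ 2 < s then c else 0) = ENNReal.ofReal s * c := by
  rcases le_or_gt s 0 with hs | hs
  · rw [ENNReal.ofReal_of_nonpos hs, zero_mul]
    have : ∀ R : ℝ, ENNReal.ofReal (2 * R) * (if R ^ 2 < s then c else 0) = 0 := by
      intro R
      rw [if_neg (by nlinarith [sq_nonneg R]), mul_zero]
    simp only [this, lintegral_zero]
  · have h1 : ∫⁻ R in Set.Ioi (0:ℝ), ENNReal.ofReal (2 * R) * (if R ^ 2 < s then c else 0) =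
        ∫⁻ R in Set.Ioi (0:ℝ), (Set.Iio (√s)).indicator (fun R => ENNReal.ofReal (2 * R) * c) R := by
      apply setLIntegral_congr_fun measurableSet_Ioi
      intro R hR
      simp only [Set.indicator, Set.mem_Iio, Real.lt_sqrt (le_of_lt hR)]
      split_ifs <;> simp
    rw [h1, lintegral_indicator measurableSet_Iio, Measure.restrict_restrict measurableSet_Iio,
      lintegral_mul_const _ (by fun_prop), Set.inter_comm, Set.Ioi_inter_Iio]
    congr 1
    rw [← Measure.restrict_congr_set Ioo_ae_eq_Ioc.symm, ← ofReal_integral_eq_lintegral_ofReal]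
    · rw [← intervalIntegral.integral_of_le (Real.sqrt_nonneg s)]
      rw [intervalIntegral.integral_const_mul, integral_id]; simp only [Real.sq_sqrt hs.le]; ring_nf
    · exact ((by fun_prop : Continuous fun R : ℝ => 2 * R).intervalIntegrable 0 √s).1
    · filter_upwards [ae_restrict_mem measurableSet_Ioc] with R hR
      have := hR.1
      simp only [Pi.zero_apply]; linarith

lemma lint_poly (r b : ℝ) (hr : 0 ≤ r) (hb : 0 < b) : ENNReal.ofReal (r ^ 4 / (6 * b ^ 2)) ≤
    ∫⁻ R in Set.Ioi (0:ℝ), ENNReal.ofReal (2 * R) * ENNReal.ofReal ((max 0 (r - b * R)) ^ 2) := by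
  have h0 : 0 ≤ r / b := by positivity
  calc _ = ENNReal.ofReal (∫ R in (0:ℝ)..(r / b), 2 * R * (r - b * R) ^ 2) := by
        congr 1
        have hd : ∀ R ∈ Set.uIcc 0 (r / b), HasDerivAt (fun R : ℝ => r ^ 2 * R ^ 2 - 4 / 3 * r * b * R ^ 3
            + b ^ 2 / 2 * R ^ 4) (2 * R * (r - b * R) ^ 2) R := by
          intro R _
          have := (((hasDerivAt_pow 2 R).const_mul (r ^ 2)).sub
            ((hasDerivAt_pow 3 R).const_mul (4 / 3 * r * b))).add
              ((hasDerivAt_pow 4 R).const_mul (b ^ 2 / 2))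
          refine this.congr_deriv ?_
          norm_num
          ring
        rw [intervalIntegral.integral_eq_sub_of_hasDerivAt hd
          (Continuous.intervalIntegrable (by fun_prop) _ _)]
        field_simp
        ring
    _ = ∫⁻ R in Set.Ioc 0 (r / b), ENNReal.ofReal (2 * R * (r - b * R) ^ 2) := by
        rw [intervalIntegral.integral_of_le h0, ofReal_integral_eq_lintegral_ofReal]
        · exact ((by fun_prop : Continuous fun R : ℝ => 2 * R * (r - b * R) ^ 2).intervalIntegrable 0 _).1
        · filter_upwards [ae_restrict_mem measurableSet_Ioc] with R hR
          have := hR.1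
          simp only [Pi.zero_apply]; positivity
    _ ≤ ∫⁻ R in Set.Ioc 0 (r / b), ENNReal.ofReal (2 * R) * ENNReal.ofReal ((max 0 (r - b * R)) ^ 2) := by
        apply setLIntegral_mono' measurableSet_Ioc
        intro R hR
        have h1 := hR.1
        have h2 : b * R ≤ r := by
          have := hR.2
          rw [le_div_iff₀ hb] at this; linarith
        rw [max_eq_right (by linarith), ENNReal.ofReal_mul (by linarith)]
    _ ≤ _ := lintegral_mono_set Set.Ioc_subset_Ioi_self

lemma rumin (α : ℝ) (hα : 0 < α) (hα1 : α ≤ 1) {N : ℕ} (f : Fin N → ℝ × ℝ → ℂ)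
    (hf : ∀ n, Continuous (f n))
    (ho : ∀ n m, ∫ x in rectT α, conj (f n x) * f m x = if n = m then 1 else 0)
    (hz : ∀ n p, p.2 = 0 → coefT α (f n) p = 0) :
    ENNReal.ofReal (∫ x in rectT α, (∑ n, ‖f n x‖ ^ 2) ^ 2 / (π / 6)) ≤
      ∑ n, ∑' p : ℤ × ℤ, ENNReal.ofReal ((α * p.1) ^ 2 + (p.2:ℝ) ^ 2) *
        ENNReal.ofReal (‖coefT α (f n) p‖ ^ 2 / (2 * π / α * (2 * π))) := by
  have hρ : Continuous fun x => ∑ n, ‖f n x‖ ^ 2 := by fun_prop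
  calc _ = ∫⁻ x in rectT α, ENNReal.ofReal ((∑ n, ‖f n x‖ ^ 2) ^ 2 / (π / 6)) := by
        rw [ofReal_integral_eq_lintegral_ofReal]
        · exact int_rect α _ (by fun_prop)
        · exact Filter.Eventually.of_forall fun x => by positivity
    _ ≤ ∫⁻ x in rectT α, ∫⁻ R in Set.Ioi (0:ℝ), ENNReal.ofReal (2 * R) *
          ENNReal.ofReal ((max 0 (√(∑ n, ‖f n x‖ ^ 2) - √π / 6 * R)) ^ 2) := by
        apply lintegral_mono
        intro x
        refine le_trans (le_of_eq ?_) (lint_poly _ _ (Real.sqrt_nonneg _) (by positivity))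
        have h0 : 0 ≤ ∑ n, ‖f n x‖ ^ 2 := by positivity
        congr 1
        rw [show √(∑ n, ‖f n x‖ ^ 2) ^ 4 = (√(∑ n, ‖f n x‖ ^ 2) ^ 2) ^ 2 by ring, Real.sq_sqrt h0,
          div_pow, Real.sq_sqrt pi_pos.le]
        congr 1
        ring
    _ = ∫⁻ R in Set.Ioi (0:ℝ), ∫⁻ x in rectT α, ENNReal.ofReal (2 * R) *
          ENNReal.ofReal ((max 0 (√(∑ n, ‖f n x‖ ^ 2) - √π / 6 * R)) ^ 2) := by
        apply lintegral_lintegral_swap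
        apply Measurable.aemeasurable
        unfold Function.uncurry
        refine Measurable.mul (f := fun a : (ℝ × ℝ) × ℝ => ENNReal.ofReal (2 * a.2))
          (g := fun a : (ℝ × ℝ) × ℝ => ENNReal.ofReal
            ((max 0 (√(∑ n, ‖f n a.1‖ ^ 2) - √π / 6 * a.2)) ^ 2)) ?_ ?_
        · fun_prop
        · apply Measurable.ennreal_ofReal
          apply Continuous.measurable
          fun_prop
    _ ≤ ∫⁻ R in Set.Ioi (0:ℝ), ∑ n, ∑' p : ℤ × ℤ, ENNReal.ofReal (2 * R) *
          (if R ^ 2 < (α * p.1) ^ 2 + (p.2:ℝ) ^ 2 then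
          ENNReal.ofReal (‖coefT α (f n) p‖ ^ 2 / (2 * π / α * (2 * π))) else 0) := by
        apply setLIntegral_mono' measurableSet_Ioi
        intro R hR
        rw [lintegral_const_mul _ (by apply Measurable.ennreal_ofReal; apply Continuous.measurable; fun_prop)]
        simp only [ENNReal.tsum_mul_left]
        rw [← Finset.mul_sum]
        gcongr
        exact rumin_R α hα hα1 f hf ho hz R hR
    _ = _ := by
        have hm : ∀ n (p : ℤ × ℤ), Measurable fun R : ℝ => ENNReal.ofReal (2 * R) *
          (if R ^ 2 < (α * p.1) ^ 2 + (p.2:ℝ) ^ 2 then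
          ENNReal.ofReal (‖coefT α (f n) p‖ ^ 2 / (2 * π / α * (2 * π))) else 0) := by
          intro n p
          apply Measurable.mul (by fun_prop)
          apply Measurable.ite _ measurable_const measurable_const
          exact measurableSet_lt (by fun_prop) measurable_const
        rw [lintegral_finsetSum]
        · apply Finset.sum_congr rfl
          intro n _
          rw [lintegral_tsum fun p => (hm n p).aemeasurable]
          simp only [lint_weight]
        · intro n _
          exact Measurable.tsum (hm n)

/-- First partial derivative. -/
noncomputable def D1 (φ : ℝ × ℝ → ℝ) (x : ℝ × ℝ) : ℝ := fderiv ℝ φ x (1, 0)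

/-- Second partial derivative. -/
noncomputable def D2 (φ : ℝ × ℝ → ℝ) (x : ℝ × ℝ) : ℝ := fderiv ℝ φ x (0, 1)

lemma D1_smooth (φ : ℝ × ℝ → ℝ) (h : ContDiff ℝ (⊤ : ℕ∞) φ) : ContDiff ℝ (⊤ : ℕ∞) (D1 φ) := by
  unfold D1
  exact (h.fderiv_right (m := (⊤ : ℕ∞)) (by simp)).clm_apply contDiff_const

lemma D2_smooth (φ : ℝ × ℝ → ℝ) (h : ContDiff ℝ (⊤ : ℕ∞) φ) : ContDiff ℝ (⊤ : ℕ∞) (D2 φ) := by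
  unfold D2
  exact (h.fderiv_right (m := (⊤ : ℕ∞)) (by simp)).clm_apply contDiff_const

lemma D1_deriv (φ : ℝ × ℝ → ℝ) (h : ContDiff ℝ (⊤ : ℕ∞) φ) (x : ℝ × ℝ) :
    HasDerivAt (fun t => φ (t, x.2)) (D1 φ x) x.1 := by
  have h1 : HasFDerivAt φ (fderiv ℝ φ x) (x.1, x.2) :=
    ((h.differentiable (by simp)) x).hasFDerivAt
  exact h1.comp_hasDerivAt x.1 ((hasDerivAt_id x.1).prodMk (hasDerivAt_const x.1 x.2))

lemma D2_deriv (φ : ℝ × ℝ → ℝ) (h : ContDiff ℝ (⊤ : ℕ∞) φ) (x : ℝ × ℝ) :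
    HasDerivAt (fun t => φ (x.1, t)) (D2 φ x) x.2 := by
  have h1 : HasFDerivAt φ (fderiv ℝ φ x) (x.1, x.2) :=
    ((h.differentiable (by simp)) x).hasFDerivAt
  exact h1.comp_hasDerivAt x.2 ((hasDerivAt_const x.2 x.1).prodMk (hasDerivAt_id x.2))

lemma pd11_eq (φ : ℝ × ℝ → ℝ) (h : ContDiff ℝ (⊤ : ℕ∞) φ) (x : ℝ × ℝ) :
    pd11 φ x = D1 (D1 φ) x := by
  unfold pd11
  have : (fun s => deriv (fun t => φ (t, x.2)) s) = fun s => D1 φ (s, x.2) := by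
    funext s; exact (D1_deriv φ h (s, x.2)).deriv
  rw [this]
  exact (D1_deriv _ (D1_smooth φ h) x).deriv

lemma pd22_eq (φ : ℝ × ℝ → ℝ) (h : ContDiff ℝ (⊤ : ℕ∞) φ) (x : ℝ × ℝ) :
    pd22 φ x = D2 (D2 φ) x := by
  unfold pd22
  have : (fun s => deriv (fun t => φ (x.1, t)) s) = fun s => D2 φ (x.1, s) := by
    funext s; exact (D2_deriv φ h (x.1, s)).deriv
  rw [this]
  exact (D2_deriv _ (D2_smooth φ h) x).deriv

lemma fderiv_per (φ : ℝ × ℝ → ℝ) (v : ℝ × ℝ) (h : ∀ x, φ (x + v) = φ x) (x : ℝ × ℝ) :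
    fderiv ℝ φ (x + v) = fderiv ℝ φ x := by
  rw [← fderiv_comp_add_right]
  simp only [h]

lemma D1_per1 (T : ℝ) (φ : ℝ × ℝ → ℝ) (h : ∀ x : ℝ × ℝ, φ (x.1 + T, x.2) = φ x) (x : ℝ × ℝ) :
    D1 φ (x.1 + T, x.2) = D1 φ x := by
  have e : ∀ x : ℝ × ℝ, (x.1 + T, x.2) = x + (T, 0) := fun x => by ext <;> simp
  unfold D1
  simp only [e] at h ⊢
  rw [fderiv_per φ _ h]

lemma D2_per2 (T : ℝ) (φ : ℝ × ℝ → ℝ) (h : ∀ x : ℝ × ℝ, φ (x.1, x.2 + T) = φ x) (x : ℝ × ℝ) :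
    D2 φ (x.1, x.2 + T) = D2 φ x := by
  have e : ∀ x : ℝ × ℝ, (x.1, x.2 + T) = x + (0, T) := fun x => by ext <;> simp
  unfold D2
  simp only [e] at h ⊢
  rw [fderiv_per φ _ h]

lemma ex1_deriv (β : ℝ) (k : ℤ) (x : ℝ) :
    HasDerivAt (ex1 β k) (Complex.I * β * k * ex1 β k x) x := by
  unfold ex1
  have h : HasDerivAt (fun x : ℝ => Complex.I * β * k * (x : ℂ)) (Complex.I * β * k) x := by
    simpa using (Complex.ofRealCLM.hasDerivAt (x := x)).const_mul (Complex.I * β * k)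
  have := h.cexp
  exact this.congr_deriv (mul_comm _ _)

lemma coef_d1 (α : ℝ) (hα : 0 < α) (f g : ℝ × ℝ → ℝ) (hf : Continuous f) (hg : Continuous g)
    (hd : ∀ x : ℝ × ℝ, HasDerivAt (fun t => f (t, x.2)) (g x) x.1)
    (hp : ∀ x : ℝ × ℝ, f (x.1 + 2 * π / α, x.2) = f x) (p : ℤ × ℤ) :
    coefT α (fun x => (g x : ℂ)) p = Complex.I * α * p.1 * coefT α (fun x => (f x : ℂ)) p := by
  have key := int_d1 α hα (fun x => ex2 α (-p) x * (f x : ℂ))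
    (fun x => ex2 α (-p) x * (g x : ℂ) - Complex.I * α * p.1 * (ex2 α (-p) x * (f x : ℂ)))
    (by fun_prop)
    (by
      intro x
      have h1 := ((ex1_deriv α (-p).1 x.1).mul_const (ex1 1 (-p).2 x.2)).mul (hd x).ofReal_comp
      refine h1.congr_deriv ?_
      simp only [ex2, Prod.fst_neg, Int.cast_neg]
      ring)
    (by
      intro x
      simp only [ex2, hp]
      rw [ex1_per α (2 * π / α) (by field_simp)])
  rw [integral_sub (int_rect α _ (by fun_prop)) (int_rect α _ (by fun_prop)),
    integral_const_mul, sub_eq_zero] at key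
  simpa only [coefT, ex2_conj] using key

lemma coef_d2 (α : ℝ) (hα : 0 < α) (f g : ℝ × ℝ → ℝ) (hf : Continuous f) (hg : Continuous g)
    (hd : ∀ x : ℝ × ℝ, HasDerivAt (fun t => f (x.1, t)) (g x) x.2)
    (hp : ∀ x : ℝ × ℝ, f (x.1, x.2 + 2 * π) = f x) (p : ℤ × ℤ) :
    coefT α (fun x => (g x : ℂ)) p = Complex.I * p.2 * coefT α (fun x => (f x : ℂ)) p := by
  have key := int_d2 α hα (fun x => ex2 α (-p) x * (f x : ℂ))
    (fun x => ex2 α (-p) x * (g x : ℂ) - Complex.I * p.2 * (ex2 α (-p) x * (f x : ℂ)))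
    (by fun_prop)
    (by
      intro x
      have h1 := ((ex1_deriv 1 (-p).2 x.2).const_mul (ex1 α (-p).1 x.1)).mul (hd x).ofReal_comp
      refine h1.congr_deriv ?_
      simp only [ex2, Prod.snd_neg, Int.cast_neg, Complex.ofReal_one]
      ring)
    (by
      intro x
      simp only [ex2, hp]
      rw [ex1_per 1 (2 * π) (by simp)])
  rw [integral_sub (int_rect α _ (by fun_prop)) (int_rect α _ (by fun_prop)),
    integral_const_mul, sub_eq_zero] at key
  simpa only [coefT, ex2_conj] using key

lemma mean_cont (ψ : ℝ × ℝ → ℝ) (h : Continuous ψ) :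
    Continuous fun x : ℝ => ∫ t in (0:ℝ)..(2 * π), ψ (x, t) := by
  apply intervalIntegral.continuous_parametric_intervalIntegral_of_continuous'
  simpa [Function.uncurry_def] using h

lemma projP_cont (ψ : ℝ × ℝ → ℝ) (h : Continuous ψ) : Continuous (projP ψ) := by
  have := mean_cont ψ h
  unfold projP
  fun_prop

lemma projP_mean (ψ : ℝ × ℝ → ℝ) (h : Continuous ψ) (x : ℝ) :
    ∫ t in (0:ℝ)..(2 * π), projP ψ (x, t) = 0 := by
  unfold projP
  rw [intervalIntegral.integral_sub (Continuous.intervalIntegrable (by fun_prop) _ _)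
    (Continuous.intervalIntegrable (by fun_prop) _ _)]
  simp only [intervalIntegral.integral_const, smul_eq_mul]
  have := pi_pos
  field_simp
  ring

lemma coef_projP (α : ℝ) (hα : 0 < α) (ψ : ℝ × ℝ → ℝ) (h : Continuous ψ) (p : ℤ × ℤ)
    (hp : p.2 = 0) : coefT α (fun x => (projP ψ x : ℂ)) p = 0 := by
  have hc := projP_cont ψ h
  unfold coefT
  rw [rect_fub α hα _ (by fun_prop)]
  have : ∀ x : ℝ, ∫ y in (0:ℝ)..(2 * π), conj (ex2 α p (x, y)) * (projP ψ (x, y) : ℂ) = 0 := by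
    intro x
    simp only [ex2, hp, ex1, Int.cast_zero, mul_zero, zero_mul, Complex.exp_zero, mul_one]
    rw [intervalIntegral.integral_const_mul, intervalIntegral.integral_ofReal, projP_mean ψ h]
    simp
  simp [this]

lemma zero_coef (α : ℝ) (hα : 0 < α) (V φ : ℝ × ℝ → ℝ) (hVc : Continuous V)
    (hφ : ContDiff ℝ (⊤ : ℕ∞) φ)
    (hper1 : ∀ x : ℝ × ℝ, φ (x.1 + 2 * π / α, x.2) = φ x)
    (hper2 : ∀ x : ℝ × ℝ, φ (x.1, x.2 + 2 * π) = φ x)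
    (l : ℝ) (hl : 0 < l)
    (heig : ∀ x, -(pd11 φ x + pd22 φ x) - projP (fun y => V y * projP φ y) x = -l * φ x)
    (p : ℤ × ℤ) (hp : p.2 = 0) : coefT α (fun x => (φ x : ℂ)) p = 0 := by
  have c0 := hφ.continuous
  have s1 := D1_smooth φ hφ
  have s2 := D2_smooth φ hφ
  have c1 := s1.continuous
  have c2 := s2.continuous
  have c11 := (D1_smooth _ s1).continuous
  have c22 := (D2_smooth _ s2).continuous
  have cW : Continuous fun y => V y * projP φ y := hVc.mul (projP_cont φ c0)
  have cP := projP_cont _ cW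
  have e1 := coef_d1 α hα φ (D1 φ) c0 c1 (D1_deriv φ hφ) hper1 p
  have e11 := coef_d1 α hα (D1 φ) (D1 (D1 φ)) c1 c11 (D1_deriv _ s1) (D1_per1 _ φ hper1) p
  have e2 := coef_d2 α hα φ (D2 φ) c0 c2 (D2_deriv φ hφ) hper2 p
  have e22 := coef_d2 α hα (D2 φ) (D2 (D2 φ)) c2 c22 (D2_deriv _ s2) (D2_per2 _ φ hper2) p
  have eP := coef_projP α hα _ cW p hp
  have key : coefT α (fun x => (D1 (D1 φ) x : ℂ)) p + coefT α (fun x => (D2 (D2 φ) x : ℂ)) p +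
      coefT α (fun x => (projP (fun y => V y * projP φ y) x : ℂ)) p =
      l * coefT α (fun x => (φ x : ℂ)) p := by
    simp only [coefT, ex2_conj]
    rw [← integral_add (int_rect α _ (by fun_prop)) (int_rect α _ (by fun_prop)),
      ← integral_add (int_rect α _ (by fun_prop)) (int_rect α _ (by fun_prop)),
      ← integral_const_mul]
    congr 1
    funext x
    have := heig x
    rw [pd11_eq φ hφ, pd22_eq φ hφ] at this
    have h2 : D1 (D1 φ) x + D2 (D2 φ) x + projP (fun y => V y * projP φ y) x = l * φ x := by
      linarith
    have h3 : (D1 (D1 φ) x : ℂ) + D2 (D2 φ) x + (projP (fun y => V y * projP φ y) x : ℝ) = l * φ x := by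
      exact_mod_cast h2
    linear_combination (ex2 α (-p) x) * h3
  rw [eP, e11, e1, e22, e2, hp] at key
  have h4 : ((l + (α * p.1) ^ 2 : ℝ) : ℂ) * coefT α (fun x => (φ x : ℂ)) p = 0 := by
    push_cast
    push_cast at key
    linear_combination -key + (α * p.1) ^ 2 * coefT α (fun x => (φ x : ℂ)) p * Complex.I_sq
  rcases mul_eq_zero.1 h4 with h | h
  · exfalso
    have : l + (α * p.1) ^ 2 = 0 := by exact_mod_cast h
    nlinarith [sq_nonneg (α * p.1)]
  · exact h

lemma mean_zero (α : ℝ) (hα : 0 < α) (φ : ℝ × ℝ → ℝ) (hc : Continuous φ)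
    (h : ∀ p : ℤ × ℤ, p.2 = 0 → coefT α (fun x => (φ x : ℂ)) p = 0) :
    ∀ x ∈ Set.Icc (0:ℝ) (2 * π / α), ∫ t in (0:ℝ)..(2 * π), φ (x, t) = 0 := by
  have hT : 0 < 2 * π / α := by positivity
  have hm := mean_cont φ hc
  have hP := parseval1 α (2 * π / α) hT (by field_simp)
    (fun x => ((∫ t in (0:ℝ)..(2 * π), φ (x, t) : ℝ) : ℂ)) (by fun_prop)
  have h0 : ∀ k : ℤ, ∫ x in (0:ℝ)..(2 * π / α), conj (ex1 α k x) *
      ((∫ t in (0:ℝ)..(2 * π), φ (x, t) : ℝ) : ℂ) = 0 := by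
    intro k
    rw [← h (k, 0) rfl, coef_fub α hα _ (by fun_prop)]
    simp [ex1, intervalIntegral.integral_ofReal]
  simp only [h0] at hP
  simp only [norm_zero, ne_eq, OfNat.ofNat_ne_zero, not_false_eq_true, zero_pow,
    ENNReal.ofReal_zero, tsum_zero, Complex.norm_real, norm_eq_abs, sq_abs] at hP
  have h1 := ENNReal.ofReal_eq_zero.1 hP.symm
  by_contra! hx
  obtain ⟨x, hx, hne⟩ := hx
  have h2 : 0 < ∫ x in (0:ℝ)..(2 * π / α), (∫ t in (0:ℝ)..(2 * π), φ (x, t)) ^ 2 := by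
    apply intervalIntegral.integral_pos hT (hm.pow 2).continuousOn (fun _ _ => sq_nonneg _)
    exact ⟨x, hx, sq_pos_of_ne_zero hne⟩
  have := mul_pos hT h2
  linarith

lemma energy (α : ℝ) (hα : 0 < α) (V φ : ℝ × ℝ → ℝ) (hVc : Continuous V)
    (hφ : ContDiff ℝ (⊤ : ℕ∞) φ)
    (hper1 : ∀ x : ℝ × ℝ, φ (x.1 + 2 * π / α, x.2) = φ x)
    (hper2 : ∀ x : ℝ × ℝ, φ (x.1, x.2 + 2 * π) = φ x)
    (l : ℝ)
    (heig : ∀ x, -(pd11 φ x + pd22 φ x) - projP (fun y => V y * projP φ y) x = -l * φ x)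
    (hm : ∀ x ∈ Set.Icc (0:ℝ) (2 * π / α), ∫ t in (0:ℝ)..(2 * π), φ (x, t) = 0)
    (h1 : ∫ x in rectT α, φ x * φ x = 1) :
    l + ((∫ x in rectT α, D1 φ x ^ 2) + ∫ x in rectT α, D2 φ x ^ 2)
      = ∫ x in rectT α, V x * φ x ^ 2 := by
  have hT : 0 < 2 * π / α := by positivity
  have c0 := hφ.continuous
  have s1 := D1_smooth φ hφ
  have s2 := D2_smooth φ hφ
  have c1 := s1.continuous
  have c2 := s2.continuous
  have c11 := (D1_smooth _ s1).continuous
  have c22 := (D2_smooth _ s2).continuous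
  have cW : Continuous fun y => V y * projP φ y := hVc.mul (projP_cont φ c0)
  have cP := projP_cont _ cW
  have i1 := int_d1 α hα (fun x => φ x * D1 φ x) (fun x => D1 φ x ^ 2 + φ x * D1 (D1 φ) x)
    (by fun_prop)
    (fun x => ((D1_deriv φ hφ x).mul (D1_deriv _ s1 x)).congr_deriv (by ring))
    (fun x => by simp only [hper1, D1_per1 _ φ hper1])
  have i2 := int_d2 α hα (fun x => φ x * D2 φ x) (fun x => D2 φ x ^ 2 + φ x * D2 (D2 φ) x)
    (by fun_prop)
    (fun x => ((D2_deriv φ hφ x).mul (D2_deriv _ s2 x)).congr_deriv (by ring))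
    (fun x => by simp only [hper2, D2_per2 _ φ hper2])
  rw [integral_add (int_rect α _ (by fun_prop)) (int_rect α _ (by fun_prop))] at i1 i2
  have iP : ∫ x in rectT α, φ x * projP (fun y => V y * projP φ y) x =
      ∫ x in rectT α, V x * φ x ^ 2 := by
    rw [rect_fub α hα _ (by fun_prop), rect_fub α hα _ (by fun_prop)]
    apply intervalIntegral.integral_congr
    intro x hx
    rw [Set.uIcc_of_le hT.le] at hx
    have hmx := hm x hx
    have e : ∀ t, projP φ (x, t) = φ (x, t) := by
      intro t; simp [projP, hmx]
    simp only
    set K := (1 / (2 * π)) * ∫ t in (0:ℝ)..(2 * π), V (x, t) * projP φ (x, t) with hK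
    have e2 : ∀ t, φ (x, t) * projP (fun y => V y * projP φ y) (x, t) =
        V (x, t) * φ (x, t) ^ 2 - K * φ (x, t) := by
      intro t
      rw [projP]
      simp only
      rw [← hK, e t]
      ring
    simp only [e2]
    rw [intervalIntegral.integral_sub (Continuous.intervalIntegrable (by fun_prop) _ _)
      (Continuous.intervalIntegrable (by fun_prop) _ _), intervalIntegral.integral_const_mul, hmx]
    simp
  have key : (∫ x in rectT α, φ x * D1 (D1 φ) x) + (∫ x in rectT α, φ x * D2 (D2 φ) x) +
      (∫ x in rectT α, φ x * projP (fun y => V y * projP φ y) x) =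
      l * ∫ x in rectT α, φ x * φ x := by
    rw [← integral_add (int_rect α _ (by fun_prop)) (int_rect α _ (by fun_prop)),
      ← integral_add (int_rect α _ (by fun_prop)) (int_rect α _ (by fun_prop)),
      ← integral_const_mul]
    congr 1
    funext x
    have := heig x
    rw [pd11_eq φ hφ, pd22_eq φ hφ] at this
    linear_combination -φ x * this
  rw [h1, iP] at key
  linarith

lemma kin_eq (α : ℝ) (hα : 0 < α) (φ : ℝ × ℝ → ℝ)
    (hφ : ContDiff ℝ (⊤ : ℕ∞) φ)
    (hper1 : ∀ x : ℝ × ℝ, φ (x.1 + 2 * π / α, x.2) = φ x)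
    (hper2 : ∀ x : ℝ × ℝ, φ (x.1, x.2 + 2 * π) = φ x) :
    ∑' p : ℤ × ℤ, ENNReal.ofReal ((α * p.1) ^ 2 + (p.2:ℝ) ^ 2) *
        ENNReal.ofReal (‖coefT α (fun x => (φ x : ℂ)) p‖ ^ 2 / (2 * π / α * (2 * π))) =
    ENNReal.ofReal ((∫ x in rectT α, D1 φ x ^ 2) + ∫ x in rectT α, D2 φ x ^ 2) := by
  have c0 := hφ.continuous
  have c1 := (D1_smooth φ hφ).continuous
  have c2 := (D2_smooth φ hφ).continuous
  have e1 := coef_d1 α hα φ (D1 φ) c0 c1 (D1_deriv φ hφ) hper1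
  have e2 := coef_d2 α hα φ (D2 φ) c0 c2 (D2_deriv φ hφ) hper2
  have p1 := parseval2 α hα (fun x => (D1 φ x : ℂ)) (by fun_prop)
  have p2 := parseval2 α hα (fun x => (D2 φ x : ℂ)) (by fun_prop)
  simp only [Complex.norm_real, norm_eq_abs, sq_abs] at p1 p2
  set A := 2 * π / α * (2 * π) with hA
  have hA0 : 0 < A := by positivity
  have hsum : ∀ p : ℤ × ℤ, ENNReal.ofReal ((α * p.1) ^ 2 + (p.2:ℝ) ^ 2) *
        ENNReal.ofReal (‖coefT α (fun x => (φ x : ℂ)) p‖ ^ 2 / A) =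
      ENNReal.ofReal A⁻¹ * (ENNReal.ofReal (‖coefT α (fun x => (D1 φ x : ℂ)) p‖ ^ 2) +
        ENNReal.ofReal (‖coefT α (fun x => (D2 φ x : ℂ)) p‖ ^ 2)) := by
    intro p
    rw [← ENNReal.ofReal_mul (by positivity), ← ENNReal.ofReal_add (by positivity) (by positivity),
      ← ENNReal.ofReal_mul (by positivity), e1, e2]
    congr 1
    simp only [norm_mul, Complex.norm_I, Complex.norm_real, Complex.norm_intCast, norm_eq_abs,
      mul_pow, sq_abs]
    ring
  have n1 : 0 ≤ ∫ x in rectT α, D1 φ x ^ 2 := integral_nonneg fun _ => by positivity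
  have n2 : 0 ≤ ∫ x in rectT α, D2 φ x ^ 2 := integral_nonneg fun _ => by positivity
  simp only [hsum]
  rw [ENNReal.tsum_mul_left, ENNReal.tsum_add, p1, p2, ← ENNReal.ofReal_add (by positivity) (by positivity),
      ← ENNReal.ofReal_mul (by positivity)]
  congr 1
  field_simp

theorem stmt_1 (α : ℝ) (hα0 : 0 < α) (hα1 : α ≤ 1)
    (V : ℝ × ℝ → ℝ) (hVc : Continuous V) (hV0 : ∀ x, 0 ≤ V x)
    (hVper1 : ∀ x : ℝ × ℝ, V (x.1 + 2 * π / α, x.2) = V x)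
    (hVper2 : ∀ x : ℝ × ℝ, V (x.1, x.2 + 2 * π) = V x)
    (N : ℕ) (φ : Fin N → ℝ × ℝ → ℝ)
    (hφ : ∀ n, ContDiff ℝ (⊤ : ℕ∞) (φ n))
    (hper1 : ∀ n (x : ℝ × ℝ), φ n (x.1 + 2 * π / α, x.2) = φ n x)
    (hper2 : ∀ n (x : ℝ × ℝ), φ n (x.1, x.2 + 2 * π) = φ n x)
    (hortho : ∀ n m, (∫ x in Set.Ioc (0:ℝ) (2 * π / α) ×ˢ Set.Ioc (0:ℝ) (2 * π),
        φ n x * φ m x) = if n = m then 1 else 0)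
    (lam : Fin N → ℝ) (hlam : ∀ n, 0 < lam n)
    (heig : ∀ n x, -(pd11 (φ n) x + pd22 (φ n) x) -
        projP (fun y => V y * projP (φ n) y) x = -(lam n) * φ n x) :
    ∑ n, lam n ≤ (π / 24) *
      ∫ x in Set.Ioc (0:ℝ) (2 * π / α) ×ˢ Set.Ioc (0:ℝ) (2 * π), V x ^ 2 := by

  set J : Fin N → ℝ := fun n => (∫ x in rectT α, D1 (φ n) x ^ 2) + ∫ x in rectT α, D2 (φ n) x ^ 2
    with hJ
  have hc : ∀ n, Continuous (φ n) := fun n => (hφ n).continuous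
  have hz : ∀ n (p : ℤ × ℤ), p.2 = 0 → coefT α (fun x => (φ n x : ℂ)) p = 0 := fun n p hp =>
    zero_coef α hα0 V (φ n) hVc (hφ n) (hper1 n) (hper2 n) (lam n) (hlam n) (heig n) p hp
  have hE : ∀ n, lam n + J n = ∫ x in rectT α, V x * φ n x ^ 2 := fun n =>
    energy α hα0 V (φ n) hVc (hφ n) (hper1 n) (hper2 n) (lam n) (heig n)
      (mean_zero α hα0 (φ n) (hc n) (hz n)) (by have := hortho n n; simpa using this)
  have hJ0 : ∀ n, 0 ≤ J n := fun n =>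
    add_nonneg (integral_nonneg fun _ => by positivity) (integral_nonneg fun _ => by positivity)
  have hR := rumin α hα0 hα1 (fun n x => (φ n x : ℂ)) (fun n => by fun_prop)
    (by
      intro n m
      have h := congrArg (fun r : ℝ => (r : ℂ)) (hortho n m)
      simp only [Complex.conj_ofReal]
      rw [← integral_complex_ofReal] at h
      push_cast at h
      refine h.trans ?_
      split_ifs <;> simp) hz
  simp only [fun n => kin_eq α hα0 (φ n) (hφ n) (hper1 n) (hper2 n), Complex.norm_real,
    norm_eq_abs, sq_abs] at hR
  rw [← ENNReal.ofReal_sum_of_nonneg (fun n _ => hJ0 n),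
    ENNReal.ofReal_le_ofReal_iff (Finset.sum_nonneg fun n _ => hJ0 n)] at hR
  have hsum : ∑ n, lam n + ∑ n, J n = ∫ x in rectT α, V x * ∑ n, φ n x ^ 2 := by
    rw [← Finset.sum_add_distrib]
    simp only [hE, Finset.mul_sum]
    rw [integral_finsetSum]
    intro n _
    exact int_rect α _ (by fun_prop)
  have hAG : ∫ x in rectT α, V x * ∑ n, φ n x ^ 2 ≤
      ∫ x in rectT α, ((∑ n, φ n x ^ 2) ^ 2 / (π / 6) + (π / 24) * V x ^ 2) := by
    apply integral_mono (int_rect α _ (by fun_prop)) (int_rect α _ (by fun_prop))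
    intro x
    simp only
    have hp := pi_pos
    have h : (∑ n, φ n x ^ 2) ^ 2 / (π / 6) + (π / 24) * V x ^ 2 - V x * ∑ n, φ n x ^ 2 =
      (6 / π) * (∑ n, φ n x ^ 2 - π / 12 * V x) ^ 2 := by
      field_simp
      ring
    have h2 : 0 ≤ (6 / π) * (∑ n, φ n x ^ 2 - π / 12 * V x) ^ 2 := by positivity
    linarith
  rw [integral_add (int_rect α _ (by fun_prop)) (int_rect α _ (by fun_prop)),
    integral_const_mul] at hAG
  change ∑ n, lam n ≤ (π / 24) * ∫ x in rectT α, V x ^ 2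
  linarith
end

section
/- Let 0 < α ≤ 1 and consider the torus T²_α = (0, 2π/α) × (0, 2π). Let φ_1, …, φ_N : ℝ² → ℝ be C¹ functions, periodic with period 2π/α in x_1 and period 2π in x_2, orthonormal in L²(T²_α), and satisfying ∫_0^{2π} φ_j(x_1, t) dt = 0 for every x_1 and every j. Then ρ(x) := ∑_{j=1}^N φ_j(x)² satisfies ∫_{T²_α} ρ(x)² dx ≤ (π/6) ∑_{j=1}^N ∫_{T²_α} |∇φ_j(x)|² dx. -/
open Real MeasureTheory

/-- Partial derivative with respect to the first variable. -/
noncomputable def pd1 (f : ℝ × ℝ → ℝ) (x : ℝ × ℝ) : ℝ :=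
  deriv (fun s => f (s, x.2)) x.1

/-- Partial derivative with respect to the second variable. -/
noncomputable def pd2 (f : ℝ × ℝ → ℝ) (x : ℝ × ℝ) : ℝ :=
  deriv (fun t => f (x.1, t)) x.2


lemma LTsq (y t : ℝ) (hy : 0 ≤ y) (ht : 0 < t) : 2 * √y ≤ y / t + t := by
  have h := Real.sq_sqrt hy
  have : y / t + t - 2 * √y = (√y - t)^2 / t := by
    field_simp
    nlinarith
  have h2 : 0 ≤ (√y - t)^2 / t := by positivity
  linarith

lemma LTsum (K : ℕ) (E R : ℝ) (hR : 4 ≤ R) (hE : E = R ^ 2) (hK : (K : ℝ) ≤ R) :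
    ∑ n ∈ Finset.Icc 1 K, (2 * √(E - (n:ℝ) ^ 2) + 1) ≤
      K * (E / (4/5*R) + 4/5*R + 1) - (K * (K+1) * (2*K+1) / 6) / (4/5*R) := by
  have : ∀ L : ℕ, L ≤ K → ∑ n ∈ Finset.Icc 1 L, (2 * √(E - (n:ℝ) ^ 2) + 1) ≤
      L * (E / (4/5*R) + 4/5*R + 1) - (L * (L+1) * (2*L+1) / 6) / (4/5*R) := by
    intro L hL
    induction L with
    | zero => simp
    | succ L ih =>
      rw [Finset.sum_Icc_succ_top (by omega)]
      have h1 := ih (by omega)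
      have hLK : ((L + 1 : ℕ) : ℝ) ≤ R := le_trans (by exact_mod_cast hL) hK
      have h2 := LTsq (E - ((L+1 : ℕ):ℝ)^2) (4/5*R) (by
        rw [hE]; have : (0:ℝ) ≤ ((L+1 : ℕ):ℝ) := by positivity
        nlinarith) (by linarith)
      refine (add_le_add h1 (add_le_add_left h2 1)).trans (le_of_eq ?_)
      push_cast
      field_simp
      ring
  exact this K le_rfl

lemma LThalf (E : ℝ) (hE : 0 ≤ E) :
    ∑ n ∈ Finset.Icc 1 ⌊√E⌋₊, (2 * √(E - (n:ℝ) ^ 2) + 1) ≤ 1.72 * E := by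
  have hK : ((⌊√E⌋₊ : ℕ) : ℝ) ≤ √E := Nat.floor_le (sqrt_nonneg _)
  have hs := Real.sq_sqrt hE
  generalize ⌊√E⌋₊ = K at *
  have hKE : (K:ℝ)^2 ≤ E := by rw [← hs]; gcongr
  rcases Nat.lt_or_ge K 4 with h | h
  · interval_cases K
    · simp; linarith
    · simp at hKE ⊢
      have := LTsq (E-1) 0.6 (by linarith) (by norm_num)
      norm_num at this
      linarith
    · norm_num [Finset.sum_Icc_succ_top] at hKE ⊢
      have := LTsq (E-1) 2 (by linarith) (by norm_num)
      have := LTsq (E-4) 1 (by linarith) (by norm_num)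
      linarith
    · norm_num [Finset.sum_Icc_succ_top] at hKE ⊢
      have := LTsq (E-1) 3 (by linarith) (by norm_num)
      have := LTsq (E-4) 2.4 (by linarith) (by norm_num)
      have := LTsq (E-9) 1.2 (by linarith) (by norm_num)
      norm_num at *
      linarith
  · have hK4 : (4:ℝ) ≤ K := by exact_mod_cast h
    refine (LTsum K E (√E) (by linarith) hs.symm hK).trans ?_
    generalize √E = R at *
    subst hs
    generalize (K:ℝ) = k at *
    obtain ⟨d, rfl⟩ : ∃ d, R = k + d := ⟨R - k, by ring⟩
    have hd : 0 ≤ d := by linarith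
    have hpos : 0 < k + d := by linarith
    rw [show k * ((k+d)^2 / (4/5*(k+d)) + 4/5*(k+d) + 1) - (k * (k+1) * (2*k+1) / 6) / (4/5*(k+d)) = (k * (5/4*(k+d)^2 + 4/5*(k+d)^2 + (k+d)) - 5/4*(k * (k+1) * (2*k+1) / 6))/(k+d) by field_simp]
    rw [div_le_iff₀ hpos]
    obtain ⟨q, rfl⟩ : ∃ q, k = q + 4 := ⟨k - 4, by ring⟩
    have hq : 0 ≤ q := by linarith
    rw [← sub_nonneg]
    ring_nf
    positivity

lemma LTcountpos (α E : ℝ) (hα0 : 0 < α) (hα1 : α ≤ 1) (hE : 0 ≤ E) (S : Finset (ℤ × ℤ))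
    (hS : ∀ k ∈ S, 0 < k.2 ∧ (α * k.1) ^ 2 + (k.2:ℝ) ^ 2 < E) :
    α * S.card ≤ 1.72 * E := by
  classical
  have hmap : ∀ k ∈ S, k.2.toNat ∈ Finset.Icc 1 ⌊√E⌋₊ := by
    intro k hk
    obtain ⟨h1, h2⟩ := hS k hk
    rw [Finset.mem_Icc]
    refine ⟨by omega, Nat.le_floor ?_⟩
    apply Real.le_sqrt_of_sq_le
    have : ((k.2.toNat : ℕ) : ℝ) = (k.2 : ℝ) := by
      exact_mod_cast congrArg (Int.cast : ℤ → ℝ) (Int.toNat_of_nonneg h1.le)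
    rw [this]
    nlinarith [sq_nonneg (α * k.1)]
  rw [Finset.card_eq_sum_card_fiberwise hmap]
  push_cast
  rw [Finset.mul_sum]
  refine (Finset.sum_le_sum ?_).trans (LThalf E hE)
  intro n hn
  set s := √(E - (n:ℝ)^2) with hs
  have hs0 : 0 ≤ s := sqrt_nonneg _
  have hsub : (S.filter (fun k => k.2.toNat = n)).card ≤ (Finset.Icc (-⌊s/α⌋) ⌊s/α⌋).card := by
    apply Finset.card_le_card_of_injOn (fun k => k.1)
    · intro k hk
      simp only [Finset.coe_filter, Set.mem_ofPred_eq] at hk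
      obtain ⟨h1, h2⟩ := hS k hk.1
      have hkn : (k.2 : ℝ) = n := by
        rw [← hk.2]
        exact_mod_cast congrArg (Int.cast : ℤ → ℝ) (Int.toNat_of_nonneg h1.le).symm
      rw [hkn] at h2
      have habs : |α * k.1| ≤ s := Real.abs_le_sqrt (by linarith)
      rw [abs_le] at habs
      simp only [Finset.coe_Icc, Set.mem_Icc]
      constructor
      · rw [neg_le, Int.le_floor, le_div_iff₀ hα0]; push_cast; linarith
      · rw [Int.le_floor, le_div_iff₀ hα0]; linarith
    · intro k hk l hl hkl
      simp only [Finset.coe_filter, Set.mem_ofPred_eq] at hk hl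
      have := (hS k hk.1).1
      have := (hS l hl.1).1
      exact Prod.ext hkl (by omega)
  have hfl : (0:ℤ) ≤ ⌊s/α⌋ := Int.floor_nonneg.2 (by positivity)
  have hcard : ((Finset.Icc (-⌊s/α⌋) ⌊s/α⌋).card : ℝ) = 2 * (⌊s/α⌋ : ℝ) + 1 := by
    rw [Int.card_Icc]
    have : (((⌊s/α⌋ + 1 - -⌊s/α⌋).toNat : ℤ) : ℝ) = ((⌊s/α⌋ + 1 - -⌊s/α⌋ : ℤ) : ℝ) := by
      rw [Int.toNat_of_nonneg (by omega)]
    push_cast at this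
    rw [this]; ring
  have h3 : ((S.filter (fun k => k.2.toNat = n)).card : ℝ) ≤ 2 * (s/α) + 1 := by
    have : ((S.filter (fun k => k.2.toNat = n)).card : ℝ) ≤ _ := Nat.cast_le.2 hsub
    rw [hcard] at this
    linarith [Int.floor_le (s/α)]
  calc α * _ ≤ α * (2 * (s/α) + 1) := by gcongr
    _ = 2 * s + α := by field_simp
    _ ≤ _ := by linarith

lemma LTcount (α E : ℝ) (hα0 : 0 < α) (hα1 : α ≤ 1) (hE : 0 ≤ E) (S : Finset (ℤ × ℤ))
    (hS : ∀ k ∈ S, k.2 ≠ 0 ∧ (α * k.1) ^ 2 + (k.2:ℝ) ^ 2 < E) :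
    S.card / (2 * π / α * (2 * π)) ≤ π / 36 * E := by
  classical
  have h1 := LTcountpos α E hα0 hα1 hE (S.filter (fun k => 0 < k.2)) (by
    intro k hk; rw [Finset.mem_filter] at hk; exact ⟨hk.2, (hS k hk.1).2⟩)
  have h2 := LTcountpos α E hα0 hα1 hE ((S.filter (fun k => ¬ 0 < k.2)).image (fun k => -k)) (by
    intro k hk
    simp only [Finset.mem_image, Finset.mem_filter] at hk
    obtain ⟨l, ⟨hl, hl2⟩, rfl⟩ := hk
    have := hS l hl
    refine ⟨?_, ?_⟩
    · simp; omega
    · simpa using this.2)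
  rw [Finset.card_image_of_injective _ neg_injective] at h2
  have h3 := Finset.card_filter_add_card_filter_not (s := S) (fun k => 0 < k.2)
  have h4 : α * S.card ≤ 3.44 * E := by
    rw [← h3]; push_cast; linarith
  have hpi : (3.44:ℝ) ≤ π^3/9 := by
    have := pi_gt_d4
    have : (3.1415:ℝ)^3 ≤ π^3 := by gcongr
    norm_num at this ⊢; linarith
  have hpi0 := pi_pos
  rw [div_le_iff₀ (by positivity)]
  have : π / 36 * E * (2 * π / α * (2 * π)) = (π^3/9 * E)/α := by field_simp; ring
  rw [this, le_div_iff₀ hα0]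
  nlinarith

noncomputable def LTee (ω : ℝ) (m : ℤ) (x : ℝ) : ℂ := Complex.exp (((ω * m * x : ℝ) : ℂ) * Complex.I)

lemma LTee_cont (ω : ℝ) (m : ℤ) : Continuous (LTee ω m) := by
  unfold LTee; fun_prop

lemma LTee_norm (ω : ℝ) (m : ℤ) (x : ℝ) : ‖LTee ω m x‖ = 1 := Complex.norm_exp_ofReal_mul_I _

lemma LTee_conj (ω : ℝ) (m : ℤ) (x : ℝ) : (starRingEnd ℂ) (LTee ω m x) = LTee ω (-m) x := by
  unfold LTee
  rw [← Complex.exp_conj]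
  congr 1
  simp

lemma LTee_mul (ω : ℝ) (m n : ℤ) (x : ℝ) : LTee ω m x * LTee ω n x = LTee ω (m + n) x := by
  unfold LTee
  rw [← Complex.exp_add]
  congr 1
  push_cast; ring

lemma LTee_zero (ω x : ℝ) : LTee ω 0 x = 1 := by simp [LTee]

lemma LTee_per (ω T : ℝ) (h : ω * T = 2 * π) (m : ℤ) : LTee ω m T = LTee ω m 0 := by
  unfold LTee
  rw [show ω * m * T = m * (2 * π) by rw [← h]; ring]
  have := Complex.exp_int_mul_two_pi_mul_I m
  rw [show (((m * (2 * π) : ℝ) : ℂ) * Complex.I) = m * (2 * π * Complex.I) by push_cast; ring, this]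
  simp

lemma LTee_deriv (ω : ℝ) (m : ℤ) (x : ℝ) :
    HasDerivAt (LTee ω m) (Complex.I * ω * m * LTee ω m x) x := by
  unfold LTee
  have h1 : HasDerivAt (fun y : ℝ => ω * m * y) (ω * m) x := by
    simpa using (hasDerivAt_id x).const_mul (ω * m)
  have := (h1.ofReal_comp.mul_const Complex.I).cexp
  convert this using 1
  push_cast; ring

/-- integration by parts -/
lemma LTparts (ω T : ℝ) (h : ω * T = 2 * π) (m : ℤ) (f f' : ℝ → ℂ)
    (hf : ∀ x, HasDerivAt f (f' x) x) (hf' : Continuous f') (hp : f T = f 0) :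
    ∫ x in (0:ℝ)..T, (starRingEnd ℂ) (LTee ω m x) * f' x =
      Complex.I * ω * m * ∫ x in (0:ℝ)..T, (starRingEnd ℂ) (LTee ω m x) * f x := by
  simp_rw [LTee_conj]
  rw [intervalIntegral.integral_mul_deriv_eq_deriv_mul (fun x _ => LTee_deriv ω (-m) x) (fun x _ => hf x)
    (by apply Continuous.intervalIntegrable; have := LTee_cont ω (-m); fun_prop) (hf'.intervalIntegrable _ _)]
  rw [hp, LTee_per ω T h, sub_self, zero_sub, ← intervalIntegral.integral_neg,
    ← intervalIntegral.integral_const_mul]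
  congr 1; ext x; push_cast; ring

lemma LTorth1 (ω T : ℝ) (h : ω * T = 2 * π) (hω : 0 < ω) (m n : ℤ) :
    ∫ x in (0:ℝ)..T, (starRingEnd ℂ) (LTee ω m x) * LTee ω n x = if n = m then (T:ℂ) else 0 := by
  simp_rw [LTee_conj, LTee_mul]
  split_ifs with hnm
  · subst hnm; simp [LTee_zero]
  · have := LTparts ω T h (m - n) (fun _ => 1) (fun _ => 0) (fun x => hasDerivAt_const x 1)
      continuous_const rfl
    simp only [mul_zero, mul_one, LTee_conj, intervalIntegral.integral_zero] at this
    have h2 := (mul_eq_zero.1 this.symm)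
    rw [show -m + n = -(m - n) by ring]
    refine h2.resolve_left ?_
    have : (m - n : ℤ) ≠ 0 := by omega
    simp only [mul_eq_zero, Complex.I_ne_zero, Complex.ofReal_eq_zero, hω.ne', Int.cast_eq_zero, this, or_self, not_false_eq_true]

lemma LTmemLp1 {f : ℝ → ℂ} (hf : Continuous f) (T : ℝ) : MemLp f 2 (volume.restrict (Set.Ioc 0 T)) := by
  obtain ⟨C, hC⟩ := (isCompact_Icc (a := (0:ℝ)) (b := T)).exists_bound_of_continuousOn hf.continuousOn
  refine MemLp.of_bound hf.aestronglyMeasurable C ?_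
  filter_upwards [ae_restrict_mem measurableSet_Ioc] with x hx using hC x ⟨hx.1.le, hx.2⟩

lemma LTpars1 (ω T : ℝ) (h : ω * T = 2 * π) (hT : 0 < T) (f : ℝ → ℂ) (hf : Continuous f) :
    ∑' m : ℤ, ‖∫ x in (0:ℝ)..T, (starRingEnd ℂ) (LTee ω m x) * f x‖ₑ ^ 2 =
      ENNReal.ofReal T * ∫⁻ x in Set.Ioc 0 T, ‖f x‖ₑ ^ 2 := by
  have hs := hasSum_sq_fourierCoeffOn hT (LTmemLp1 hf T)
  have hc : ∀ m : ℤ, ∫ x in (0:ℝ)..T, (starRingEnd ℂ) (LTee ω m x) * f x = T * fourierCoeffOn hT f m := by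
    intro m
    rw [fourierCoeffOn_eq_integral]
    have : (T:ℂ) ≠ 0 := by exact_mod_cast hT.ne'
    rw [sub_zero, Complex.real_smul, ← mul_assoc]
    have h1 : (T:ℂ) * ((1 / T : ℝ) : ℂ) = 1 := by push_cast; field_simp
    rw [h1, one_mul]
    congr 1; ext x
    rw [LTee_conj, smul_eq_mul, fourier_coe_apply, LTee]
    congr 2
    have h3 : (ω:ℂ) * T = 2 * π := by exact_mod_cast h
    push_cast
    field_simp
    linear_combination (m * x : ℂ) * (-h3)
  simp_rw [hc]
  have h2 : ∀ m : ℤ, ‖(T:ℂ) * fourierCoeffOn hT f m‖ₑ ^ 2 = ENNReal.ofReal (T^2 * ‖fourierCoeffOn hT f m‖^2) := by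
    intro m
    rw [← ofReal_norm, ← ENNReal.ofReal_pow (norm_nonneg _), norm_mul, mul_pow]
    congr 2
    simp
  simp_rw [h2]
  have hs2 := hs.mul_left (T^2)
  rw [← ENNReal.ofReal_tsum_of_nonneg (fun m => by positivity) hs2.summable, hs2.tsum_eq]
  have h4 : ∫⁻ x in Set.Ioc 0 T, ‖f x‖ₑ ^ 2 = ENNReal.ofReal (∫ x in (0:ℝ)..T, ‖f x‖^2) := by
    rw [intervalIntegral.integral_of_le hT.le, ofReal_integral_eq_lintegral_ofReal]
    · congr 1; ext x; rw [← ofReal_norm, ← ENNReal.ofReal_pow (norm_nonneg _)]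
    · exact (LTmemLp1 hf T).integrable_norm_pow (by norm_num)
    · exact Filter.Eventually.of_forall fun x => by positivity
  rw [h4, ← ENNReal.ofReal_mul hT.le]
  congr 1
  simp only [sub_zero, smul_eq_mul]
  field_simp

noncomputable def LTe2 (α : ℝ) (k : ℤ × ℤ) (z : ℝ × ℝ) : ℂ := LTee α k.1 z.1 * LTee 1 k.2 z.2

lemma LTe2_cont (α : ℝ) (k : ℤ × ℤ) : Continuous (LTe2 α k) := by
  have h1 := LTee_cont α k.1
  have h2 := LTee_cont 1 k.2
  unfold LTe2; fun_prop

lemma LTe2_norm (α : ℝ) (k : ℤ × ℤ) (z : ℝ × ℝ) : ‖LTe2 α k z‖ = 1 := by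
  rw [LTe2, norm_mul, LTee_norm, LTee_norm, one_mul]

def LTD (A : ℝ) : Set (ℝ × ℝ) := Set.Ioc (0:ℝ) A ×ˢ Set.Ioc (0:ℝ) (2 * π)

lemma LTD_meas (A : ℝ) : MeasurableSet (LTD A) := measurableSet_Ioc.prod measurableSet_Ioc

lemma LTD_restrict (A : ℝ) : (volume.restrict (LTD A) : Measure (ℝ × ℝ)) =
    (volume.restrict (Set.Ioc (0:ℝ) A)).prod (volume.restrict (Set.Ioc (0:ℝ) (2*π))) := by
  rw [Measure.prod_restrict]; rfl

lemma LTint {E : Type*} [NormedAddCommGroup E] (A : ℝ) {f : ℝ × ℝ → E} (hf : Continuous f) :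
    IntegrableOn f (LTD A) := by
  refine IntegrableOn.mono_set (hf.continuousOn.integrableOn_compact
    ((isCompact_Icc (a := (0:ℝ)) (b := A)).prod (isCompact_Icc (a := (0:ℝ)) (b := 2*π)))) ?_
  exact Set.prod_mono Set.Ioc_subset_Icc_self Set.Ioc_subset_Icc_self

lemma LTmemLp (A : ℝ) {f : ℝ × ℝ → ℂ} (hf : Continuous f) :
    MemLp f 2 (volume.restrict (LTD A)) := by
  rw [memLp_two_iff_integrable_sq_norm hf.aestronglyMeasurable]
  exact LTint A (by fun_prop)

noncomputable def LTcf (α A : ℝ) (f : ℝ × ℝ → ℂ) (k : ℤ × ℤ) : ℂ :=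
  ∫ z in LTD A, (starRingEnd ℂ) (LTe2 α k z) * f z

lemma LTcf_iter (α A : ℝ) (hA : 0 < A) (f : ℝ × ℝ → ℂ) (hf : Continuous f) (k : ℤ × ℤ) :
    LTcf α A f k = ∫ x in (0:ℝ)..A, (starRingEnd ℂ) (LTee α k.1 x) *
      ∫ t in (0:ℝ)..(2*π), (starRingEnd ℂ) (LTee 1 k.2 t) * f (x, t) := by
  have hc := LTe2_cont α k
  have hi := LTint A (f := fun z => (starRingEnd ℂ) (LTe2 α k z) * f z) (by fun_prop)
  rw [IntegrableOn, LTD_restrict] at hi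
  rw [LTcf, LTD_restrict, integral_prod _ hi, intervalIntegral.integral_of_le hA.le]
  congr 1; ext x
  rw [intervalIntegral.integral_of_le (by positivity), ← integral_const_mul]
  congr 1; ext t
  simp [LTe2, mul_assoc]

lemma LTcf_iter' (α A : ℝ) (hA : 0 < A) (f : ℝ × ℝ → ℂ) (hf : Continuous f) (k : ℤ × ℤ) :
    LTcf α A f k = ∫ t in (0:ℝ)..(2*π), (starRingEnd ℂ) (LTee 1 k.2 t) *
      ∫ x in (0:ℝ)..A, (starRingEnd ℂ) (LTee α k.1 x) * f (x, t) := by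
  have hc := LTe2_cont α k
  have hi := LTint A (f := fun z => (starRingEnd ℂ) (LTe2 α k z) * f z) (by fun_prop)
  rw [IntegrableOn, LTD_restrict] at hi
  rw [LTcf, LTD_restrict, integral_prod_symm _ hi, intervalIntegral.integral_of_le (by positivity)]
  congr 1; ext x
  rw [intervalIntegral.integral_of_le hA.le, ← integral_const_mul]
  congr 1; ext t
  simp [LTe2]; ring

lemma LTpars (α A : ℝ) (hA : 0 < A) (h : α * A = 2 * π) (f : ℝ × ℝ → ℂ) (hf : Continuous f) :
    ∑' k : ℤ × ℤ, ‖LTcf α A f k‖ₑ ^ 2 =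
      ENNReal.ofReal (A * (2 * π)) * ∫⁻ z in LTD A, ‖f z‖ₑ ^ 2 := by
  have hB : 0 < 2 * π := by positivity
  have hcont : ∀ n : ℤ, Continuous
      (fun x => ∫ t in (0:ℝ)..(2*π), (starRingEnd ℂ) (LTee 1 n t) * f (x, t)) := by
    intro n
    apply intervalIntegral.continuous_parametric_intervalIntegral_of_continuous'
    have := LTee_cont 1 n
    fun_prop
  simp_rw [LTcf_iter α A hA f hf]
  rw [ENNReal.tsum_prod', ENNReal.tsum_comm]
  simp_rw [fun n => LTpars1 α A h hA _ (hcont n)]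
  rw [ENNReal.tsum_mul_left, ENNReal.ofReal_mul hA.le, mul_assoc]
  congr 1
  rw [← lintegral_tsum]
  · have : ∀ x, Continuous (fun t => f (x, t)) := fun x => by fun_prop
    simp_rw [fun x => LTpars1 1 (2*π) (by ring) hB _ (this x)]
    rw [LTD_restrict, lintegral_prod, lintegral_const_mul' _ _ ENNReal.ofReal_ne_top]
    · exact (by fun_prop : Continuous fun z => ‖f z‖ₑ ^ 2).measurable.aemeasurable
  · intro n
    have := hcont n
    exact (by fun_prop : Continuous fun x => ‖∫ t in (0:ℝ)..(2*π), (starRingEnd ℂ) (LTee 1 n t) * f (x, t)‖ₑ ^ 2).measurable.aemeasurable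

lemma LTcf_d1 (α A : ℝ) (hA : 0 < A) (h : α * A = 2 * π) (f f' : ℝ × ℝ → ℂ) (hf : Continuous f)
    (hf' : Continuous f') (hd : ∀ x t, HasDerivAt (fun s => f (s, t)) (f' (x, t)) x)
    (hp : ∀ t, f (A, t) = f (0, t)) (k : ℤ × ℤ) :
    LTcf α A f' k = Complex.I * α * k.1 * LTcf α A f k := by
  rw [LTcf_iter' α A hA f' hf', LTcf_iter' α A hA f hf, ← intervalIntegral.integral_const_mul]
  congr 1; ext t
  rw [LTparts α A h k.1 (fun s => f (s, t)) (fun s => f' (s, t)) (fun x => hd x t) (by fun_prop) (hp t)]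
  ring

lemma LTcf_d2 (α A : ℝ) (hA : 0 < A) (f f' : ℝ × ℝ → ℂ) (hf : Continuous f)
    (hf' : Continuous f') (hd : ∀ x t, HasDerivAt (fun s => f (x, s)) (f' (x, t)) t)
    (hp : ∀ x, f (x, 2 * π) = f (x, 0)) (k : ℤ × ℤ) :
    LTcf α A f' k = Complex.I * k.2 * LTcf α A f k := by
  rw [LTcf_iter α A hA f' hf', LTcf_iter α A hA f hf, ← intervalIntegral.integral_const_mul]
  congr 1; ext t
  rw [LTparts 1 (2*π) (by ring) k.2 (fun s => f (t, s)) (fun s => f' (t, s)) (fun x => hd t x) (by fun_prop) (hp t)]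
  push_cast
  ring

lemma LTcf_e2 (α A : ℝ) (hA : 0 < A) (hα : 0 < α) (h : α * A = 2 * π) (k l : ℤ × ℤ) :
    LTcf α A (LTe2 α l) k = if l = k then ((A * (2 * π) : ℝ) : ℂ) else 0 := by
  rw [LTcf_iter α A hA _ (LTe2_cont α l)]
  have : ∀ x, ∫ t in (0:ℝ)..(2*π), (starRingEnd ℂ) (LTee 1 k.2 t) * LTe2 α l (x, t) =
      LTee α l.1 x * if l.2 = k.2 then ((2 * π : ℝ) : ℂ) else 0 := by
    intro x
    rw [← LTorth1 1 (2*π) (by ring) one_pos, ← intervalIntegral.integral_const_mul]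
    congr 1; ext t; simp [LTe2]; ring
  simp_rw [this, ← mul_assoc]
  rw [intervalIntegral.integral_mul_const, LTorth1 α A h hα]
  by_cases h1 : l.1 = k.1 <;> by_cases h2 : l.2 = k.2 <;> simp [h1, h2, Prod.ext_iff, mul_assoc]

lemma LTcf_sum (α A : ℝ) (hA : 0 < A) (hα : 0 < α) (h : α * A = 2 * π) (S : Finset (ℤ × ℤ))
    (c : ℤ × ℤ → ℂ) (k : ℤ × ℤ) :
    LTcf α A (fun z => ∑ l ∈ S, c l * LTe2 α l z) k =
      if k ∈ S then ((A * (2 * π) : ℝ) : ℂ) * c k else 0 := by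
  have : LTcf α A (fun z => ∑ l ∈ S, c l * LTe2 α l z) k = ∑ l ∈ S, c l * LTcf α A (LTe2 α l) k := by
    unfold LTcf
    simp_rw [Finset.mul_sum]
    rw [integral_finsetSum]
    · refine Finset.sum_congr rfl fun l _ => ?_
      rw [← integral_const_mul]
      congr 1; ext z; ring
    · intro l _
      have h1 := LTe2_cont α k
      have h2 := LTe2_cont α l
      exact LTint A (by fun_prop)
  rw [this]
  simp_rw [LTcf_e2 α A hA hα h]
  simp [mul_comm]

lemma LTcf_sub (α A : ℝ) (f g : ℝ × ℝ → ℂ) (hf : Continuous f) (hg : Continuous g) (k : ℤ × ℤ) :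
    LTcf α A (fun z => f z - g z) k = LTcf α A f k - LTcf α A g k := by
  unfold LTcf
  have h1 := LTe2_cont α k
  rw [← integral_sub (LTint A (by fun_prop)) (LTint A (by fun_prop))]
  congr 1; ext z; ring

/-- Low frequency part. -/
noncomputable def LTP (α A : ℝ) (S : Finset (ℤ × ℤ)) (f : ℝ × ℝ → ℂ) (z : ℝ × ℝ) : ℂ :=
  ∑ l ∈ S, (LTcf α A f l / ((A * (2 * π) : ℝ) : ℂ)) * LTe2 α l z

lemma LTsum_cont (α : ℝ) (S : Finset (ℤ × ℤ)) (c : ℤ × ℤ → ℂ) :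
    Continuous (fun z => ∑ l ∈ S, c l * LTe2 α l z) :=
  continuous_finsetSum _ fun l _ => continuous_const.mul (LTe2_cont α l)

lemma LTP_cont (α A : ℝ) (S : Finset (ℤ × ℤ)) (f : ℝ × ℝ → ℂ) : Continuous (LTP α A S f) :=
  LTsum_cont α S _

lemma LTresid (α A : ℝ) (hA : 0 < A) (hα : 0 < α) (h : α * A = 2 * π) (S : Finset (ℤ × ℤ))
    (f : ℝ × ℝ → ℂ) (hf : Continuous f) :
    ENNReal.ofReal (A * (2 * π)) * ∫⁻ z in LTD A, ‖f z - LTP α A S f z‖ₑ ^ 2 =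
     ∑' k : ℤ × ℤ, (if k ∈ S then 0 else ‖LTcf α A f k‖ₑ ^ 2) := by
  have hP := LTP_cont α A S f
  rw [← LTpars α A hA h (fun z => f z - LTP α A S f z) (by fun_prop)]
  congr 1; ext k
  rw [LTcf_sub α A f _ hf hP]
  unfold LTP
  rw [LTcf_sum α A hA hα h]
  have hne : ((A * (2 * π) : ℝ) : ℂ) ≠ 0 := by
    have : A * (2 * π) ≠ 0 := by positivity
    exact_mod_cast this
  split_ifs
  · rw [mul_div_cancel₀ _ hne]; simp
  · simp

lemma LTbessel (A : ℝ) (N : ℕ) (φ : Fin N → ℝ × ℝ → ℝ) (hc : ∀ j, Continuous (φ j))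
    (hortho : ∀ i j, (∫ x in LTD A, φ i x * φ j x) = if i = j then 1 else 0)
    (w : ℝ × ℝ → ℂ) (hw : Continuous w) :
    ∑ j, ‖∫ z in LTD A, (starRingEnd ℂ) (w z) * (φ j z : ℂ)‖ ^ 2 ≤ ∫ z in LTD A, ‖w z‖ ^ 2 := by
  have hcc : ∀ j, Continuous (fun z => (φ j z : ℂ)) := fun j => by have := hc j; fun_prop
  have hinner : ∀ (f g : ℝ × ℝ → ℂ) (hf : Continuous f) (hg : Continuous g),
      inner ℂ ((LTmemLp A hf).toLp f) ((LTmemLp A hg).toLp g) =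
        ∫ z in LTD A, (starRingEnd ℂ) (f z) * g z := by
    intro f g hf hg
    rw [L2.inner_def]
    apply integral_congr_ae
    filter_upwards [(LTmemLp A hf).coeFn_toLp, (LTmemLp A hg).coeFn_toLp] with z h1 h2
    rw [h1, h2, RCLike.inner_apply']
  let v : Fin N → Lp ℂ 2 (volume.restrict (LTD A)) := fun j => (LTmemLp A (hcc j)).toLp _
  have hv : Orthonormal ℂ v := by
    rw [orthonormal_iff_ite]
    intro i j
    rw [hinner _ _ (hcc i) (hcc j)]
    have h1 := hortho i j
    have h2 : ∫ z in LTD A, (starRingEnd ℂ) (φ i z : ℂ) * (φ j z : ℂ) =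
        ((∫ x in LTD A, φ i x * φ j x : ℝ) : ℂ) := by
      rw [← integral_complex_ofReal]; congr 1; ext z; simp
    rw [h2, h1]; split_ifs <;> simp
  have hb := hv.sum_inner_products_le ((LTmemLp A hw).toLp w) (s := Finset.univ)
  have hn : ‖(LTmemLp A hw).toLp w‖ ^ 2 = ∫ z in LTD A, ‖w z‖ ^ 2 := by
    have h1 := inner_self_eq_norm_sq_to_K (𝕜 := ℂ) ((LTmemLp A hw).toLp w)
    rw [hinner _ _ hw hw] at h1
    have h2 : ∫ z in LTD A, (starRingEnd ℂ) (w z) * w z = ((∫ z in LTD A, ‖w z‖ ^ 2 : ℝ) : ℂ) := by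
      rw [← integral_complex_ofReal]; congr 1; ext z
      rw [mul_comm, Complex.mul_conj, Complex.normSq_eq_norm_sq]
    rw [h2] at h1
    apply Complex.ofReal_injective
    rw [h1]; push_cast; rfl
  rw [hn] at hb
  refine le_trans (le_of_eq ?_) hb
  refine Finset.sum_congr rfl fun j _ => ?_
  rw [← hinner w _ hw (hcc j), norm_inner_symm]

lemma LTlow (α A : ℝ) (hA : 0 < A) (hα : 0 < α) (h : α * A = 2 * π) (S : Finset (ℤ × ℤ))
    (N : ℕ) (φ : Fin N → ℝ × ℝ → ℝ) (hc : ∀ j, Continuous (φ j))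
    (hortho : ∀ i j, (∫ x in LTD A, φ i x * φ j x) = if i = j then 1 else 0) (x : ℝ × ℝ) :
    ∑ j, ‖LTP α A S (fun z => (φ j z : ℂ)) x‖ ^ 2 ≤ S.card / (A * (2 * π)) := by
  set V : ℝ := A * (2 * π) with hV
  have hV0 : 0 < V := by positivity
  have hVc : (V:ℂ) ≠ 0 := by exact_mod_cast hV0.ne'
  set c : ℤ × ℤ → ℂ := fun l => (starRingEnd ℂ) (LTe2 α l x) / V with hcdef
  have hw := LTsum_cont α S c
  have hb := LTbessel A N φ hc hortho _ hw
  have h1 : ∀ j, LTP α A S (fun z => (φ j z : ℂ)) x =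
      ∫ z in LTD A, (starRingEnd ℂ) (∑ l ∈ S, c l * LTe2 α l z) * (φ j z : ℂ) := by
    intro j
    simp_rw [map_sum, Finset.sum_mul]
    rw [integral_finsetSum]
    · unfold LTP LTcf
      refine Finset.sum_congr rfl fun l _ => ?_
      rw [div_mul_eq_mul_div, mul_div_assoc, mul_comm, ← integral_const_mul]
      congr 1; ext z
      rw [← hV]; simp [hcdef]; ring
    · intro l _
      have h1 := LTe2_cont α l
      have h2 := hc j
      exact LTint A (by fun_prop)
  simp_rw [h1]
  refine hb.trans (le_of_eq ?_)
  have hp := LTpars α A hA h _ hw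
  simp_rw [LTcf_sum α A hA hα h] at hp
  rw [← hV] at hp
  have h2 : ∀ k, ‖(if k ∈ S then (V:ℂ) * c k else 0)‖ₑ ^ 2 = if k ∈ S then (1:ENNReal) else 0 := by
    intro k
    split_ifs
    · simp only [hcdef]
      rw [mul_div_cancel₀ _ hVc, ← ofReal_norm, RCLike.norm_conj, LTe2_norm]; simp
    · simp
  simp_rw [h2] at hp
  have h3 : ∑' k, (if k ∈ S then (1:ENNReal) else 0) = S.card := by
    rw [tsum_eq_sum (s := S) (fun k hk => by simp [hk])]
    simp
  have h4 : ∫⁻ z in LTD A, ‖∑ l ∈ S, c l * LTe2 α l z‖ₑ ^ 2 =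
      ENNReal.ofReal (∫ z in LTD A, ‖∑ l ∈ S, c l * LTe2 α l z‖ ^ 2) := by
    rw [ofReal_integral_eq_lintegral_ofReal]
    · congr 1; ext x; rw [← ofReal_norm, ← ENNReal.ofReal_pow (norm_nonneg _)]
    · exact LTint A (by fun_prop)
    · exact Filter.Eventually.of_forall fun x => by positivity
  rw [h3, h4, ← ENNReal.ofReal_mul hV0.le] at hp
  have h5 := congrArg ENNReal.toReal hp
  rw [ENNReal.toReal_ofReal (by positivity)] at h5
  simp at h5
  rw [h5]; field_simp

lemma LTpd1 (f : ℝ × ℝ → ℝ) (hf : ContDiff ℝ 1 f) :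
    Continuous (pd1 f) ∧ ∀ x t, HasDerivAt (fun s => (f (s, t) : ℂ)) (pd1 f (x, t) : ℂ) x := by
  have h : ∀ x t, HasDerivAt (fun s => f (s, t)) (fderiv ℝ f (x, t) (1, 0)) x := by
    intro x t
    have h1 : HasFDerivAt f (fderiv ℝ f (x, t)) (x, t) :=
      (hf.differentiable one_ne_zero (x, t)).hasFDerivAt
    exact h1.comp_hasDerivAt x ((hasDerivAt_id x).prodMk (hasDerivAt_const x t))
  have h2 : pd1 f = fun z => fderiv ℝ f z (1, 0) := by
    ext z; exact (h z.1 z.2).deriv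
  refine ⟨?_, fun x t => ?_⟩
  · rw [h2]; exact (hf.continuous_fderiv one_ne_zero).clm_apply continuous_const
  · rw [h2]; exact (h x t).ofReal_comp

lemma LTpd2 (f : ℝ × ℝ → ℝ) (hf : ContDiff ℝ 1 f) :
    Continuous (pd2 f) ∧ ∀ x t, HasDerivAt (fun s => (f (x, s) : ℂ)) (pd2 f (x, t) : ℂ) t := by
  have h : ∀ x t, HasDerivAt (fun s => f (x, s)) (fderiv ℝ f (x, t) (0, 1)) t := by
    intro x t
    have h1 : HasFDerivAt f (fderiv ℝ f (x, t)) (x, t) :=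
      (hf.differentiable one_ne_zero (x, t)).hasFDerivAt
    exact h1.comp_hasDerivAt t ((hasDerivAt_const t x).prodMk (hasDerivAt_id t))
  have h2 : pd2 f = fun z => fderiv ℝ f z (0, 1) := by
    ext z; exact (h z.1 z.2).deriv
  refine ⟨?_, fun x t => ?_⟩
  · rw [h2]; exact (hf.continuous_fderiv one_ne_zero).clm_apply continuous_const
  · rw [h2]; exact (h x t).ofReal_comp

lemma LTmink {N : ℕ} (a b : Fin N → ℂ) (r : ℝ) (hb : ∑ j, ‖b j‖ ^ 2 ≤ r) :
    (max 0 (√(∑ j, ‖a j‖ ^ 2) - √r)) ^ 2 ≤ ∑ j, ‖a j - b j‖ ^ 2 := by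
  have h1 : √(∑ j, ‖a j‖ ^ 2) ≤ √(∑ j, ‖a j - b j‖ ^ 2) + √(∑ j, ‖b j‖ ^ 2) := by
    have := norm_add_le (WithLp.toLp 2 (fun j => a j - b j) : EuclideanSpace ℂ (Fin N)) (WithLp.toLp 2 b)
    simpa [EuclideanSpace.norm_eq] using this
  have h2 : √(∑ j, ‖b j‖ ^ 2) ≤ √r := Real.sqrt_le_sqrt hb
  have h3 : max 0 (√(∑ j, ‖a j‖ ^ 2) - √r) ≤ √(∑ j, ‖a j - b j‖ ^ 2) :=
    max_le (sqrt_nonneg _) (by linarith)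
  calc _ ≤ (√(∑ j, ‖a j - b j‖ ^ 2)) ^ 2 := by gcongr
    _ = _ := Real.sq_sqrt (by positivity)

lemma LTenergy (r c : ℝ) (hr : 0 ≤ r) (hc : 0 < c) :
    ENNReal.ofReal (r ^ 2 / (6 * c)) ≤
      ∫⁻ E in Set.Ioi (0:ℝ), ENNReal.ofReal ((max 0 (√r - √(c * E))) ^ 2) := by
  have hM : 0 ≤ r / c := by positivity
  have h1 : ∫ E in (0:ℝ)..(r / c), (√r - √c * √E) ^ 2 = r ^ 2 / (6 * c) := by
    have hpt : ∀ E ∈ Set.uIcc (0:ℝ) (r / c), (√r - √c * √E) ^ 2 = r - 2 * √r * √c * E ^ (1/2 : ℝ) + c * E := by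
      intro E hE
      rw [Set.uIcc_of_le hM] at hE
      have h1 := Real.sq_sqrt hr
      have h2 := Real.sq_sqrt hc.le
      have h3 := Real.sq_sqrt hE.1
      rw [← Real.sqrt_eq_rpow]
      calc _ = √r ^ 2 - 2 * √r * √c * √E + √c ^ 2 * √E ^ 2 := by ring
        _ = _ := by rw [h1, h2, h3]
    rw [intervalIntegral.integral_congr hpt]
    have hi : ∀ a b : ℝ, IntervalIntegrable (fun x : ℝ => x ^ (1/2 : ℝ)) volume a b := fun a b =>
      intervalIntegral.intervalIntegrable_rpow (Or.inl (by norm_num))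
    rw [intervalIntegral.integral_add, intervalIntegral.integral_sub,
      intervalIntegral.integral_const, intervalIntegral.integral_const_mul,
      intervalIntegral.integral_const_mul, integral_rpow (Or.inl (by norm_num)), integral_id]
    · have h3 : (r / c) ^ ((1:ℝ)/2 + 1) = r / c * (√r / √c) := by
        rw [Real.rpow_add_one' hM (by norm_num), ← Real.sqrt_eq_rpow, Real.sqrt_div hr]; ring
      rw [h3, Real.zero_rpow (by norm_num)]
      have h1 := Real.sq_sqrt hr
      have hcs : √c ≠ 0 := (Real.sqrt_pos.2 hc).ne'
      have : 2 * √r * √c * ((r / c * (√r / √c) - 0) / ((1:ℝ) / 2 + 1)) = 4/3 * (√r ^ 2) * (r / c) := by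
        field_simp; ring
      rw [this, h1]
      simp only [smul_eq_mul]
      field_simp; ring
    · simp
    · exact (hi _ _).const_mul _
    · exact (by simp : IntervalIntegrable (fun _ : ℝ => r) volume 0 (r/c)).sub ((hi _ _).const_mul _)
    · exact (continuous_const.mul continuous_id).intervalIntegrable _ _
  rw [← h1, intervalIntegral.integral_of_le hM, ofReal_integral_eq_lintegral_ofReal]
  · calc _ ≤ ∫⁻ E in Set.Ioc (0:ℝ) (r / c), ENNReal.ofReal ((max 0 (√r - √(c * E))) ^ 2) := by
          apply setLIntegral_mono' measurableSet_Ioc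
          intro E hE
          apply le_of_eq
          rw [Real.sqrt_mul hc.le]
          have : √c * √E ≤ √r := by
            rw [← Real.sqrt_mul hc.le]
            apply Real.sqrt_le_sqrt
            have := hE.2
            rw [le_div_iff₀ hc] at this; linarith
          rw [max_eq_right (by linarith)]
      _ ≤ _ := lintegral_mono_set (fun E hE => hE.1)
  · exact ((by fun_prop : Continuous fun E : ℝ => (√r - √c * √E) ^ 2).integrableOn_Icc).mono_set Set.Ioc_subset_Icc_self
  · exact Filter.Eventually.of_forall fun x => by positivity

lemma LTfin (α E : ℝ) (hα : 0 < α) : ∃ S : Finset (ℤ × ℤ),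
    ∀ k : ℤ × ℤ, k ∈ S ↔ (k.2 ≠ 0 ∧ (α * k.1) ^ 2 + (k.2:ℝ) ^ 2 < E) := by
  classical
  refine ⟨((Finset.Icc (-⌊√E/α⌋) ⌊√E/α⌋) ×ˢ (Finset.Icc (-⌊√E⌋) ⌊√E⌋)).filter
    (fun k => k.2 ≠ 0 ∧ (α * k.1) ^ 2 + (k.2:ℝ) ^ 2 < E), fun k => ?_⟩
  simp only [Finset.mem_filter, Finset.mem_product, Finset.mem_Icc, and_iff_right_iff_imp]
  rintro ⟨-, h⟩
  have h1 := abs_le.1 (Real.abs_le_sqrt (show (α * k.1)^2 ≤ E by nlinarith [sq_nonneg (k.2:ℝ)]))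
  have h2 := abs_le.1 (Real.abs_le_sqrt (show (k.2:ℝ)^2 ≤ E by nlinarith [sq_nonneg (α * k.1)]))
  refine ⟨⟨?_, ?_⟩, ?_, ?_⟩
  · rw [neg_le, Int.le_floor, le_div_iff₀ hα]; push_cast; linarith
  · rw [Int.le_floor, le_div_iff₀ hα]; linarith
  · rw [neg_le, Int.le_floor]; push_cast; linarith
  · rw [Int.le_floor]; linarith

lemma LTgrad (α A : ℝ) (hA : 0 < A) (h : α * A = 2 * π) (f : ℝ × ℝ → ℝ)
    (hC1 : ContDiff ℝ 1 f) (hp1 : ∀ t, f (A, t) = f (0, t)) (hp2 : ∀ x, f (x, 2 * π) = f (x, 0)) :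
    ∑' k : ℤ × ℤ, ENNReal.ofReal ((α * k.1) ^ 2 + (k.2:ℝ) ^ 2) * ‖LTcf α A (fun z => (f z : ℂ)) k‖ₑ ^ 2 =
      ENNReal.ofReal (A * (2 * π) * ∫ z in LTD A, (pd1 f z ^ 2 + pd2 f z ^ 2)) := by
  obtain ⟨c1, d1⟩ := LTpd1 f hC1
  obtain ⟨c2, d2⟩ := LTpd2 f hC1
  have hc := hC1.continuous
  have e1 := LTcf_d1 α A hA h (fun z => (f z : ℂ)) (fun z => (pd1 f z : ℂ)) (by fun_prop) (by fun_prop) d1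
    (fun t => by simp [hp1 t])
  have e2 := LTcf_d2 α A hA (fun z => (f z : ℂ)) (fun z => (pd2 f z : ℂ)) (by fun_prop) (by fun_prop) d2
    (fun t => by simp [hp2 t])
  have p1 := LTpars α A hA h (fun z => (pd1 f z : ℂ)) (by fun_prop)
  have p2 := LTpars α A hA h (fun z => (pd2 f z : ℂ)) (by fun_prop)
  simp_rw [e1] at p1
  simp_rw [e2] at p2
  have hterm : ∀ k : ℤ × ℤ, ENNReal.ofReal ((α * k.1) ^ 2 + (k.2:ℝ) ^ 2) * ‖LTcf α A (fun z => (f z : ℂ)) k‖ₑ ^ 2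
      = ‖Complex.I * α * k.1 * LTcf α A (fun z => (f z : ℂ)) k‖ₑ ^ 2 +
        ‖Complex.I * k.2 * LTcf α A (fun z => (f z : ℂ)) k‖ₑ ^ 2 := by
    intro k
    simp only [← ofReal_norm]
    simp only [← ENNReal.ofReal_pow (norm_nonneg _)]
    rw [← ENNReal.ofReal_mul (by positivity), ← ENNReal.ofReal_add (by positivity) (by positivity)]
    congr 1
    simp only [norm_mul, Complex.norm_I, Complex.norm_real, Complex.norm_intCast, Real.norm_eq_abs, mul_pow, sq_abs]
    ring
  simp_rw [hterm]
  rw [ENNReal.tsum_add, p1, p2, ← mul_add, ENNReal.ofReal_mul (show 0 ≤ A * (2 * π) by positivity),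
    ofReal_integral_eq_lintegral_ofReal]
  · congr 1
    rw [← lintegral_add_left]
    · congr 1; ext z
      simp only [← ofReal_norm]
      simp only [← ENNReal.ofReal_pow (norm_nonneg _)]
      rw [← ENNReal.ofReal_add (by positivity) (by positivity)]
      simp
    · exact (by fun_prop : Continuous fun z => ‖(pd1 f z : ℂ)‖ₑ ^ 2).measurable
  · exact LTint A (by fun_prop)
  · exact Filter.Eventually.of_forall fun x => by positivity

lemma LTmain (α A : ℝ) (hα : 0 < α) (hα1 : α ≤ 1) (hA : 0 < A) (h : α * A = 2 * π)
    (N : ℕ) (φ : Fin N → ℝ × ℝ → ℝ)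
    (hC1 : ∀ j, ContDiff ℝ 1 (φ j))
    (hp1 : ∀ j t, φ j (A, t) = φ j (0, t)) (hp2 : ∀ j x, φ j (x, 2 * π) = φ j (x, 0))
    (hmean : ∀ j (x₁ : ℝ), (∫ t in (0:ℝ)..(2 * π), φ j (x₁, t)) = 0)
    (hortho : ∀ i j, (∫ x in LTD A, φ i x * φ j x) = if i = j then 1 else 0) :
    (∫ x in LTD A, (∑ j, φ j x ^ 2) ^ 2) ≤
      (π / 6) * ∑ j, ∫ x in LTD A, (pd1 (φ j) x ^ 2 + pd2 (φ j) x ^ 2) := by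
  have hc : ∀ j, Continuous (φ j) := fun j => (hC1 j).continuous
  have hcc : ∀ j, Continuous (fun z => (φ j z : ℂ)) := fun j => by have := hc j; fun_prop
  set V := A * (2 * π) with hV
  have hV0 : 0 < V := by positivity
  choose S hS using fun E => LTfin α E hα
  set ρ : ℝ × ℝ → ℝ := fun x => ∑ j, φ j x ^ 2 with hρ
  have hρc : Continuous ρ := by fun_prop
  have hρ0 : ∀ x, 0 ≤ ρ x := fun x => by positivity
  set a : Fin N → ℤ × ℤ → ENNReal := fun j k => ‖LTcf α A (fun z => (φ j z : ℂ)) k‖ₑ ^ 2 with ha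
  set lam : ℤ × ℤ → ℝ := fun k => (α * k.1) ^ 2 + (k.2:ℝ) ^ 2 with hlam
  -- zero coefficients
  have hzero : ∀ j k, k.2 = 0 → a j k = 0 := by
    intro j k hk
    have : LTcf α A (fun z => (φ j z : ℂ)) k = 0 := by
      rw [LTcf_iter α A hA _ (hcc j), hk]
      simp [LTee_zero, intervalIntegral.integral_ofReal, hmean]
    simp [ha, this]
  -- pointwise bound
  have hpt : ∀ E, 0 < E → ∀ z, ENNReal.ofReal ((max 0 (√(ρ z) - √(π / 36 * E))) ^ 2) ≤
      ∑ j, ‖(φ j z : ℂ) - LTP α A (S E) (fun z => (φ j z : ℂ)) z‖ₑ ^ 2 := by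
    intro E hE z
    have hcount := LTcount α E hα hα1 hE.le (S E) (fun k hk => (hS E k).1 hk)
    have hAe : 2 * π / α = A := by rw [← h]; field_simp
    rw [hAe] at hcount
    have hlow := (LTlow α A hA hα h (S E) N φ hc hortho z).trans hcount
    have := LTmink (fun j => (φ j z : ℂ)) (fun j => LTP α A (S E) (fun z => (φ j z : ℂ)) z)
      (π / 36 * E) hlow
    simp only [← ofReal_norm]
    simp only [← ENNReal.ofReal_pow (norm_nonneg _)]
    rw [← ENNReal.ofReal_sum_of_nonneg (fun j _ => by positivity)]
    apply ENNReal.ofReal_le_ofReal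
    simpa [hρ] using this
  have hE : ∀ E, 0 < E → ENNReal.ofReal V * ∫⁻ z in LTD A, ENNReal.ofReal ((max 0 (√(ρ z) - √(π / 36 * E))) ^ 2)
      ≤ ∑ j, ∑' k, (Set.Iic (lam k)).indicator (fun _ => a j k) E := by
    intro E hE
    calc _ ≤ ENNReal.ofReal V * ∫⁻ z in LTD A, ∑ j, ‖(φ j z : ℂ) - LTP α A (S E) (fun z => (φ j z : ℂ)) z‖ₑ ^ 2 := by
          gcongr with z
          exact hpt E hE z
      _ = ∑ j, ∑' k, (if k ∈ S E then 0 else a j k) := by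
          rw [lintegral_finsetSum, Finset.mul_sum]
          · refine Finset.sum_congr rfl fun j _ => ?_
            exact LTresid α A hA hα h (S E) _ (hcc j)
          · intro j _
            have h1 := hcc j
            have h2 := LTP_cont α A (S E) (fun z => (φ j z : ℂ))
            exact (by fun_prop : Continuous fun z => ‖(φ j z : ℂ) - LTP α A (S E) (fun z => (φ j z : ℂ)) z‖ₑ ^ 2).measurable
      _ ≤ _ := by
          refine Finset.sum_le_sum fun j _ => ENNReal.tsum_le_tsum fun k => ?_
          split_ifs with hk
          · exact zero_le
          · by_cases h0 : k.2 = 0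
            · rw [hzero j k h0]; exact zero_le
            · have : E ≤ lam k := by
                by_contra hlt
                exact hk ((hS E k).2 ⟨h0, not_le.1 hlt⟩)
              rw [Set.indicator_of_mem (show E ∈ Set.Iic (lam k) from this)]
  have hint : ENNReal.ofReal V * ∫⁻ z in LTD A, ENNReal.ofReal (ρ z ^ 2 / (6 * (π / 36))) ≤
      ENNReal.ofReal (V * ∑ j, ∫ x in LTD A, (pd1 (φ j) x ^ 2 + pd2 (φ j) x ^ 2)) := by
    calc _ ≤ ENNReal.ofReal V * ∫⁻ z in LTD A, ∫⁻ E in Set.Ioi (0:ℝ), ENNReal.ofReal ((max 0 (√(ρ z) - √(π / 36 * E))) ^ 2) := by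
          gcongr with z
          exact LTenergy (ρ z) (π/36) (hρ0 z) (by positivity)
      _ = ENNReal.ofReal V * ∫⁻ E in Set.Ioi (0:ℝ), ∫⁻ z in LTD A, ENNReal.ofReal ((max 0 (√(ρ z) - √(π / 36 * E))) ^ 2) := by
          rw [lintegral_lintegral_swap]
          apply Measurable.aemeasurable
          apply Continuous.measurable
          refine ENNReal.continuous_ofReal.comp
            (g := ENNReal.ofReal) (f := fun p : (ℝ × ℝ) × ℝ => (max 0 (√(ρ p.1) - √(π / 36 * p.2))) ^ 2) ?_
          fun_prop
      _ = ∫⁻ E in Set.Ioi (0:ℝ), ENNReal.ofReal V * ∫⁻ z in LTD A, ENNReal.ofReal ((max 0 (√(ρ z) - √(π / 36 * E))) ^ 2) := by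
          rw [lintegral_const_mul' _ _ ENNReal.ofReal_ne_top]
      _ ≤ ∫⁻ E in Set.Ioi (0:ℝ), ∑ j, ∑' k, (Set.Iic (lam k)).indicator (fun _ => a j k) E :=
          setLIntegral_mono' measurableSet_Ioi fun E h => hE E h
      _ = ∑ j, ∑' k, ENNReal.ofReal (lam k) * a j k := by
          have hm : ∀ j k, Measurable ((Set.Iic (lam k)).indicator (fun _ => a j k)) := fun j k =>
            measurable_const.indicator measurableSet_Iic
          rw [lintegral_finsetSum _ (fun j _ => Measurable.tsum (hm j))]
          refine Finset.sum_congr rfl fun j _ => ?_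
          rw [lintegral_tsum (fun k => (hm j k).aemeasurable)]
          congr 1; ext k
          rw [lintegral_indicator_const measurableSet_Iic, Measure.restrict_apply measurableSet_Iic,
            Set.Iic_inter_Ioi, Real.volume_Ioc, sub_zero, mul_comm]
      _ = _ := by
          rw [Finset.mul_sum, ENNReal.ofReal_sum_of_nonneg]
          · refine Finset.sum_congr rfl fun j _ => ?_
            exact LTgrad α A hA h (φ j) (hC1 j) (hp1 j) (hp2 j)
          · intro j _
            exact mul_nonneg hV0.le (integral_nonneg fun x => by positivity)
  rw [← ofReal_integral_eq_lintegral_ofReal, ← ENNReal.ofReal_mul hV0.le,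
    ENNReal.ofReal_le_ofReal_iff, mul_le_mul_iff_right₀ hV0, integral_div, div_le_iff₀ (by positivity)] at hint
  · linarith
  · refine mul_nonneg hV0.le (Finset.sum_nonneg fun j _ => integral_nonneg fun x => by positivity)
  · exact LTint A (by fun_prop)
  · exact Filter.Eventually.of_forall fun x => by positivity

theorem stmt_2 (α : ℝ) (hα0 : 0 < α) (hα1 : α ≤ 1)
    (N : ℕ) (φ : Fin N → ℝ × ℝ → ℝ)
    (hC1 : ∀ j, ContDiff ℝ 1 (φ j))
    (hper1 : ∀ j (x : ℝ × ℝ), φ j (x.1 + 2 * π / α, x.2) = φ j x)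
    (hper2 : ∀ j (x : ℝ × ℝ), φ j (x.1, x.2 + 2 * π) = φ j x)
    (hmean : ∀ j (x₁ : ℝ), (∫ t in (0:ℝ)..(2 * π), φ j (x₁, t)) = 0)
    (hortho : ∀ i j, (∫ x in Set.Ioc (0:ℝ) (2 * π / α) ×ˢ Set.Ioc (0:ℝ) (2 * π),
        φ i x * φ j x) = if i = j then 1 else 0) :
    (∫ x in Set.Ioc (0:ℝ) (2 * π / α) ×ˢ Set.Ioc (0:ℝ) (2 * π),
        (∑ j, φ j x ^ 2) ^ 2) ≤
      (π / 6) * ∑ j, ∫ x in Set.Ioc (0:ℝ) (2 * π / α) ×ˢ Set.Ioc (0:ℝ) (2 * π),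
        (pd1 (φ j) x ^ 2 + pd2 (φ j) x ^ 2) := by

  have hp := pi_pos
  refine LTmain α (2 * π / α) hα0 hα1 (by positivity) (by field_simp) N φ hC1 ?_ ?_ hmean hortho
  · intro j t
    simpa using hper1 j (0, t)
  · intro j x
    simpa using hper2 j (x, 0)
end

section
/- Let L > 0 and consider the square torus T² = (0, L) × (0, L). Let v_1, …, v_m : ℝ² → ℝ² be C¹ vector fields, L-periodic in both variables, with ∫_{T²} v_j(x) dx = 0, div v_j = 0 on ℝ², and orthonormal in L²(T²; ℝ²), i.e. ∫_{T²} ⟨v_i(x), v_j(x)⟩ dx = δ_{ij}. Then ρ_v(x) := ∑_{j=1}^m |v_j(x)|² satisfies ∫_{T²} ρ_v(x)² dx ≤ (3/2) ∑_{j=1}^m ∫_{T²} |∇v_j(x)|² dx. -/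
open Real MeasureTheory

/-- `|∇v|² = ∑_{i,k=1}^2 (∂_i v^k)²` for a vector field `v : ℝ² → ℝ²`. -/
noncomputable def gradSq (v : ℝ × ℝ → ℝ × ℝ) (x : ℝ × ℝ) : ℝ :=
  pd1 (fun y => (v y).1) x ^ 2 + pd2 (fun y => (v y).1) x ^ 2 +
    pd1 (fun y => (v y).2) x ^ 2 + pd2 (fun y => (v y).2) x ^ 2


open scoped ComplexConjugate

def QQ (L : ℝ) : Set (ℝ × ℝ) := Set.Ioc (0:ℝ) L ×ˢ Set.Ioc (0:ℝ) L

noncomputable def ee (L : ℝ) (k : ℤ × ℤ) (x : ℝ × ℝ) : ℂ :=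
  Complex.exp (2 * π * Complex.I * (k.1 * x.1 + k.2 * x.2) / L)

noncomputable def cf (L : ℝ) (f : ℝ × ℝ → ℂ) (k : ℤ × ℤ) : ℂ :=
  ∫ x in QQ L, conj (ee L k x) * f x

lemma ee_cont (L : ℝ) (k : ℤ × ℤ) : Continuous (ee L k) := by
  unfold ee; fun_prop

lemma QQ_meas (L : ℝ) : MeasurableSet (QQ L) := measurableSet_Ioc.prod measurableSet_Ioc

lemma intOn {E : Type*} [NormedAddCommGroup E] (L : ℝ) {f : ℝ × ℝ → E} (hf : Continuous f) :
    IntegrableOn f (QQ L) := by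
  have : IntegrableOn f (Set.Icc 0 L ×ˢ Set.Icc 0 L) :=
    hf.continuousOn.integrableOn_compact (isCompact_Icc.prod isCompact_Icc)
  exact this.mono_set (Set.prod_mono Set.Ioc_subset_Icc_self Set.Ioc_subset_Icc_self)

section TorusPart

noncomputable local instance msUAC : MeasureSpace UnitAddCircle := ⟨AddCircle.haarAddCircle⟩

local instance probUAC : IsProbabilityMeasure (volume : Measure UnitAddCircle) :=
  inferInstanceAs (IsProbabilityMeasure AddCircle.haarAddCircle)

lemma torus_int {E : Type*} [NormedAddCommGroup E] [NormedSpace ℝ E]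
    (F : UnitAddTorus (Fin 2) → E) :
    ∫ t, F t = ∫ x in QQ 1, F ![(x.1 : UnitAddCircle), (x.2 : UnitAddCircle)] := by
  rw [UnitAddTorus.integral_preimage F 0]
  have := (MeasureTheory.volume_preserving_finTwoArrow ℝ).setIntegral_preimage_emb
    (MeasurableEquiv.measurableEmbedding _)
    (fun x : ℝ × ℝ => F ![(x.1 : UnitAddCircle), (x.2 : UnitAddCircle)]) (QQ 1)
  rw [← this]
  congr 1
  · congr 1
    ext x
    simp [QQ, Fin.forall_fin_two]
  · ext x
    congr 1
    ext i
    fin_cases i <;> simp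

noncomputable def lift1 (f : ℝ × ℝ → ℂ) (t : UnitAddTorus (Fin 2)) : ℂ :=
  f ((AddCircle.equivIoc (1:ℝ) 0 (t 0)).1, (AddCircle.equivIoc (1:ℝ) 0 (t 1)).1)

lemma lift1_coe (f : ℝ × ℝ → ℂ) (x : ℝ × ℝ) (hx : x ∈ QQ 1) :
    lift1 f ![(x.1 : UnitAddCircle), (x.2 : UnitAddCircle)] = f x := by
  unfold lift1
  have h1 : x.1 ∈ Set.Ioc (0:ℝ) (0+1) := by simpa using hx.1
  have h2 : x.2 ∈ Set.Ioc (0:ℝ) (0+1) := by simpa using hx.2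
  have e1 := AddCircle.equivIoc_coe_eq (p := (1:ℝ)) (a := 0) h1
  have e2 := AddCircle.equivIoc_coe_eq (p := (1:ℝ)) (a := 0) h2
  simp only [Matrix.cons_val_zero, Matrix.cons_val_one]
  erw [e1, e2]

lemma lift1_memLp (f : ℝ × ℝ → ℂ) (hf : Continuous f) :
    MemLp (lift1 f) 2 (volume : Measure (UnitAddTorus (Fin 2))) := by
  obtain ⟨C, hC⟩ := (isCompact_Icc.prod isCompact_Icc :
    IsCompact (Set.Icc (0:ℝ) 1 ×ˢ Set.Icc (0:ℝ) 1)).exists_bound_of_continuousOn hf.continuousOn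
  refine MemLp.of_bound (C := C) ?_ (Filter.Eventually.of_forall ?_)
  · refine Measurable.aestronglyMeasurable ?_
    unfold lift1
    refine hf.measurable.comp (Measurable.prodMk ?_ ?_)
    · exact measurable_subtype_coe.comp ((AddCircle.measurableEquivIoc 1 0).measurable.comp
        (measurable_pi_apply 0))
    · exact measurable_subtype_coe.comp ((AddCircle.measurableEquivIoc 1 0).measurable.comp
        (measurable_pi_apply 1))
  · intro t
    refine hC _ ⟨?_, ?_⟩
    · have := (AddCircle.equivIoc (1:ℝ) 0 (t 0)).2
      exact ⟨this.1.le, by simpa using this.2⟩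
    · have := (AddCircle.equivIoc (1:ℝ) 0 (t 1)).2
      exact ⟨this.1.le, by simpa using this.2⟩

lemma parseval1_s17 (f : ℝ × ℝ → ℂ) (hf : Continuous f) :
    HasSum (fun k => ‖cf 1 f k‖ ^ 2) (∫ x in QQ 1, ‖f x‖ ^ 2) := by
  have h := UnitAddTorus.hasSum_sq_mFourierCoeff (lift1_memLp f hf).toLp
  have e1 : (∫ t, ‖((lift1_memLp f hf).toLp (lift1 f)) t‖ ^ 2) = ∫ x in QQ 1, ‖f x‖ ^ 2 := by
    rw [integral_congr_ae (g := fun t => ‖lift1 f t‖ ^ 2), torus_int]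
    · refine setIntegral_congr_fun (QQ_meas 1) fun x hx => ?_
      simp only [lift1_coe f x hx]
    · filter_upwards [(lift1_memLp f hf).coeFn_toLp] with t ht
      rw [ht]
  rw [e1] at h
  rw [← (finTwoArrowEquiv ℤ).symm.hasSum_iff] at h
  convert h using 1
  ext k
  simp only [Function.comp]
  congr 2
  unfold UnitAddTorus.mFourierCoeff cf
  rw [integral_congr_ae (g := fun t => UnitAddTorus.mFourier (-(finTwoArrowEquiv ℤ).symm k) t
    • lift1 f t), torus_int]
  · refine setIntegral_congr_fun (QQ_meas 1) fun x hx => ?_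
    simp only [lift1_coe f x hx, smul_eq_mul]
    congr 1
    rw [UnitAddTorus.mFourier_neg]
    congr 1
    simp only [UnitAddTorus.mFourier, ContinuousMap.coe_mk, Fin.prod_univ_two]
    simp [ee, ← Complex.exp_add]
    ring_nf
  · filter_upwards [(lift1_memLp f hf).coeFn_toLp] with t ht
    rw [ht]

end TorusPart

open scoped Pointwise in
lemma scale_int {E : Type*} [NormedAddCommGroup E] [NormedSpace ℝ E] (L : ℝ) (hL : 0 < L)
    (F : ℝ × ℝ → E) :
    ∫ x in QQ 1, F (L • x) = (L ^ 2)⁻¹ • ∫ x in QQ L, F x := by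
  rw [Measure.setIntegral_comp_smul_of_pos _ _ _ hL]
  have : L • QQ 1 = QQ L := by
    ext x
    rw [Set.mem_smul_set_iff_inv_smul_mem₀ hL.ne']
    simp [QQ, inv_mul_le_iff₀ hL, hL]
  rw [this]
  simp

lemma parseval (L : ℝ) (hL : 0 < L) (f : ℝ × ℝ → ℂ) (hf : Continuous f) :
    HasSum (fun k => ‖cf L f k‖ ^ 2) (L ^ 2 * ∫ x in QQ L, ‖f x‖ ^ 2) := by
  have h := parseval1_s17 (fun x => f (L • x)) (by fun_prop)
  have e1 := scale_int L hL (fun x => ‖f x‖ ^ 2)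
  rw [e1] at h
  have e2 : ∀ k, cf 1 (fun x => f (L • x)) k = (L ^ 2)⁻¹ • cf L f k := by
    intro k
    unfold cf
    rw [← scale_int L hL]
    congr 1
    ext x
    congr 2
    unfold ee
    congr 1
    have : (L:ℂ) ≠ 0 := by exact_mod_cast hL.ne'
    simp
    field_simp
  simp only [e2, norm_smul] at h
  have h2 := h.mul_left (L ^ 4)
  have e3 : (fun k => L ^ 4 * (‖(L ^ 2)⁻¹‖ * ‖cf L f k‖) ^ 2) = fun k => ‖cf L f k‖ ^ 2 := by
    funext k
    rw [norm_inv, norm_pow, Real.norm_of_nonneg hL.le]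
    field_simp
  have e4 : L ^ 4 * (L ^ 2)⁻¹ • ∫ x in QQ L, ‖f x‖ ^ 2 = L ^ 2 * ∫ x in QQ L, ‖f x‖ ^ 2 := by
    rw [smul_eq_mul]
    field_simp
  rwa [e3, e4] at h2

lemma int_d2_s17 (L : ℝ) (hL : 0 < L) (g g' : ℝ × ℝ → ℂ) (hc : Continuous g')
    (hd : ∀ x : ℝ × ℝ, HasDerivAt (fun s => g (x.1, s)) (g' x) x.2)
    (hp : ∀ y, g (y, L) = g (y, 0)) : ∫ x in QQ L, g' x = 0 := by
  have hi := intOn L hc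
  unfold QQ at *
  rw [Measure.volume_eq_prod] at hi ⊢
  rw [setIntegral_prod _ hi]
  have : ∀ a : ℝ, ∫ b in Set.Ioc 0 L, g' (a, b) = 0 := by
    intro a
    rw [← intervalIntegral.integral_of_le hL.le,
      intervalIntegral.integral_eq_sub_of_hasDerivAt (f := fun s => g (a, s))
        (fun x _ => hd (a, x)) (Continuous.intervalIntegrable (by fun_prop) _ _), hp]
    simp
  simp [this]

lemma int_d1_s17 (L : ℝ) (hL : 0 < L) (g g' : ℝ × ℝ → ℂ) (hc : Continuous g')
    (hd : ∀ x : ℝ × ℝ, HasDerivAt (fun s => g (s, x.2)) (g' x) x.1)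
    (hp : ∀ y, g (L, y) = g (0, y)) : ∫ x in QQ L, g' x = 0 := by
  have := int_d2_s17 L hL (fun x => g x.swap) (fun x => g' x.swap) (hc.comp continuous_swap)
    (fun x => hd x.swap) hp
  rw [← this]
  unfold QQ
  rw [Measure.volume_eq_prod, setIntegral_prod_swap]

lemma ee_mul (L : ℝ) (k l : ℤ × ℤ) (x : ℝ × ℝ) : ee L k x * ee L l x = ee L (k + l) x := by
  unfold ee
  rw [← Complex.exp_add]
  congr 1
  push_cast [Prod.fst_add, Prod.snd_add]
  ring

lemma ee_conj (L : ℝ) (k : ℤ × ℤ) (x : ℝ × ℝ) : conj (ee L k x) = ee L (-k) x := by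
  unfold ee
  rw [← Complex.exp_conj]
  congr 1
  have h2 : (starRingEnd ℂ) 2 = 2 := map_ofNat _ 2
  simp [h2]
  ring

lemma ee_norm (L : ℝ) (k : ℤ × ℤ) (x : ℝ × ℝ) : ‖ee L k x‖ = 1 := by
  unfold ee
  rw [show (2 * π * Complex.I * (k.1 * x.1 + k.2 * x.2) / L : ℂ)
    = ((2 * π * (k.1 * x.1 + k.2 * x.2) / L : ℝ) : ℂ) * Complex.I by push_cast; ring]
  exact Complex.norm_exp_ofReal_mul_I _

lemma ee_per1 (L : ℝ) (hL : 0 < L) (k : ℤ × ℤ) (y : ℝ) : ee L k (L, y) = ee L k (0, y) := by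
  unfold ee
  have : (L:ℂ) ≠ 0 := by exact_mod_cast hL.ne'
  rw [Complex.exp_eq_exp_iff_exists_int]
  refine ⟨k.1, ?_⟩
  push_cast
  field_simp
  ring

lemma ee_per2 (L : ℝ) (hL : 0 < L) (k : ℤ × ℤ) (y : ℝ) : ee L k (y, L) = ee L k (y, 0) := by
  unfold ee
  have : (L:ℂ) ≠ 0 := by exact_mod_cast hL.ne'
  rw [Complex.exp_eq_exp_iff_exists_int]
  refine ⟨k.2, ?_⟩
  push_cast
  field_simp
  ring

lemma ee_d1 (L : ℝ) (k : ℤ × ℤ) (x : ℝ × ℝ) :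
    HasDerivAt (fun s => ee L k (s, x.2)) (2 * π * Complex.I * k.1 / L * ee L k x) x.1 := by
  unfold ee
  have h0 : HasDerivAt (fun s : ℝ => (s:ℂ)) 1 x.1 := Complex.ofRealCLM.hasDerivAt
  have h := ((((h0.const_mul (k.1:ℂ)).add_const ((k.2:ℂ) * x.2)).const_mul
    (2 * π * Complex.I)).div_const (L:ℂ)).cexp
  convert h using 1
  ring

lemma ee_d2 (L : ℝ) (k : ℤ × ℤ) (x : ℝ × ℝ) :
    HasDerivAt (fun s => ee L k (x.1, s)) (2 * π * Complex.I * k.2 / L * ee L k x) x.2 := by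
  unfold ee
  have h0 : HasDerivAt (fun s : ℝ => (s:ℂ)) 1 x.2 := Complex.ofRealCLM.hasDerivAt
  have h := ((((h0.const_mul (k.2:ℂ)).const_add ((k.1:ℂ) * x.1)).const_mul
    (2 * π * Complex.I)).div_const (L:ℂ)).cexp
  convert h using 1
  ring

lemma ee_int (L : ℝ) (hL : 0 < L) (k : ℤ × ℤ) :
    ∫ x in QQ L, ee L k x = if k = 0 then (L:ℂ) ^ 2 else 0 := by
  have hL' : (L:ℂ) ≠ 0 := by exact_mod_cast hL.ne'
  split_ifs with h
  · subst h
    have : ∀ x, ee L 0 x = 1 := by intro x; simp [ee]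
    simp only [this, setIntegral_const, QQ, Measure.volume_eq_prod, measureReal_prod_prod]
    simp [hL.le]
    ring
  · by_cases h1 : k.1 = 0
    · have h2 : k.2 ≠ 0 := fun h2 => h (Prod.ext h1 h2)
      have h2' : (k.2:ℂ) ≠ 0 := by exact_mod_cast h2
      have := int_d2_s17 L hL (ee L k) _ (by have := ee_cont L k; fun_prop) (ee_d2 L k) (ee_per2 L hL k)
      rw [integral_const_mul] at this
      refine (mul_eq_zero.1 this).resolve_left ?_
      simp [hL', h2', Real.pi_ne_zero]
    · have h2' : (k.1:ℂ) ≠ 0 := by exact_mod_cast h1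
      have := int_d1_s17 L hL (ee L k) _ (by have := ee_cont L k; fun_prop) (ee_d1 L k) (ee_per1 L hL k)
      rw [integral_const_mul] at this
      refine (mul_eq_zero.1 this).resolve_left ?_
      simp [hL', h2', Real.pi_ne_zero]

lemma cf_ee (L : ℝ) (hL : 0 < L) (k l : ℤ × ℤ) :
    cf L (ee L l) k = if k = l then (L:ℂ) ^ 2 else 0 := by
  unfold cf
  simp only [ee_conj, ee_mul, ee_int L hL]
  congr 1
  simp [neg_add_eq_zero]

lemma cf_int (L : ℝ) (f : ℝ × ℝ → ℂ) (hf : Continuous f) (k : ℤ × ℤ) :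
    IntegrableOn (fun x => conj (ee L k x) * f x) (QQ L) :=
  intOn L ((Complex.continuous_conj.comp (ee_cont L k)).mul hf)

lemma cf_sum (L : ℝ) (hL : 0 < L) (S : Finset (ℤ × ℤ)) (b : ℤ × ℤ → ℂ) (k : ℤ × ℤ) :
    cf L (fun x => ∑ l ∈ S, b l * ee L l x) k = if k ∈ S then L ^ 2 * b k else 0 := by
  have : cf L (fun x => ∑ l ∈ S, b l * ee L l x) k = ∑ l ∈ S, b l * cf L (ee L l) k := by
    unfold cf
    simp only [Finset.mul_sum]
    rw [integral_finsetSum]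
    · refine Finset.sum_congr rfl fun l _ => ?_
      rw [← integral_const_mul]
      congr 1
      ext x
      ring
    · intro l _
      exact cf_int L _ (continuous_const.mul (ee_cont L l)) k
  rw [this]
  simp only [cf_ee L hL, mul_ite, mul_zero]
  rw [Finset.sum_ite_eq]
  simp only [mul_comm]

lemma cf_sub (L : ℝ) (f g : ℝ × ℝ → ℂ) (hf : Continuous f) (hg : Continuous g) (k : ℤ × ℤ) :
    cf L (fun x => f x - g x) k = cf L f k - cf L g k := by
  unfold cf
  rw [← integral_sub (cf_int L f hf k) (cf_int L g hg k)]
  congr 1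
  ext x
  ring

lemma pd1_has (f : ℝ × ℝ → ℝ) (hf : ContDiff ℝ 1 f) (x : ℝ × ℝ) :
    HasDerivAt (fun s => f (s, x.2)) (fderiv ℝ f x (1, 0)) x.1 := by
  have h := (hf.differentiable (by norm_num) x).hasFDerivAt
  have h2 : HasDerivAt (fun s : ℝ => (s, x.2)) ((1:ℝ), (0:ℝ)) x.1 :=
    (hasDerivAt_id x.1).prodMk (hasDerivAt_const x.1 x.2)
  exact HasFDerivAt.comp_hasDerivAt (l := f) x.1 h h2

lemma pd2_has (f : ℝ × ℝ → ℝ) (hf : ContDiff ℝ 1 f) (x : ℝ × ℝ) :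
    HasDerivAt (fun s => f (x.1, s)) (fderiv ℝ f x (0, 1)) x.2 := by
  have h := (hf.differentiable (by norm_num) x).hasFDerivAt
  have h2 : HasDerivAt (fun s : ℝ => (x.1, s)) ((0:ℝ), (1:ℝ)) x.2 :=
    (hasDerivAt_const x.2 x.1).prodMk (hasDerivAt_id x.2)
  exact HasFDerivAt.comp_hasDerivAt (l := f) x.2 h h2

lemma pd1_cont (f : ℝ × ℝ → ℝ) (hf : ContDiff ℝ 1 f) : Continuous (pd1 f) := by
  have : pd1 f = fun x => fderiv ℝ f x (1, 0) := by
    ext x; exact (pd1_has f hf x).deriv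
  rw [this]
  exact (hf.continuous_fderiv (by norm_num)).clm_apply continuous_const

lemma pd2_cont (f : ℝ × ℝ → ℝ) (hf : ContDiff ℝ 1 f) : Continuous (pd2 f) := by
  have : pd2 f = fun x => fderiv ℝ f x (0, 1) := by
    ext x; exact (pd2_has f hf x).deriv
  rw [this]
  exact (hf.continuous_fderiv (by norm_num)).clm_apply continuous_const

lemma cf_d1 (L : ℝ) (hL : 0 < L) (f : ℝ × ℝ → ℝ) (hf : ContDiff ℝ 1 f)
    (hp : ∀ x : ℝ × ℝ, f (x.1 + L, x.2) = f x) (k : ℤ × ℤ) :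
    cf L (fun x => (pd1 f x : ℂ)) k
      = 2 * π * Complex.I * k.1 / L * cf L (fun x => (f x : ℂ)) k := by
  have hc1 : Continuous (fun x => (pd1 f x : ℂ)) := Complex.continuous_ofReal.comp (pd1_cont f hf)
  have hc0 : Continuous (fun x => (f x : ℂ)) := Complex.continuous_ofReal.comp hf.continuous
  have hce := ee_cont L (-k)
  have := int_d1_s17 L hL (fun x => ee L (-k) x * f x)
    (fun x => 2 * π * Complex.I * ((-k).1 : ℤ) / L * ee L (-k) x * f x + ee L (-k) x * pd1 f x)
    (by fun_prop)
    (fun x => by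
      have h2 : HasDerivAt (fun s => f (s, x.2)) (pd1 f x) x.1 := by
        have := pd1_has f hf x
        rw [← this.deriv] at this
        exact this
      exact (ee_d1 L (-k) x).mul h2.ofReal_comp)
    (fun y => by
      have := hp (0, y)
      simp only [zero_add] at this
      rw [ee_per1 L hL, this])
  rw [integral_add (intOn L (by fun_prop)) (intOn L (by fun_prop))] at this
  unfold cf
  simp only [ee_conj]
  rw [← integral_const_mul, ← sub_eq_zero, ← neg_eq_zero, neg_sub, sub_eq_add_neg, ← integral_neg,
    ← neg_eq_zero, neg_add, ← integral_neg, ← integral_neg]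
  rw [← this]
  congr 2
  · ext x
    push_cast [Prod.fst_neg]
    ring
  · ext x
    ring

lemma cf_d2 (L : ℝ) (hL : 0 < L) (f : ℝ × ℝ → ℝ) (hf : ContDiff ℝ 1 f)
    (hp : ∀ x : ℝ × ℝ, f (x.1, x.2 + L) = f x) (k : ℤ × ℤ) :
    cf L (fun x => (pd2 f x : ℂ)) k
      = 2 * π * Complex.I * k.2 / L * cf L (fun x => (f x : ℂ)) k := by
  have hc1 : Continuous (fun x => (pd2 f x : ℂ)) := Complex.continuous_ofReal.comp (pd2_cont f hf)
  have hc0 : Continuous (fun x => (f x : ℂ)) := Complex.continuous_ofReal.comp hf.continuous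
  have hce := ee_cont L (-k)
  have := int_d2_s17 L hL (fun x => ee L (-k) x * f x)
    (fun x => 2 * π * Complex.I * ((-k).2 : ℤ) / L * ee L (-k) x * f x + ee L (-k) x * pd2 f x)
    (by fun_prop)
    (fun x => by
      have h2 : HasDerivAt (fun s => f (x.1, s)) (pd2 f x) x.2 := by
        have := pd2_has f hf x
        rw [← this.deriv] at this
        exact this
      exact (ee_d2 L (-k) x).mul h2.ofReal_comp)
    (fun y => by
      have := hp (y, 0)
      simp only [zero_add] at this
      rw [ee_per2 L hL, this])
  rw [integral_add (intOn L (by fun_prop)) (intOn L (by fun_prop))] at this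
  unfold cf
  simp only [ee_conj]
  rw [← integral_const_mul, ← sub_eq_zero, ← neg_eq_zero, neg_sub, sub_eq_add_neg, ← integral_neg,
    ← neg_eq_zero, neg_add, ← integral_neg, ← integral_neg]
  rw [← this]
  congr 2
  · ext x
    push_cast [Prod.snd_neg]
    ring
  · ext x
    ring

abbrev E2 := EuclideanSpace ℂ (Fin 2)

lemma memLpQ (L : ℝ) (f : ℝ × ℝ → E2) (hf : Continuous f) :
    MemLp f 2 (volume.restrict (QQ L)) := by
  rw [memLp_two_iff_integrable_sq_norm hf.aestronglyMeasurable]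
  exact intOn L (hf.norm.pow 2)

lemma inner_toLpQ (L : ℝ) (f g : ℝ × ℝ → E2) (hf : Continuous f) (hg : Continuous g) :
    inner ℂ ((memLpQ L f hf).toLp f) ((memLpQ L g hg).toLp g)
      = ∫ x in QQ L, (conj (f x 0) * g x 0 + conj (f x 1) * g x 1) := by
  rw [L2.inner_def]
  refine integral_congr_ae ?_
  filter_upwards [(memLpQ L f hf).coeFn_toLp, (memLpQ L g hg).coeFn_toLp] with x h1 h2
  rw [h1, h2]
  simp [PiLp.inner_apply, Fin.sum_univ_two, mul_comm]

lemma bessel (L : ℝ) (m : ℕ) (v : Fin m → ℝ × ℝ → ℝ × ℝ) (hv : ∀ j, Continuous (v j))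
    (hortho : ∀ i j, (∫ x in QQ L,
        ((v i x).1 * (v j x).1 + (v i x).2 * (v j x).2)) = if i = j then 1 else 0)
    (U1 U2 : ℝ × ℝ → ℂ) (h1 : Continuous U1) (h2 : Continuous U2) :
    ∑ j, ‖∫ x in QQ L, (conj (U1 x) * (v j x).1 + conj (U2 x) * (v j x).2)‖ ^ 2
      ≤ ∫ x in QQ L, (‖U1 x‖ ^ 2 + ‖U2 x‖ ^ 2) := by
  have hV : ∀ j, Continuous (fun x => (!₂[((v j x).1 : ℂ), ((v j x).2 : ℂ)] : E2)) := by
    intro j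
    have := hv j
    refine (PiLp.continuous_toLp 2 _).comp (continuous_pi fun i => ?_)
    fin_cases i <;> simp <;> fun_prop
  have hU : Continuous (fun x => (!₂[U1 x, U2 x] : E2)) := by
    refine (PiLp.continuous_toLp 2 _).comp (continuous_pi fun i => ?_)
    fin_cases i <;> simp <;> fun_prop
  have ho : Orthonormal ℂ (fun j => (memLpQ L _ (hV j)).toLp _) := by
    rw [orthonormal_iff_ite]
    intro i j
    rw [inner_toLpQ _ _ _ (hV i) (hV j)]
    have := congrArg (fun t : ℝ => (t : ℂ)) (hortho i j)
    simp only [← integral_complex_ofReal] at this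
    push_cast at this
    simp only [apply_ite (fun t : ℝ => (t : ℂ)), Complex.ofReal_one, Complex.ofReal_zero] at this
    simpa using this
  have hb := ho.sum_inner_products_le (s := Finset.univ) ((memLpQ L _ hU).toLp _)
  have e2 : ‖(memLpQ L _ hU).toLp _‖ ^ 2 = ∫ x in QQ L, (‖U1 x‖ ^ 2 + ‖U2 x‖ ^ 2) := by
    have h := inner_self_eq_norm_sq_to_K (𝕜 := ℂ) ((memLpQ L _ hU).toLp _)
    rw [inner_toLpQ _ _ _ hU hU] at h
    have : ∀ z : ℂ, conj z * z = ((‖z‖ ^ 2 : ℝ) : ℂ) := by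
      intro z
      rw [Complex.conj_mul']
      push_cast
      rfl
    simp only [this] at h
    have h' : (((∫ x in QQ L, (‖U1 x‖ ^ 2 + ‖U2 x‖ ^ 2)) : ℝ) : ℂ)
      = ((‖(memLpQ L _ hU).toLp _‖ ^ 2 : ℝ) : ℂ) := by
      rw [← integral_complex_ofReal]
      push_cast
      push_cast at h
      exact h
    exact (Complex.ofReal_injective h').symm
  rw [e2] at hb
  refine le_trans (le_of_eq ?_) hb
  refine Finset.sum_congr rfl fun j _ => ?_
  rw [norm_inner_symm, inner_toLpQ _ _ _ hU (hV j)]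
  simp

lemma trig_norm (L : ℝ) (hL : 0 < L) (S : Finset (ℤ × ℤ)) (b : ℤ × ℤ → ℂ) :
    ∫ x in QQ L, ‖∑ l ∈ S, b l * ee L l x‖ ^ 2 = L ^ 2 * ∑ l ∈ S, ‖b l‖ ^ 2 := by
  have hc : Continuous (fun x => ∑ l ∈ S, b l * ee L l x) :=
    continuous_finsetSum _ fun l _ => continuous_const.mul (ee_cont L l)
  have h := parseval L hL _ hc
  have h2 : HasSum (fun k => ‖cf L (fun x => ∑ l ∈ S, b l * ee L l x) k‖ ^ 2)
      (∑ l ∈ S, ‖cf L (fun x => ∑ l ∈ S, b l * ee L l x) l‖ ^ 2) := by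
    refine hasSum_sum_of_ne_finset_zero ?_
    intro k hk
    rw [cf_sum L hL, if_neg hk]
    simp
  have h3 := h.unique h2
  have h4 : ∑ l ∈ S, ‖cf L (fun x => ∑ l ∈ S, b l * ee L l x) l‖ ^ 2
      = L ^ 2 * (L ^ 2 * ∑ l ∈ S, ‖b l‖ ^ 2) := by
    rw [Finset.mul_sum, Finset.mul_sum]
    refine Finset.sum_congr rfl fun k hk => ?_
    rw [cf_sum L hL, if_pos hk, norm_mul, norm_pow, Complex.norm_of_nonneg hL.le]
    ring
  rw [h4] at h3
  exact mul_left_cancel₀ (by positivity) h3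

noncomputable def ka1 (k : ℤ × ℤ) : ℝ := -k.2 / √((k.1:ℝ) ^ 2 + (k.2:ℝ) ^ 2)
noncomputable def ka2 (k : ℤ × ℤ) : ℝ := k.1 / √((k.1:ℝ) ^ 2 + (k.2:ℝ) ^ 2)

lemma k_pos (k : ℤ × ℤ) (hk : k ≠ 0) : 0 < (k.1:ℝ) ^ 2 + (k.2:ℝ) ^ 2 := by
  by_cases h1 : k.1 = 0
  · have h2 : k.2 ≠ 0 := fun h2 => hk (Prod.ext h1 h2)
    have : (k.2:ℝ) ≠ 0 := by exact_mod_cast h2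
    positivity
  · have : (k.1:ℝ) ≠ 0 := by exact_mod_cast h1
    positivity

lemma ka_sq (k : ℤ × ℤ) (hk : k ≠ 0) : ka1 k ^ 2 + ka2 k ^ 2 = 1 := by
  have h := k_pos k hk
  unfold ka1 ka2
  rw [div_pow, div_pow, Real.sq_sqrt h.le]
  field_simp
  ring

lemma ka_a (k : ℤ × ℤ) (hk : k ≠ 0) (a1 a2 : ℂ) (h : k.1 * a1 + k.2 * a2 = 0) :
    ka1 k * (ka1 k * a1 + ka2 k * a2) = a1 ∧ ka2 k * (ka1 k * a1 + ka2 k * a2) = a2 := by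
  have hs : ((ka1 k : ℂ)) ^ 2 + (ka2 k : ℂ) ^ 2 = 1 := by exact_mod_cast ka_sq k hk
  have h0 : (ka2 k : ℂ) * a1 - ka1 k * a2 = 0 := by
    have : (ka2 k : ℂ) * a1 - ka1 k * a2
      = (k.1 * a1 + k.2 * a2) / (√((k.1:ℝ) ^ 2 + (k.2:ℝ) ^ 2) : ℝ) := by
      unfold ka1 ka2
      push_cast
      ring
    rw [this, h, zero_div]
  constructor
  · linear_combination a1 * hs - ka2 k * h0
  · linear_combination a2 * hs + ka1 k * h0

lemma low_aux (L : ℝ) (hL : 0 < L) (m : ℕ) (v : Fin m → ℝ × ℝ → ℝ × ℝ)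
    (hv : ∀ j, Continuous (v j))
    (hortho : ∀ i j, (∫ x in QQ L,
        ((v i x).1 * (v j x).1 + (v i x).2 * (v j x).2)) = if i = j then 1 else 0)
    (S : Finset (ℤ × ℤ)) (hS : 0 ∉ S) (p : ℤ × ℤ → ℝ) (x : ℝ × ℝ) :
    ∑ j, ‖∑ k ∈ S, (p k * (ka1 k * cf L (fun x => ((v j x).1 : ℂ)) k
        + ka2 k * cf L (fun x => ((v j x).2 : ℂ)) k)) / L ^ 2 * ee L k x‖ ^ 2
      ≤ (∑ k ∈ S, p k ^ 2) / L ^ 2 := by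
  have hL' : (L:ℂ) ≠ 0 := by exact_mod_cast hL.ne'
  set β : ℤ × ℤ → ℂ := fun k => p k / L ^ 2 * conj (ee L k x) with hβ
  have c1 : ∀ q : ℤ × ℤ → ℝ, Continuous (fun y => ∑ k ∈ S, (β k * q k) * ee L k y) := fun q =>
    continuous_finsetSum _ fun l _ => continuous_const.mul (ee_cont L l)
  have hb := bessel L m v hv hortho _ _ (c1 ka1) (c1 ka2)
  have c2 : ∀ q : ℤ × ℤ → ℝ, Continuous (fun y => ‖∑ k ∈ S, (β k * q k) * ee L k y‖ ^ 2) :=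
    fun q => (c1 q).norm.pow 2
  rw [integral_add (intOn L (c2 ka1)) (intOn L (c2 ka2)),
    trig_norm L hL, trig_norm L hL] at hb
  have hR : L ^ 2 * ∑ l ∈ S, ‖β l * ka1 l‖ ^ 2 + L ^ 2 * ∑ l ∈ S, ‖β l * ka2 l‖ ^ 2
      = (∑ k ∈ S, p k ^ 2) / L ^ 2 := by
    rw [← mul_add, ← Finset.sum_add_distrib, Finset.mul_sum, Finset.sum_div]
    refine Finset.sum_congr rfl fun k hk => ?_
    have hk0 : k ≠ 0 := fun h => hS (h ▸ hk)
    have hs := ka_sq k hk0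
    have hβn : ‖β k‖ ^ 2 = p k ^ 2 / L ^ 4 := by
      simp only [hβ]
      rw [norm_mul, RCLike.norm_conj, ee_norm, norm_div, norm_pow, Complex.norm_of_nonneg hL.le,
        Complex.norm_real, mul_one, div_pow, Real.norm_eq_abs, sq_abs]
      ring
    rw [norm_mul (β k) (ka1 k), norm_mul (β k) (ka2 k), mul_pow, mul_pow, Complex.norm_real, Complex.norm_real,
      Real.norm_eq_abs, Real.norm_eq_abs, sq_abs, sq_abs, ← mul_add, hs, hβn]
    field_simp
  rw [hR] at hb
  refine le_trans (le_of_eq ?_) hb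
  refine Finset.sum_congr rfl fun j _ => ?_
  congr 2
  have hvj := hv j
  have e : ∀ y, conj (∑ k ∈ S, (β k * ka1 k) * ee L k y) * ((v j y).1 : ℂ)
      + conj (∑ k ∈ S, (β k * ka2 k) * ee L k y) * ((v j y).2 : ℂ)
      = ∑ k ∈ S, (conj (β k) * ka1 k * (conj (ee L k y) * ((v j y).1 : ℂ))
        + conj (β k) * ka2 k * (conj (ee L k y) * ((v j y).2 : ℂ))) := by
    intro y
    rw [map_sum, map_sum, Finset.sum_mul, Finset.sum_mul, ← Finset.sum_add_distrib]
    refine Finset.sum_congr rfl fun k _ => ?_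
    simp only [map_mul, Complex.conj_ofReal]
    ring
  have i1 : ∀ k, IntegrableOn (fun y => conj (ee L k y) * ((v j y).1 : ℂ)) (QQ L) := fun k =>
    cf_int L (fun y => ((v j y).1 : ℂ)) (by fun_prop) k
  have i2 : ∀ k, IntegrableOn (fun y => conj (ee L k y) * ((v j y).2 : ℂ)) (QQ L) := fun k =>
    cf_int L (fun y => ((v j y).2 : ℂ)) (by fun_prop) k
  simp only [e]
  rw [integral_finsetSum]
  swap
  · intro k _
    exact ((i1 k).const_mul _).add ((i2 k).const_mul _)
  refine Finset.sum_congr rfl fun k _ => ?_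
  rw [integral_add ((i1 k).const_mul _) ((i2 k).const_mul _), integral_const_mul,
    integral_const_mul]
  simp only [hβ, cf, map_mul, map_div₀, map_pow, Complex.conj_ofReal, Complex.conj_conj]
  ring

noncomputable def PP (L : ℝ) (S : Finset (ℤ × ℤ)) (f : ℝ × ℝ → ℝ) (x : ℝ × ℝ) : ℂ :=
  ∑ k ∈ S, cf L (fun x => (f x : ℂ)) k / L ^ 2 * ee L k x

lemma PP_cont (L : ℝ) (S : Finset (ℤ × ℤ)) (f : ℝ × ℝ → ℝ) : Continuous (PP L S f) :=
  continuous_finsetSum _ fun l _ => continuous_const.mul (ee_cont L l)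

lemma low_bound_s17 (L : ℝ) (hL : 0 < L) (m : ℕ) (v : Fin m → ℝ × ℝ → ℝ × ℝ)
    (hv : ∀ j, Continuous (v j))
    (hortho : ∀ i j, (∫ x in QQ L,
        ((v i x).1 * (v j x).1 + (v i x).2 * (v j x).2)) = if i = j then 1 else 0)
    (hd : ∀ j (k : ℤ × ℤ), k.1 * cf L (fun x => ((v j x).1 : ℂ)) k
        + k.2 * cf L (fun x => ((v j x).2 : ℂ)) k = 0)
    (S : Finset (ℤ × ℤ)) (hS : 0 ∉ S) (x : ℝ × ℝ) :
    ∑ j, (‖PP L S (fun y => (v j y).1) x‖ ^ 2 + ‖PP L S (fun y => (v j y).2) x‖ ^ 2)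
      ≤ S.card / L ^ 2 := by
  have h1 := low_aux L hL m v hv hortho S hS ka1 x
  have h2 := low_aux L hL m v hv hortho S hS ka2 x
  have h3 : (∑ k ∈ S, ka1 k ^ 2) / L ^ 2 + (∑ k ∈ S, ka2 k ^ 2) / L ^ 2 = S.card / L ^ 2 := by
    rw [← add_div, ← Finset.sum_add_distrib, Finset.sum_congr rfl fun k hk =>
      ka_sq k (fun h => hS (h ▸ hk))]
    simp
  rw [← h3, Finset.sum_add_distrib]
  refine add_le_add (le_trans (le_of_eq ?_) h1) (le_trans (le_of_eq ?_) h2)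
  · refine Finset.sum_congr rfl fun j _ => ?_
    unfold PP
    congr 2
    refine Finset.sum_congr rfl fun k hk => ?_
    rw [(ka_a k (fun h => hS (h ▸ hk)) _ _ (hd j k)).1]
  · refine Finset.sum_congr rfl fun j _ => ?_
    unfold PP
    congr 2
    refine Finset.sum_congr rfl fun k hk => ?_
    rw [(ka_a k (fun h => hS (h ▸ hk)) _ _ (hd j k)).2]

noncomputable def SS (n : ℕ) : Finset (ℤ × ℤ) :=
  (((Finset.Icc (-(Nat.sqrt n : ℤ)) (Nat.sqrt n)) ×ˢ
    (Finset.Icc (-(Nat.sqrt n : ℤ)) (Nat.sqrt n))).erase 0).filter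
      (fun k => k.1 ^ 2 + k.2 ^ 2 ≤ (n : ℤ))

lemma abs_le_sqrt_nat (n : ℕ) (a : ℤ) (h : a ^ 2 ≤ (n:ℤ)) :
    -(Nat.sqrt n : ℤ) ≤ a ∧ a ≤ Nat.sqrt n := by
  rw [← abs_le]
  have : a.natAbs ≤ Nat.sqrt n := by
    rw [Nat.le_sqrt']
    zify
    rwa [sq_abs]
  zify at this
  exact this

lemma mem_SS (n : ℕ) (k : ℤ × ℤ) : k ∈ SS n ↔ k ≠ 0 ∧ k.1 ^ 2 + k.2 ^ 2 ≤ (n : ℤ) := by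
  unfold SS
  simp only [Finset.mem_filter, Finset.mem_erase, Finset.mem_product, Finset.mem_Icc]
  constructor
  · rintro ⟨⟨h, _⟩, h2⟩
    exact ⟨h, h2⟩
  · rintro ⟨h, h2⟩
    exact ⟨⟨h, abs_le_sqrt_nat n _ (by nlinarith [sq_nonneg k.2]),
      abs_le_sqrt_nat n _ (by nlinarith [sq_nonneg k.1])⟩, h2⟩

lemma card_SS (n : ℕ) : (SS n).card ≤ 8 * n := by
  have h1 : (SS n).card ≤ (2 * Nat.sqrt n + 1) * (2 * Nat.sqrt n + 1) - 1 := by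
    unfold SS
    refine (Finset.card_filter_le _ _).trans ?_
    rw [Finset.card_erase_of_mem (by simp), Finset.card_product, Int.card_Icc]
    have : ((Nat.sqrt n : ℤ) + 1 - -(Nat.sqrt n : ℤ)).toNat = 2 * Nat.sqrt n + 1 := by omega
    rw [this]
  have h2 : Nat.sqrt n * Nat.sqrt n ≤ n := Nat.sqrt_le n
  have h3 : Nat.sqrt n ≤ Nat.sqrt n * Nat.sqrt n := Nat.le_mul_self _
  have h4 : (2 * Nat.sqrt n + 1) * (2 * Nat.sqrt n + 1) - 1
    = 4 * (Nat.sqrt n * Nat.sqrt n) + 4 * Nat.sqrt n := by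
    have : (2 * Nat.sqrt n + 1) * (2 * Nat.sqrt n + 1)
      = 4 * (Nat.sqrt n * Nat.sqrt n) + 4 * Nat.sqrt n + 1 := by ring
    omega
  omega

lemma sum_bound (s : ℝ) (hs : 0 ≤ s) (N : ℕ) (hN : s ^ 2 / 8 ≤ N) :
    s ^ 4 / 48 ≤ ∑ n ∈ Finset.range N, (max (s - √(8 * n)) 0) ^ 2 := by
  have hanti : Antitone (fun t : ℝ => (max (s - √(8 * t)) 0) ^ 2) := by
    intro a b hab
    have : √(8 * a) ≤ √(8 * b) := Real.sqrt_le_sqrt (by linarith)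
    have h2 : max (s - √(8 * b)) 0 ≤ max (s - √(8 * a)) 0 := max_le_max (by linarith) le_rfl
    exact pow_le_pow_left₀ (le_max_right _ _) h2 2
  have h1 := (hanti.antitoneOn (Set.Icc (0:ℝ) (0 + N))).integral_le_sum
  simp only [zero_add] at h1
  refine le_trans ?_ h1
  have hcont : Continuous (fun t : ℝ => (max (s - √(8 * t)) 0) ^ 2) := by fun_prop
  have hT : 0 ≤ s ^ 2 / 8 := by positivity
  have h2 : ∫ t in (0:ℝ)..(s ^ 2 / 8), (max (s - √(8 * t)) 0) ^ 2
      ≤ ∫ t in (0:ℝ)..N, (max (s - √(8 * t)) 0) ^ 2 := by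
    refine intervalIntegral.integral_mono_interval le_rfl hT hN ?_ (hcont.intervalIntegrable _ _)
    exact Filter.Eventually.of_forall fun t => by positivity
  refine le_trans (le_of_eq ?_) h2
  have h3 : ∫ t in (0:ℝ)..(s ^ 2 / 8), (max (s - √(8 * t)) 0) ^ 2
      = ∫ t in (0:ℝ)..(s ^ 2 / 8), (s ^ 2 - 2 * s * √8 * √t + 8 * t) := by
    refine intervalIntegral.integral_congr fun t ht => ?_
    rw [Set.uIcc_of_le hT] at ht
    have a1 : √(8 * t) ≤ s := by
      rw [Real.sqrt_le_left hs]
      linarith [ht.2]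
    have a2 : √(8 * t) ^ 2 = 8 * t := Real.sq_sqrt (by linarith [ht.1])
    have a3 : √(8 * t) = √8 * √t := Real.sqrt_mul (by norm_num) t
    simp only [max_eq_left (sub_nonneg.2 a1)]
    rw [sub_sq, a2, a3]
    ring
  rw [h3]
  rw [intervalIntegral.integral_add (Continuous.intervalIntegrable (by fun_prop) _ _)
    (Continuous.intervalIntegrable (by fun_prop) _ _),
    intervalIntegral.integral_sub (Continuous.intervalIntegrable (by fun_prop) _ _)
    (Continuous.intervalIntegrable (by fun_prop) _ _),
    intervalIntegral.integral_const_mul, intervalIntegral.integral_const_mul]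
  have h4 : ∫ t in (0:ℝ)..(s ^ 2 / 8), √t = 2 / 3 * ((s ^ 2 / 8) * (s / √8)) := by
    simp only [Real.sqrt_eq_rpow]
    rw [integral_rpow (Or.inl (by norm_num))]
    have : (s ^ 2 / 8) ^ ((1:ℝ) / 2 + 1) = (s ^ 2 / 8) * (s / √8) := by
      rw [Real.rpow_add_one' hT (by norm_num), ← Real.sqrt_eq_rpow,
        Real.sqrt_div (by positivity), Real.sqrt_sq hs]
      ring
    rw [this, Real.zero_rpow (by norm_num), ← Real.sqrt_eq_rpow]
    ring
  rw [h4]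
  have h8 : √8 ≠ 0 := by positivity
  simp only [intervalIntegral.integral_const, integral_id, smul_eq_mul]
  field_simp
  ring

lemma count_le (N q : ℕ) (a : ℝ) (ha : 0 ≤ a) :
    ∑ n ∈ Finset.range N, (if q ≤ n then 0 else a) ≤ q * a := by
  have : ∑ n ∈ Finset.range N, (if q ≤ n then 0 else a)
      ≤ ∑ n ∈ Finset.range (max N q), (if q ≤ n then 0 else a) :=
    Finset.sum_le_sum_of_subset_of_nonneg
      (Finset.range_subset_range.2 (le_max_left _ _)) (fun n _ _ => by split_ifs <;> simp [ha])
  refine this.trans ?_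
  rw [← Finset.sum_subset (Finset.range_subset_range.2 (le_max_right N q))]
  · rw [Finset.sum_congr rfl (g := fun _ => a) (fun n hn => if_neg (by simpa using hn))]
    simp
  · intro n _ hn
    exact if_pos (by simpa using hn)

lemma tail_bound (L : ℝ) (hL : 0 < L) (f : ℝ × ℝ → ℝ) (hf : ContDiff ℝ 1 f)
    (hp1 : ∀ x : ℝ × ℝ, f (x.1 + L, x.2) = f x) (hp2 : ∀ x : ℝ × ℝ, f (x.1, x.2 + L) = f x)
    (h0 : cf L (fun x => (f x : ℂ)) 0 = 0) (N : ℕ) :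
    ∑ n ∈ Finset.range N, ∫ x in QQ L, ‖(f x : ℂ) - PP L (SS n) f x‖ ^ 2
      ≤ L ^ 2 / (4 * π ^ 2) * ∫ x in QQ L, (pd1 f x ^ 2 + pd2 f x ^ 2) := by
  have hL' : (L:ℂ) ≠ 0 := by exact_mod_cast hL.ne'
  set a := cf L (fun x => (f x : ℂ)) with ha
  have hc0 : Continuous (fun x => (f x : ℂ)) := Complex.continuous_ofReal.comp hf.continuous
  have hc1 : Continuous (fun x => (pd1 f x : ℂ)) := Complex.continuous_ofReal.comp (pd1_cont f hf)
  have hc2 : Continuous (fun x => (pd2 f x : ℂ)) := Complex.continuous_ofReal.comp (pd2_cont f hf)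
  have hn : ∀ n ∈ Finset.range N, HasSum (fun k => if k ∈ SS n then 0 else ‖a k‖ ^ 2)
      (L ^ 2 * ∫ x in QQ L, ‖(f x : ℂ) - PP L (SS n) f x‖ ^ 2) := by
    intro n _
    have h := parseval L hL (fun x => (f x : ℂ) - PP L (SS n) f x) (hc0.sub (PP_cont L (SS n) f))
    convert h using 2 with k
    have := cf_sub L _ _ hc0 (PP_cont L (SS n) f) k
    rw [this]
    have h2 := cf_sum L hL (SS n) (fun k => cf L (fun x => (f x : ℂ)) k / L ^ 2) k
    unfold PP
    rw [h2]
    split_ifs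
    · rw [mul_div_cancel₀ _ (pow_ne_zero 2 hL')]
      simp
    · simp [ha]
  have hs := hasSum_sum hn
  have hd := (parseval L hL _ hc1).add (parseval L hL _ hc2)
  have hle := hasSum_le (f := fun k => ∑ n ∈ Finset.range N, if k ∈ SS n then 0 else ‖a k‖ ^ 2)
    ?_ hs (hd.mul_left (L ^ 2 / (4 * π ^ 2)))
  · rw [← Finset.mul_sum, ← mul_add, mul_left_comm] at hle
    have hle2 := le_of_mul_le_mul_left hle (by positivity)
    refine hle2.trans (le_of_eq ?_)
    congr 1
    rw [← integral_add (intOn L (by fun_prop)) (intOn L (by fun_prop))]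
    simp
  · intro k
    simp only [cf_d1 L hL f hf hp1, cf_d2 L hL f hf hp2]
    have hq : L ^ 2 / (4 * π ^ 2) * (‖2 * π * Complex.I * k.1 / L * a k‖ ^ 2
        + ‖2 * π * Complex.I * k.2 / L * a k‖ ^ 2)
        = ((k.1:ℝ) ^ 2 + (k.2:ℝ) ^ 2) * ‖a k‖ ^ 2 := by
      simp only [norm_mul, norm_div, Complex.norm_I, Complex.norm_real, Complex.norm_intCast,
        Real.norm_eq_abs, abs_of_pos hL, abs_of_pos Real.pi_pos, Complex.norm_ofNat, mul_pow,
        div_pow, sq_abs]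
      have := Real.pi_ne_zero
      field_simp
      ring
    rw [hq]
    by_cases hk : k = 0
    · subst hk
      simp [h0]
    · have hnat : ∃ q : ℕ, (q:ℤ) = k.1 ^ 2 + k.2 ^ 2 :=
        ⟨(k.1 ^ 2 + k.2 ^ 2).toNat, Int.toNat_of_nonneg (by positivity)⟩
      obtain ⟨q, hq⟩ := hnat
      have e1 : (k.1:ℝ) ^ 2 + (k.2:ℝ) ^ 2 = q := by exact_mod_cast hq.symm
      rw [e1]
      have e2 : ∀ n, k ∈ SS n ↔ q ≤ n := by
        intro n
        rw [mem_SS, ← hq]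
        simp [hk]
      simp only [e2]
      exact count_le N q _ (by positivity)

lemma pointwise (m : ℕ) (a p : Fin m → ℂ × ℂ) (B : ℝ)
    (hB : ∑ j, (‖(p j).1‖ ^ 2 + ‖(p j).2‖ ^ 2) ≤ B) :
    (max (√(∑ j, (‖(a j).1‖ ^ 2 + ‖(a j).2‖ ^ 2)) - √B) 0) ^ 2
      ≤ ∑ j, (‖(a j).1 - (p j).1‖ ^ 2 + ‖(a j).2 - (p j).2‖ ^ 2) := by
  let F : (Fin m → ℂ × ℂ) → EuclideanSpace ℂ (Fin m ⊕ Fin m) :=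
    fun u => WithLp.toLp 2 (Sum.elim (fun j => (u j).1) (fun j => (u j).2))
  have hF : ∀ u, ‖F u‖ = √(∑ j, (‖(u j).1‖ ^ 2 + ‖(u j).2‖ ^ 2)) := by
    intro u
    rw [EuclideanSpace.norm_eq, Finset.sum_add_distrib]
    simp [F]
  have hsub : F a - F p = F (fun j => a j - p j) := by
    ext i
    cases i <;> simp [F]
  have h1 : ‖F a‖ - ‖F p‖ ≤ ‖F (fun j => a j - p j)‖ := by
    rw [← hsub]; exact norm_sub_norm_le _ _
  have h2 : ‖F p‖ ≤ √B := by rw [hF]; exact Real.sqrt_le_sqrt hB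
  have h3 : ‖F (fun j => a j - p j)‖ ^ 2
      = ∑ j, (‖(a j).1 - (p j).1‖ ^ 2 + ‖(a j).2 - (p j).2‖ ^ 2) := by
    rw [hF, Real.sq_sqrt (Finset.sum_nonneg fun j _ => by positivity)]
    simp
  rw [← h3, ← hF]
  refine pow_le_pow_left₀ (le_max_right _ _) ?_ 2
  exact max_le (by linarith) (norm_nonneg _)

theorem stmt_17 (L : ℝ) (hL : 0 < L) (m : ℕ) (v : Fin m → ℝ × ℝ → ℝ × ℝ)
    (hC1 : ∀ j, ContDiff ℝ 1 (v j))
    (hper1 : ∀ j (x : ℝ × ℝ), v j (x.1 + L, x.2) = v j x)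
    (hper2 : ∀ j (x : ℝ × ℝ), v j (x.1, x.2 + L) = v j x)
    (hmean : ∀ j, (∫ x in Set.Ioc (0:ℝ) L ×ˢ Set.Ioc (0:ℝ) L, v j x) = 0)
    (hdiv : ∀ j x, pd1 (fun y => (v j y).1) x + pd2 (fun y => (v j y).2) x = 0)
    (hortho : ∀ i j, (∫ x in Set.Ioc (0:ℝ) L ×ˢ Set.Ioc (0:ℝ) L,
        ((v i x).1 * (v j x).1 + (v i x).2 * (v j x).2)) = if i = j then 1 else 0) :
    (∫ x in Set.Ioc (0:ℝ) L ×ˢ Set.Ioc (0:ℝ) L,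
        (∑ j, ((v j x).1 ^ 2 + (v j x).2 ^ 2)) ^ 2) ≤
      (3 / 2) * ∑ j, ∫ x in Set.Ioc (0:ℝ) L ×ˢ Set.Ioc (0:ℝ) L, gradSq (v j) x := by
  have hcv : ∀ j, Continuous (v j) := fun j => (hC1 j).continuous
  have hd1 : ∀ j, ContDiff ℝ 1 (fun y => (v j y).1) := fun j => (hC1 j).fst
  have hd2 : ∀ j, ContDiff ℝ 1 (fun y => (v j y).2) := fun j => (hC1 j).snd
  have hp11 : ∀ j (x : ℝ × ℝ), (v j (x.1 + L, x.2)).1 = (v j x).1 := fun j x => by rw [hper1]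
  have hp12 : ∀ j (x : ℝ × ℝ), (v j (x.1, x.2 + L)).1 = (v j x).1 := fun j x => by rw [hper2]
  have hp21 : ∀ j (x : ℝ × ℝ), (v j (x.1 + L, x.2)).2 = (v j x).2 := fun j x => by rw [hper1]
  have hp22 : ∀ j (x : ℝ × ℝ), (v j (x.1, x.2 + L)).2 = (v j x).2 := fun j x => by rw [hper2]
  change (∫ x in QQ L, (∑ j, ((v j x).1 ^ 2 + (v j x).2 ^ 2)) ^ 2) ≤
      (3 / 2) * ∑ j, ∫ x in QQ L, gradSq (v j) x
  have hL' : (L:ℂ) ≠ 0 := by exact_mod_cast hL.ne'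
  -- mean zero
  have hm1 : ∀ j, cf L (fun x => ((v j x).1 : ℂ)) 0 = 0 := by
    intro j
    have h : (∫ x in QQ L, v j x).1 = 0 := congrArg Prod.fst (hmean j)
    rw [fst_integral (intOn L (hcv j))] at h
    have h2 := congrArg (fun t : ℝ => (t : ℂ)) h
    simp only [← integral_complex_ofReal] at h2
    simpa [cf, ee, QQ] using h2
  have hm2 : ∀ j, cf L (fun x => ((v j x).2 : ℂ)) 0 = 0 := by
    intro j
    have h : (∫ x in QQ L, v j x).2 = 0 := congrArg Prod.snd (hmean j)
    rw [snd_integral (intOn L (hcv j))] at h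
    have h2 := congrArg (fun t : ℝ => (t : ℂ)) h
    simp only [← integral_complex_ofReal] at h2
    simpa [cf, ee, QQ] using h2
  have hdk : ∀ j (k : ℤ × ℤ), k.1 * cf L (fun x => ((v j x).1 : ℂ)) k
        + k.2 * cf L (fun x => ((v j x).2 : ℂ)) k = 0 := by
    intro j k
    have h1 := cf_d1 L hL _ (hd1 j) (hp11 j) k
    have h2 := cf_d2 L hL _ (hd2 j) (hp22 j) k
    have h3 : cf L (fun x => (pd1 (fun y => (v j y).1) x : ℂ)) k
        + cf L (fun x => (pd2 (fun y => (v j y).2) x : ℂ)) k = 0 := by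
      have c1 := pd1_cont _ (hd1 j)
      have c2 := pd2_cont _ (hd2 j)
      unfold cf
      rw [← integral_add (cf_int L (fun x => (pd1 (fun y => (v j y).1) x : ℂ)) (Complex.continuous_ofReal.comp c1) k)
        (cf_int L (fun x => (pd2 (fun y => (v j y).2) x : ℂ)) (Complex.continuous_ofReal.comp c2) k)]
      simp only [Function.comp, ← mul_add, ← Complex.ofReal_add, hdiv]
      simp
    rw [h1, h2] at h3
    have h4 : (2 * π * Complex.I / L : ℂ) * (k.1 * cf L (fun x => ((v j x).1 : ℂ)) k
        + k.2 * cf L (fun x => ((v j x).2 : ℂ)) k) = 0 := by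
      rw [← h3]; ring
    refine (mul_eq_zero.1 h4).resolve_left ?_
    simp [hL', Real.pi_ne_zero]
  -- choice of the cutoff
  have hcρ : Continuous (fun x => ∑ j, ((v j x).1 ^ 2 + (v j x).2 ^ 2)) := by
    refine continuous_finsetSum _ fun j _ => ?_
    have := hcv j
    fun_prop
  obtain ⟨C, hC⟩ := (isCompact_Icc.prod isCompact_Icc :
    IsCompact (Set.Icc (0:ℝ) L ×ˢ Set.Icc (0:ℝ) L)).exists_bound_of_continuousOn hcρ.continuousOn
  obtain ⟨N, hN⟩ := exists_nat_ge (L ^ 2 * C / 8)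
  -- pointwise inequality
  let R : ℕ → ℝ × ℝ → ℝ := fun n x => ∑ j,
    (‖((v j x).1 : ℂ) - PP L (SS n) (fun y => (v j y).1) x‖ ^ 2
      + ‖((v j x).2 : ℂ) - PP L (SS n) (fun y => (v j y).2) x‖ ^ 2)
  have hcR1 : ∀ n j, Continuous
      (fun x => ‖((v j x).1 : ℂ) - PP L (SS n) (fun y => (v j y).1) x‖ ^ 2) := by
    intro n j
    have := hcv j
    have := PP_cont L (SS n) (fun y => (v j y).1)
    fun_prop
  have hcR2 : ∀ n j, Continuous
      (fun x => ‖((v j x).2 : ℂ) - PP L (SS n) (fun y => (v j y).2) x‖ ^ 2) := by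
    intro n j
    have := hcv j
    have := PP_cont L (SS n) (fun y => (v j y).2)
    fun_prop
  have hcR : ∀ n, Continuous (R n) := fun n =>
    continuous_finsetSum _ fun j _ => (hcR1 n j).add (hcR2 n j)
  have hpt : ∀ x ∈ QQ L, (∑ j, ((v j x).1 ^ 2 + (v j x).2 ^ 2)) ^ 2
      ≤ 48 / L ^ 2 * ∑ n ∈ Finset.range N, R n x := by
    intro x hx
    set ρ := ∑ j, ((v j x).1 ^ 2 + (v j x).2 ^ 2) with hρ
    have hρ0 : 0 ≤ ρ := Finset.sum_nonneg fun j _ => by positivity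
    have hρC : ρ ≤ C := (le_abs_self _).trans (hC x ⟨Set.Ioc_subset_Icc_self hx.1,
      Set.Ioc_subset_Icc_self hx.2⟩)
    have hsq : √ρ ^ 2 = ρ := Real.sq_sqrt hρ0
    have hsb := sum_bound (L * √ρ) (by positivity) N (by
      rw [mul_pow, hsq]
      refine le_trans ?_ hN
      gcongr)
    have hterm : ∀ n ∈ Finset.range N, (max (L * √ρ - √(8 * n)) 0) ^ 2 ≤ L ^ 2 * R n x := by
      intro n _
      have hlow := low_bound_s17 L hL m v hcv hortho hdk (SS n) (by simp [mem_SS]) x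
      have hcard : ((SS n).card : ℝ) / L ^ 2 ≤ 8 * n / L ^ 2 := by
        gcongr
        exact_mod_cast card_SS n
      have h := pointwise m (fun j => (((v j x).1 : ℂ), ((v j x).2 : ℂ)))
        (fun j => (PP L (SS n) (fun y => (v j y).1) x, PP L (SS n) (fun y => (v j y).2) x))
        (8 * n / L ^ 2) (hlow.trans hcard)
      simp only [Complex.norm_real, Real.norm_eq_abs, sq_abs] at h
      rw [← hρ, Real.sqrt_div (by positivity), Real.sqrt_sq hL.le] at h
      have h2 := mul_le_mul_of_nonneg_left h (sq_nonneg L)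
      refine le_trans (le_of_eq ?_) h2
      rw [← mul_pow, mul_max_of_nonneg _ _ hL.le, mul_sub, mul_div_cancel₀ _ hL.ne', mul_zero]
    have h5 := hsb.trans (Finset.sum_le_sum hterm)
    rw [← Finset.mul_sum] at h5
    have h6 : (L * √ρ) ^ 4 = L ^ 4 * ρ ^ 2 := by
      rw [mul_pow, show √ρ ^ 4 = (√ρ ^ 2) ^ 2 by ring, hsq]
    rw [h6] at h5
    have h7 : ρ ^ 2 = 48 / L ^ 4 * (L ^ 4 * ρ ^ 2 / 48) := by field_simp
    rw [h7]
    refine (mul_le_mul_of_nonneg_left h5 (by positivity)).trans (le_of_eq ?_)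
    field_simp
  -- integrate
  have hint : (∫ x in QQ L, (∑ j, ((v j x).1 ^ 2 + (v j x).2 ^ 2)) ^ 2)
      ≤ ∫ x in QQ L, 48 / L ^ 2 * ∑ n ∈ Finset.range N, R n x :=
    setIntegral_mono_on (intOn L (by fun_prop)) (intOn L (by fun_prop)) (QQ_meas L) hpt
  refine hint.trans ?_
  rw [integral_const_mul, integral_finsetSum _ fun n _ => intOn L (hcR n)]
  have hRn : ∀ n, ∫ x in QQ L, R n x = ∑ j,
      ((∫ x in QQ L, ‖((v j x).1 : ℂ) - PP L (SS n) (fun y => (v j y).1) x‖ ^ 2)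
      + ∫ x in QQ L, ‖((v j x).2 : ℂ) - PP L (SS n) (fun y => (v j y).2) x‖ ^ 2) := by
    intro n
    simp only [R]
    rw [integral_finsetSum]
    swap
    · intro j _
      exact intOn L ((hcR1 n j).add (hcR2 n j))
    exact Finset.sum_congr rfl fun j _ =>
      integral_add (intOn L (hcR1 n j)) (intOn L (hcR2 n j))
  simp only [hRn]
  rw [Finset.sum_comm, Finset.mul_sum, Finset.mul_sum]
  refine Finset.sum_le_sum fun j _ => ?_
  rw [Finset.sum_add_distrib]
  have t1 := tail_bound L hL _ (hd1 j) (hp11 j) (hp12 j) (hm1 j) N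
  have t2 := tail_bound L hL _ (hd2 j) (hp21 j) (hp22 j) (hm2 j) N
  have a1 := pd1_cont _ (hd1 j)
  have a2 := pd2_cont _ (hd1 j)
  have a3 := pd1_cont _ (hd2 j)
  have a4 := pd2_cont _ (hd2 j)
  have hg : ∫ x in QQ L, gradSq (v j) x
      = (∫ x in QQ L, (pd1 (fun y => (v j y).1) x ^ 2 + pd2 (fun y => (v j y).1) x ^ 2))
      + ∫ x in QQ L, (pd1 (fun y => (v j y).2) x ^ 2 + pd2 (fun y => (v j y).2) x ^ 2) := by
    rw [← integral_add (intOn L (by fun_prop)) (intOn L (by fun_prop))]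
    congr 1
    ext x
    unfold gradSq
    ring
  have hg0 : 0 ≤ ∫ x in QQ L, gradSq (v j) x :=
    integral_nonneg fun x => by unfold gradSq; positivity
  have t3 := add_le_add t1 t2
  rw [← mul_add, ← hg] at t3
  refine (mul_le_mul_of_nonneg_left t3 (by positivity)).trans ?_
  rw [← mul_assoc]
  refine mul_le_mul_of_nonneg_right ?_ hg0
  have hpi : 3 < π := Real.pi_gt_three
  have e : 48 / L ^ 2 * (L ^ 2 / (4 * π ^ 2)) = 12 / π ^ 2 := by
    field_simp
    norm_num
  rw [e, div_le_iff₀ (by positivity)]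
  nlinarith
end
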